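/- Let G be an n-vertex planar graph with no Theta graph on 6 vertices as a subgraph, and suppose G contains a block B on n_b vertices with e(B) ≤ (18/7)n_b - 48/7. Then e(G) ≤ (18/7)n - 48/7. -/

import Mathlib

open SimpleGraph

/-- `H` is a minor of `G`: there is an assignment of disjoint connected branch sets
of `G` to the vertices of `H` realizing all edges of `H`. -/
def HasMinor {V : Type*} {W : Type*} (G : SimpleGraph V) (H : SimpleGraph W) : Prop :=
  ∃ f : V → Option W,
    (∀ w : W, ∃ v, f v = some w) ∧
    (∀ w : W, (G.induce {v | f v = some w}).Preconnected) ∧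
    (∀ w₁ w₂ : W, H.Adj w₁ w₂ →
      ∃ v₁ v₂, f v₁ = some w₁ ∧ f v₂ = some w₂ ∧ G.Adj v₁ v₂)

/-- Planarity, via Wagner's theorem: no `K₅` minor and no `K₃,₃` minor. -/
def IsPlanar {V : Type*} (G : SimpleGraph V) : Prop :=
  ¬ HasMinor G (completeGraph (Fin 5)) ∧
    ¬ HasMinor G (completeBipartiteGraph (Fin 3) (Fin 3))

/-- `G` contains a Theta graph on 6 vertices: a 6-cycle together with a chord
joining two non-consecutive vertices of the cycle. -/
def HasTheta6 {V : Type*} (G : SimpleGraph V) : Prop :=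
  ∃ v : Fin 6 → V, Function.Injective v ∧
    (∀ i : Fin 6, G.Adj (v i) (v (i + 1))) ∧
    ∃ i j : Fin 6, i ≠ j ∧ j ≠ i + 1 ∧ i ≠ j + 1 ∧ G.Adj (v i) (v j)

/-- A set of vertices inducing a connected subgraph which stays connected
(in the weak sense of `Preconnected`) after deleting any one of its vertices. -/
def IsTwoConnSet {V : Type*} (G : SimpleGraph V) (B : Set V) : Prop :=
  B.Nonempty ∧ (G.induce B).Preconnected ∧
    ∀ v ∈ B, (G.induce (B \ {v})).Preconnected

/-- A block of `G`: a maximal subgraph without a cut vertex, described by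
its vertex set. -/
def IsBlock {V : Type*} (G : SimpleGraph V) (B : Set V) : Prop :=
  IsTwoConnSet G B ∧ ∀ C : Set V, IsTwoConnSet G C → B ⊆ C → B = C

/-! Delete the edges inside the block `B`. No component of the remaining graph `H` contains two
vertices of `B`, since a path joining them could be added to `B`. Hence `H` has at least `|B|`
components, and the claim follows from `7 e(H) + 18 c(H) ≤ 18 n` for a planar `Θ₆`-free graph `H`
with `c(H)` components.

By MacLane's criterion the cycle space of a planar graph has a basis such that no edge lies in three
of its members; its dimension is `e(H) - n + c(H)`, so it suffices that the basis has at most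
`11 e(H) / 18` members. MacLane's criterion is proved by induction over the edges from the absence
of `K₅` and `K₃,₃` minors. The bound is proved by discharging: every member of the basis starts with
charge `11` on each of its edges and must end with at least `36`, while no edge carries more than
`22`. A triangular face holds `33`, and the missing `3` come from the other faces along its edges.
-/

namespace PlanarTheta6
noncomputable section
open Finset
open scoped Classical

section CycleSpace

variable {V : Type*}

theorem zmod_two_eq_one {a : ZMod 2} (h : a ≠ 0) : a = 1 := by
  revert a; decide

/-- The edge space of `V` over `𝔽₂`, in which a set of edges is identified with its indicator. The
diagonal coordinates are harmless: elements of cycle spaces vanish there. -/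
abbrev EdgeSpace (V : Type*) := Sym2 V → ZMod 2

/-- The indicator of the edge `ab`. -/
def edgeVec (a b : V) : EdgeSpace V := Pi.single s(a, b) 1

theorem edgeVec_comm (a b : V) : edgeVec a b = edgeVec b a := by
  rw [edgeVec, Sym2.eq_swap, edgeVec]

@[simp] theorem edgeVec_self (a b : V) : edgeVec a b s(a, b) = 1 := Pi.single_eq_same _ _

theorem edgeVec_of_ne {a b : V} {e : Sym2 V} (h : e ≠ s(a, b)) : edgeVec a b e = 0 :=
  Pi.single_eq_of_ne h 1

theorem edgeVec_of_notMem {a b v w : V} (ha : v ≠ a) (hb : v ≠ b) : edgeVec a b s(v, w) = 0 :=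
  edgeVec_of_ne (by simp [ha, hb])

theorem edgeVec_of_not_adj {G : SimpleGraph V} {a b u w : V} (hab : G.Adj a b)
    (huw : ¬ G.Adj u w) : edgeVec a b s(u, w) = 0 :=
  edgeVec_of_ne fun he => huw (by rwa [← G.mem_edgeSet, he])

/-- The triangle `abc` as an element of the edge space. -/
def triangle (a b c : V) : EdgeSpace V := edgeVec a b + edgeVec a c + edgeVec b c

theorem triangle_rotate (a b c : V) : triangle a b c = triangle b c a := by
  rw [triangle, triangle, edgeVec_comm b a, edgeVec_comm c a]
  abel

theorem triangle_swap (a b c : V) : triangle a b c = triangle b a c := by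
  rw [triangle, triangle, edgeVec_comm b a]
  abel

theorem triangle_apply_edge {a b c : V} (hac : a ≠ c) (hbc : b ≠ c) :
    triangle a b c s(a, b) = 1 := by
  have h₁ : edgeVec a c s(a, b) = 0 := edgeVec_of_ne (by aesop)
  have h₂ : edgeVec b c s(a, b) = 0 := edgeVec_of_ne (by aesop)
  simp [triangle, h₁, h₂]

theorem triangle_of_ne {a b c : V} {e : Sym2 V} (hab : e ≠ s(a, b)) (hac : e ≠ s(a, c))
    (hbc : e ≠ s(b, c)) : triangle a b c e = 0 := by
  simp [triangle, edgeVec_of_ne, hab, hac, hbc]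

/-- The edge space element of a walk: every edge is counted modulo `2`. -/
def walkVec {G : SimpleGraph V} {u v : V} (p : G.Walk u v) : EdgeSpace V :=
  fun e => (p.edges.count e : ZMod 2)

theorem walkVec_cons {G : SimpleGraph V} {u v w : V} (h : G.Adj u v) (p : G.Walk v w) :
    walkVec (p.cons h) = edgeVec u v + walkVec p := by
  ext e
  by_cases he : e = s(u, v)
  · simp [walkVec, he, add_comm]
  · simp [walkVec, edgeVec_of_ne he, Ne.symm he]

theorem walkVec_of_notMem {G : SimpleGraph V} {u v : V} (p : G.Walk u v) {e : Sym2 V}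
    (h : e ∉ p.edges) : walkVec p e = 0 := by
  simp [walkVec, List.count_eq_zero_of_not_mem h]

theorem walkVec_of_mem {G : SimpleGraph V} {u v : V} {p : G.Walk u v} (hp : p.IsTrail)
    {e : Sym2 V} (h : e ∈ p.edges) : walkVec p e = 1 := by
  simp [walkVec, List.count_eq_one_of_mem hp.edges_nodup h]

variable [Fintype V]

/-- The boundary map from the edge space to the vertex space over `𝔽₂`. -/
def boundary : EdgeSpace V →ₗ[ZMod 2] (V → ZMod 2) where
  toFun z v := ∑ w, z s(v, w)
  map_add' x y := by ext v; simp [sum_add_distrib]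
  map_smul' c x := by ext v; simp [mul_sum]

theorem boundary_apply (z : EdgeSpace V) (v : V) : boundary z v = ∑ w, z s(v, w) := rfl

theorem boundary_edgeVec {a b : V} (h : a ≠ b) :
    boundary (edgeVec a b) = Pi.single a 1 + Pi.single b 1 := by
  ext v
  rw [boundary_apply]
  by_cases hva : v = a
  · subst hva
    rw [sum_eq_single b (fun w _ hw => edgeVec_of_ne (by simp [hw, h])) (by simp)]
    simp [h]
  by_cases hvb : v = b
  · subst hvb
    rw [sum_eq_single a (fun w _ hw => edgeVec_of_ne (by simp [hw, hva])) (by simp), edgeVec_comm]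
    simp [hva]
  · simp [edgeVec_of_notMem hva hvb, hva, hvb]

theorem boundary_triangle {a b c : V} (hab : a ≠ b) (hac : a ≠ c) (hbc : b ≠ c) :
    boundary (triangle a b c) = 0 := by
  rw [triangle, map_add, map_add, boundary_edgeVec hab, boundary_edgeVec hac, boundary_edgeVec hbc]
  linear_combination
    ZModModule.add_self (Pi.single a 1 + Pi.single b 1 + Pi.single c 1 : V → ZMod 2)

theorem boundary_walkVec {G : SimpleGraph V} {u v : V} (p : G.Walk u v) :
    boundary (walkVec p) = Pi.single u 1 + Pi.single v 1 := by
  induction p with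
  | nil => exact (map_zero _).trans (ZModModule.add_self _).symm
  | @cons u v w h p ih =>
    rw [walkVec_cons, map_add, ih, boundary_edgeVec h.ne]
    linear_combination ZModModule.add_self (Pi.single v 1 : V → ZMod 2)

theorem sum_sum_eq_zero_of_symm {f : V → V → ZMod 2} (hf : ∀ v w, f v w = f w v)
    (hf₀ : ∀ v, f v v = 0) : ∑ v, ∑ w, f v w = 0 := by
  rw [← sum_product']
  refine sum_involution (fun p _ => p.swap) (fun p _ => ?_) (fun p _ hp hswap => hp ?_)
    (by simp) (by simp)
  · rw [Prod.fst_swap, Prod.snd_swap, hf p.2 p.1, CharTwo.add_self_eq_zero]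
  · rw [← congrArg Prod.fst hswap, Prod.fst_swap, hf₀]

theorem sum_boundary {z : EdgeSpace V} (h : ∀ v, z s(v, v) = 0) : ∑ v, boundary z v = 0 :=
  sum_sum_eq_zero_of_symm (fun v w => by rw [Sym2.eq_swap]) h

/-- The cycle space of `G` over `𝔽₂`: the even edge sets of `G`. -/
def cycleSpace (G : SimpleGraph V) : Submodule (ZMod 2) (EdgeSpace V) where
  carrier := {z | (∀ u w, ¬ G.Adj u w → z s(u, w) = 0) ∧ boundary z = 0}
  add_mem' hx hy := ⟨fun u w h => by simp [hx.1 u w h, hy.1 u w h], by simp [hx.2, hy.2]⟩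
  zero_mem' := ⟨fun _ _ _ => rfl, map_zero _⟩
  smul_mem' c x hx := ⟨fun u w h => by simp [hx.1 u w h], by simp [hx.2]⟩

theorem adj_of_mem_cycleSpace {G : SimpleGraph V} {z : EdgeSpace V} (hz : z ∈ cycleSpace G)
    {u w : V} (h : z s(u, w) ≠ 0) : G.Adj u w :=
  not_not.mp fun hn => h (hz.1 u w hn)

theorem apply_diag_of_mem_cycleSpace {G : SimpleGraph V} {z : EdgeSpace V} (hz : z ∈ cycleSpace G)
    (v : V) : z s(v, v) = 0 := hz.1 v v (G.irrefl)

theorem sum_apply_of_mem_cycleSpace {G : SimpleGraph V} {z : EdgeSpace V} (hz : z ∈ cycleSpace G)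
    (v : V) : ∑ w, z s(v, w) = 0 := congrFun hz.2 v

theorem sum_neighbors_of_mem_cycleSpace {G : SimpleGraph V} {z : EdgeSpace V}
    (hz : z ∈ cycleSpace G) {v : V} {s : Finset V} (hs : ∀ w, G.Adj v w → w ∈ s) :
    ∑ w ∈ s, z s(v, w) = 0 := by
  rw [← sum_apply_of_mem_cycleSpace hz v]
  exact sum_subset (subset_univ s) fun w _ hw => hz.1 v w fun hvw => hw (hs w hvw)

theorem cycleSpace_mono {G H : SimpleGraph V} (h : G ≤ H) : cycleSpace G ≤ cycleSpace H :=
  fun _ hz => ⟨fun u w hn => hz.1 u w fun hG => hn (h hG), hz.2⟩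

theorem triangle_mem_cycleSpace {G : SimpleGraph V} {a b c : V} (hab : G.Adj a b) (hac : G.Adj a c)
    (hbc : G.Adj b c) : triangle a b c ∈ cycleSpace G := by
  refine ⟨fun u w h => ?_, boundary_triangle hab.ne hac.ne hbc.ne⟩
  simp [triangle, edgeVec_of_not_adj hab h, edgeVec_of_not_adj hac h, edgeVec_of_not_adj hbc h]

theorem walkVec_mem_cycleSpace {G : SimpleGraph V} {u : V} (p : G.Walk u u) :
    walkVec p ∈ cycleSpace G :=
  ⟨fun _ _ h => walkVec_of_notMem p fun he => h (p.edges_subset_edgeSet he),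
    (boundary_walkVec p).trans (ZModModule.add_self _)⟩

end CycleSpace

section TwoBasis

variable {V ι κ : Type*}

/-- The number of members of the family `b`, indexed by `s`, that contain the edge `e`. -/
def coverage (s : Finset ι) (b : ι → EdgeSpace V) (e : Sym2 V) : ℕ := #{i ∈ s | b i e ≠ 0}

theorem natCast_coverage (s : Finset ι) (b : ι → EdgeSpace V) (e : Sym2 V) :
    (coverage s b e : ZMod 2) = ∑ i ∈ s, b i e := by
  rw [coverage, card_filter, Nat.cast_sum]
  refine sum_congr rfl fun i _ => ?_
  by_cases h : b i e = 0
  · simp [h]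
  · simp [zmod_two_eq_one h]

theorem coverage_pos {s : Finset ι} {b : ι → EdgeSpace V} {e : Sym2 V} :
    0 < coverage s b e ↔ ∃ i ∈ s, b i e ≠ 0 := by
  simp [coverage, card_pos, filter_nonempty_iff]

theorem coverage_erase {s : Finset ι} {b : ι → EdgeSpace V} {e : Sym2 V} {i : ι} (hi : i ∈ s)
    (he : b i e ≠ 0) : coverage (s.erase i) b e + 1 = coverage s b e := by
  rw [coverage, filter_erase, card_erase_add_one (by simp [hi, he]), coverage]

theorem coverage_mono {s t : Finset ι} (h : s ⊆ t) (b : ι → EdgeSpace V) (e : Sym2 V) :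
    coverage s b e ≤ coverage t b e := card_le_card (filter_subset_filter _ h)

theorem coverage_disjSum (s : Finset ι) (t : Finset κ) (a : ι → EdgeSpace V)
    (b : κ → EdgeSpace V) (e : Sym2 V) :
    coverage (s.disjSum t) (Sum.elim a b) e = coverage s a e + coverage t b e := by
  simp only [coverage, card_filter, sum_disjSum, Sum.elim_inl, Sum.elim_inr]
  congr!

theorem coverage_insertNone (s : Finset ι) (b : ι → EdgeSpace V) (z : EdgeSpace V) (e : Sym2 V) :
    coverage (insertNone s) (fun o => o.elim z b) e =
      coverage s b e + if z e ≠ 0 then 1 else 0 := by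
  rw [coverage, coverage, card_filter, card_filter, sum_insertNone, add_comm]
  congr!

variable [Fintype V]

/-- A `2`-basis of `G` in the sense of MacLane, although linear independence is not required: a
family spanning the cycle space such that every edge lies in at most two members. -/
structure IsTwoBasis (G : SimpleGraph V) (s : Finset ι) (b : ι → EdgeSpace V) : Prop where
  span_eq : Submodule.span (ZMod 2) (b '' s) = cycleSpace G
  coverage_le_two : ∀ e, coverage s b e ≤ 2

/-- MacLane's planarity criterion. -/
def HasTwoBasis (G : SimpleGraph V) : Prop :=
  ∃ (ι : Type) (s : Finset ι) (b : ι → EdgeSpace V), IsTwoBasis G s b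

namespace IsTwoBasis

variable {G : SimpleGraph V} {s : Finset ι} {b : ι → EdgeSpace V}

theorem mem_cycleSpace (h : IsTwoBasis G s b) {i : ι} (hi : i ∈ s) : b i ∈ cycleSpace G :=
  h.span_eq ▸ Submodule.subset_span ⟨i, hi, rfl⟩

theorem exists_sum_eq (h : IsTwoBasis G s b) {z : EdgeSpace V} (hz : z ∈ cycleSpace G) :
    ∃ c : ι → ZMod 2, ∑ i ∈ s, c i • b i = z :=
  Submodule.mem_span_image_finset_iff_exists_fun' (ZMod 2) |>.mp (h.span_eq ▸ hz)

theorem of_exists_sum_eq (hmem : ∀ i ∈ s, b i ∈ cycleSpace G)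
    (hsum : ∀ z ∈ cycleSpace G, ∃ c : ι → ZMod 2, ∑ i ∈ s, c i • b i = z)
    (hcov : ∀ e, coverage s b e ≤ 2) : IsTwoBasis G s b :=
  ⟨le_antisymm (Submodule.span_le.mpr (by rintro _ ⟨i, hi, rfl⟩; exact hmem i hi))
    fun z hz => Submodule.mem_span_image_finset_iff_exists_fun' (ZMod 2) |>.mpr (hsum z hz), hcov⟩

theorem apply_eq_zero (h : IsTwoBasis G s b) {i : ι} (hi : i ∈ s) {u w : V} (huw : ¬ G.Adj u w) :
    b i s(u, w) = 0 := (h.mem_cycleSpace hi).1 u w huw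

theorem coverage_eq_zero (h : IsTwoBasis G s b) {u w : V} (huw : ¬ G.Adj u w) :
    coverage s b s(u, w) = 0 := by
  by_contra hc
  obtain ⟨i, hi, hne⟩ := coverage_pos.mp (Nat.pos_of_ne_zero hc)
  exact hne (h.apply_eq_zero hi huw)

/-- In a `2`-basis summing to zero every member is the sum of the others. -/
theorem erase (h : IsTwoBasis G s b) (hsum : ∑ i ∈ s, b i = 0) (i₀ : ι) :
    IsTwoBasis G (s.erase i₀) b := by
  refine of_exists_sum_eq (fun i hi => h.mem_cycleSpace (mem_of_mem_erase hi)) (fun z hz => ?_)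
    fun e => (coverage_mono (erase_subset _ _) b e).trans (h.coverage_le_two e)
  obtain ⟨c, hc⟩ := h.exists_sum_eq hz
  refine ⟨fun i => c i - c i₀, ?_⟩
  calc ∑ i ∈ s.erase i₀, (c i - c i₀) • b i = ∑ i ∈ s, (c i - c i₀) • b i :=
        sum_erase _ (by simp)
    _ = z := by simp [sub_smul, sum_sub_distrib, ← smul_sum, hsum, hc]

theorem coverage_erase_le_one (h : IsTwoBasis G s b) {i : ι} (hi : i ∈ s) {e : Sym2 V}
    (he : b i e ≠ 0) : coverage (s.erase i) b e ≤ 1 := by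
  have := coverage_erase hi he
  have := h.coverage_le_two e
  omega

end IsTwoBasis

theorem HasTwoBasis.exists_sum_eq_zero {G : SimpleGraph V} (h : HasTwoBasis G) :
    ∃ (ι : Type) (s : Finset ι) (b : ι → EdgeSpace V), IsTwoBasis G s b ∧ ∑ i ∈ s, b i = 0 := by
  obtain ⟨ι, s, b, hb⟩ := h
  refine ⟨Option ι, insertNone s, fun o => o.elim (∑ i ∈ s, b i) b, .of_exists_sum_eq ?_ ?_ ?_, ?_⟩
  · simp only [forall_mem_insertNone, Option.elim_none, Option.elim_some]
    exact ⟨Submodule.sum_mem _ fun i => hb.mem_cycleSpace, fun i => hb.mem_cycleSpace⟩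
  · intro z hz
    obtain ⟨c, hc⟩ := hb.exists_sum_eq hz
    exact ⟨fun o => o.elim 0 c, by simpa [sum_insertNone] using hc⟩
  · intro e
    rw [coverage_insertNone, Finset.sum_apply, ← natCast_coverage]
    have := hb.coverage_le_two e
    interval_cases coverage s b e
    · simp
    · simp
    · simp [show (2 : ZMod 2) = 0 from rfl]
  · simp [sum_insertNone, ZModModule.add_self]

theorem HasTwoBasis.exists_coverage_le_one {G : SimpleGraph V} (h : HasTwoBasis G) (e : Sym2 V) :
    ∃ (ι : Type) (s : Finset ι) (b : ι → EdgeSpace V), IsTwoBasis G s b ∧ coverage s b e ≤ 1 := by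
  obtain ⟨ι, s, b, hb, hsum⟩ := h.exists_sum_eq_zero
  by_cases he : 0 < coverage s b e
  · obtain ⟨i, hi, hne⟩ := coverage_pos.mp he
    exact ⟨ι, s.erase i, b, hb.erase hsum i, hb.coverage_erase_le_one hi hne⟩
  · exact ⟨ι, s, b, hb, by omega⟩

theorem hasTwoBasis_of_union {G : SimpleGraph V} {ι κ : Type} {s : Finset ι} {t : Finset κ}
    {a : ι → EdgeSpace V} {b : κ → EdgeSpace V}
    (hspan : Submodule.span (ZMod 2) (a '' s) ⊔ Submodule.span (ZMod 2) (b '' t) = cycleSpace G)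
    (hcov : ∀ e, coverage s a e + coverage t b e ≤ 2) : HasTwoBasis G := by
  refine ⟨ι ⊕ κ, s.disjSum t, Sum.elim a b, ?_, fun e => coverage_disjSum s t a b e ▸ hcov e⟩
  rw [← hspan, ← Submodule.span_union]
  congr 1
  ext z
  simp

end TwoBasis

section Minors

variable {V V' W : Type*}

theorem hasMinor_mono {G H : SimpleGraph V} {K : SimpleGraph W} (h : G ≤ H)
    (hm : HasMinor G K) : HasMinor H K := by
  obtain ⟨f, hsurj, hconn, hadj⟩ := hm
  refine ⟨f, hsurj, fun w => (hconn w).mono fun _ _ hab => h hab, fun a b hab => ?_⟩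
  obtain ⟨v₁, v₂, h₁, h₂, h₁₂⟩ := hadj a b hab
  exact ⟨v₁, v₂, h₁, h₂, h h₁₂⟩

theorem isPlanar_mono {G H : SimpleGraph V} (h : G ≤ H) (hH : IsPlanar H) : IsPlanar G :=
  ⟨fun hm => hH.1 (hasMinor_mono h hm), fun hm => hH.2 (hasMinor_mono h hm)⟩

theorem reachable_induce_of_map {G : SimpleGraph V} {φ : V → V'}
    (hφ : ∀ v', (G.induce {v | φ v = v'}).Preconnected) {S : Set V'} {p q : S}
    (hpq : ((G.map φ).induce S).Reachable p q) {u v : V} (hu : φ u = p) (hv : φ v = q) :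
    (G.induce (φ ⁻¹' S)).Reachable ⟨u, by simp [hu]⟩ ⟨v, by simp [hv]⟩ := by
  have lift {r : V'} (hr : r ∈ S) {a b : V} (ha : φ a = r) (hb : φ b = r) :
      (G.induce (φ ⁻¹' S)).Reachable ⟨a, by simp [ha, hr]⟩ ⟨b, by simp [hb, hr]⟩ :=
    (hφ r ⟨a, ha⟩ ⟨b, hb⟩).map (G.induceHomOfLE (by rintro c rfl; exact hr)).toHom
  obtain ⟨walk⟩ := hpq
  induction walk generalizing u with
  | nil => exact lift (Subtype.coe_prop _) hu hv
  | @cons p c q hpc _ ih =>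
    obtain ⟨-, a, b, hab, ha, hb⟩ := hpc
    have hadj : (G.induce (φ ⁻¹' S)).Adj ⟨a, by simp [ha]⟩ ⟨b, by simp [hb]⟩ := hab
    exact (lift p.2 hu ha).trans (hadj.reachable.trans (ih hb hv))

theorem hasMinor_of_map {G : SimpleGraph V} {K : SimpleGraph W} {φ : V → V'}
    (hφ : ∀ v', (G.induce {v | φ v = v'}).Preconnected) (hK : ∀ w, ∃ w', K.Adj w w')
    (hm : HasMinor (G.map φ) K) : HasMinor G K := by
  obtain ⟨f, -, hconn, hadj⟩ := hm
  have hadj' (w₁ w₂ : W) (h : K.Adj w₁ w₂) :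
      ∃ v₁ v₂, f (φ v₁) = some w₁ ∧ f (φ v₂) = some w₂ ∧ G.Adj v₁ v₂ := by
    obtain ⟨_, _, h₁, h₂, -, v₁, v₂, hv, rfl, rfl⟩ := hadj w₁ w₂ h
    exact ⟨v₁, v₂, h₁, h₂, hv⟩
  refine ⟨f ∘ φ, fun w => ?_, fun w u v => ?_, hadj'⟩
  · obtain ⟨w', hw⟩ := hK w
    obtain ⟨v, -, hv, -⟩ := hadj' w w' hw
    exact ⟨v, hv⟩
  · exact reachable_induce_of_map hφ (hconn w ⟨φ u, u.2⟩ ⟨φ v, v.2⟩) rfl rfl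

/-- Contraction of the edge `xy` into `x`; the vertex `y` survives as an isolated vertex. -/
def contractEdge (G : SimpleGraph V) (x y : V) : SimpleGraph V := G.map (Function.update id y x)

theorem contractEdge_adj {G : SimpleGraph V} {x y : V} (hxy : x ≠ y) {u w : V} :
    (contractEdge G x y).Adj u w ↔
      u ≠ w ∧ u ≠ y ∧ w ≠ y ∧ (G.Adj u w ∨ (u = x ∧ G.Adj y w) ∨ (w = x ∧ G.Adj u y)) := by
  rw [contractEdge, map_adj']
  constructor
  · rintro ⟨hne, a, b, hab, rfl, rfl⟩
    by_cases ha : a = y <;> by_cases hb : b = y <;> simp_all [Function.update]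
  · rintro ⟨hne, hu, hw, h | ⟨rfl, h⟩ | ⟨rfl, h⟩⟩
    · exact ⟨hne, u, w, h, by simp [hu], by simp [hw]⟩
    · exact ⟨hne, y, w, h, by simp, by simp [hw]⟩
    · exact ⟨hne, u, y, h, by simp [hu], by simp⟩

theorem hasMinor_of_contractEdge {G : SimpleGraph V} {K : SimpleGraph W}
    (hK : ∀ w, ∃ w', K.Adj w w') {x y : V} (hxy : G.Adj x y)
    (hm : HasMinor (contractEdge G x y) K) : HasMinor G K := by
  refine hasMinor_of_map (fun v => ?_) hK hm
  rintro ⟨a, ha⟩ ⟨b, hb⟩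
  by_cases hab : a = b
  · subst hab; rfl
  refine Adj.reachable (?_ : G.Adj a b)
  have hy := hxy.symm
  by_cases hay : a = y <;> by_cases hby : b = y <;> simp_all [Function.update]

theorem isPlanar_contractEdge {G : SimpleGraph V} {x y : V} (hxy : G.Adj x y) (hG : IsPlanar G) :
    IsPlanar (contractEdge G x y) := by
  refine ⟨fun hm => hG.1 (hasMinor_of_contractEdge (fun w => ?_) hxy hm),
    fun hm => hG.2 (hasMinor_of_contractEdge (fun w => ?_) hxy hm)⟩
  · exact ⟨w + 1, by simp [completeGraph]⟩
  · rcases w with w | w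
    · exact ⟨Sum.inr 0, by simp⟩
    · exact ⟨Sum.inl 0, by simp⟩

theorem ncard_edgeSet_contractEdge_lt [Finite V] {G : SimpleGraph V} {x y : V} (hxy : G.Adj x y) :
    (contractEdge G x y).edgeSet.ncard < G.edgeSet.ncard := by
  have hsub : (contractEdge G x y).edgeSet ⊆
      Sym2.map (Function.update id y x) '' (G.edgeSet \ {s(x, y)}) := by
    rintro ⟨u, w⟩ ⟨hne, a, b, hab, rfl, rfl⟩
    refine ⟨s(a, b), ⟨hab, fun he => hne ?_⟩, rfl⟩
    rcases Sym2.eq_iff.mp he with ⟨rfl, rfl⟩ | ⟨rfl, rfl⟩ <;> simp [hxy.ne]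
  calc (contractEdge G x y).edgeSet.ncard
      ≤ (Sym2.map (Function.update id y x) '' (G.edgeSet \ {s(x, y)})).ncard :=
        Set.ncard_le_ncard hsub (Set.toFinite _)
    _ ≤ (G.edgeSet \ {s(x, y)}).ncard := Set.ncard_image_le (Set.toFinite _)
    _ < G.edgeSet.ncard := Set.ncard_sdiff_singleton_lt_of_mem hxy (Set.toFinite _)

/-- `G` with all edges meeting `S` removed: the deletion of the vertex set `S`, without changing
the vertex type. -/
def isolate (G : SimpleGraph V) (S : Set V) : SimpleGraph V where
  Adj u w := G.Adj u w ∧ u ∉ S ∧ w ∉ S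
  symm := ⟨fun _ _ h => ⟨h.1.symm, h.2.2, h.2.1⟩⟩
  loopless := ⟨fun _ h => h.1.ne rfl⟩

theorem isolate_le (G : SimpleGraph V) (S : Set V) : isolate G S ≤ G := fun _ _ h => h.1

theorem notMem_of_reachable_isolate {G : SimpleGraph V} {S : Set V} {u w : V} (hu : u ∉ S)
    (h : (isolate G S).Reachable u w) : w ∉ S := by
  obtain ⟨p⟩ := h
  induction p with
  | nil => exact hu
  | cons h _ ih => exact ih h.2.2

theorem edge_eq_of_isolate_adj {G : SimpleGraph V} {x y u w : V} {Q : Set V}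
    (h₁ : (isolate G (Q ∪ {x, y})ᶜ).Adj u w) (h₂ : (isolate G Q).Adj u w) : s(u, w) = s(x, y) := by
  obtain ⟨hadj, hu, hw⟩ := h₂
  simp only [isolate, Set.mem_compl_iff, not_not, Set.mem_union, hu, hw, false_or] at h₁
  have := hadj.ne
  aesop

end Minors

section MinimalCounterexample

variable {V : Type*} [Fintype V]

/-- A planar graph without a `2`-basis such that all planar graphs on its vertices with fewer edges
have one. -/
structure IsMinimalCounterexample (G : SimpleGraph V) : Prop where
  planar : IsPlanar G
  not_hasTwoBasis : ¬ HasTwoBasis G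
  hasTwoBasis_of_lt : ∀ H : SimpleGraph V, IsPlanar H → H.edgeSet.ncard < G.edgeSet.ncard →
    HasTwoBasis H

namespace IsMinimalCounterexample

variable {G : SimpleGraph V}

theorem hasTwoBasis_of_le (h : IsMinimalCounterexample G) {H : SimpleGraph V} (hle : H ≤ G)
    {a b : V} (hG : G.Adj a b) (hH : ¬ H.Adj a b) : HasTwoBasis H :=
  h.hasTwoBasis_of_lt H (isPlanar_mono hle h.planar) <|
    Set.ncard_lt_ncard ⟨edgeSet_mono hle, fun hsub => hH (hsub (a := s(a, b)) hG)⟩ (Set.toFinite _)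

theorem hasTwoBasis_contractEdge (h : IsMinimalCounterexample G) {a b : V} (hab : G.Adj a b) :
    HasTwoBasis (contractEdge G a b) :=
  h.hasTwoBasis_of_lt _ (isPlanar_contractEdge hab h.planar) (ncard_edgeSet_contractEdge_lt hab)

end IsMinimalCounterexample

theorem boundary_add_smul_edgeVec {z : EdgeSpace V} (hdiag : ∀ v, z s(v, v) = 0) {x y : V}
    (hxy : x ≠ y) (hz : ∀ v, v ≠ x → v ≠ y → boundary z v = 0) :
    boundary (z + boundary z x • edgeVec x y) = 0 := by
  have hsum : boundary z x + boundary z y = 0 := by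
    rw [← sum_pair hxy, ← sum_boundary hdiag]
    refine sum_subset (subset_univ _) fun v _ hv => ?_
    simp only [mem_insert, mem_singleton, not_or] at hv
    exact hz v hv.1 hv.2
  ext v
  rw [map_add, map_smul, boundary_edgeVec hxy]
  by_cases hvx : v = x
  · simp [hvx, hxy, CharTwo.add_self_eq_zero]
  by_cases hvy : v = y
  · simp [hvy, hxy.symm, add_comm (boundary z y), hsum]
  · simp [hvx, hvy, hz]

theorem cycleSpace_le_sup_of_edge_cut {G : SimpleGraph V} {x y : V} (hxy : G.Adj x y) {Q : Set V}
    (hx : x ∉ Q) (hy : y ∉ Q) (hQ : ∀ u ∈ Q, ∀ w, G.Adj u w → w ∈ Q ∪ {x, y}) :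
    cycleSpace G ≤ cycleSpace (isolate G (Q ∪ {x, y})ᶜ) ⊔ cycleSpace (isolate G Q) := by
  intro z hz
  set S := Q ∪ {x, y} with hS
  let z₁ : EdgeSpace V := S.sym2.indicator z
  have hin {u w : V} (hu : u ∈ S) (hw : w ∈ S) : z₁ s(u, w) = z s(u, w) :=
    Set.indicator_of_mem (by simp [hu, hw]) z
  have hout {u w : V} (h : u ∉ S ∨ w ∉ S) : z₁ s(u, w) = 0 :=
    Set.indicator_of_notMem (by simpa [imp_iff_not_or] using h) z
  have hQz {u w : V} (hu : u ∈ Q) : z₁ s(u, w) = z s(u, w) := by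
    by_cases hw : w ∈ S
    · exact hin (.inl hu) hw
    · rw [hout (.inr hw), hz.1 u w fun huw => hw (hQ u hu w huw)]
  have hbd (v : V) (hvx : v ≠ x) (hvy : v ≠ y) : boundary z₁ v = 0 := by
    by_cases hv : v ∈ S
    · have hvQ : v ∈ Q := by simpa [hS, hvx, hvy] using hv
      simp only [boundary_apply, hQz hvQ, sum_apply_of_mem_cycleSpace hz]
    · exact sum_eq_zero fun w _ => hout (.inl hv)
  have hdiag (v : V) : z₁ s(v, v) = 0 :=
    Set.indicator_apply_eq_zero.mpr fun _ => apply_diag_of_mem_cycleSpace hz v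
  set z₂ := z₁ + boundary z₁ x • edgeVec x y
  have hz₂ : boundary z₂ = 0 := boundary_add_smul_edgeVec hdiag hxy.ne hbd
  have hadj : (isolate G Sᶜ).Adj x y := ⟨hxy, by simp [hS], by simp [hS]⟩
  rw [← add_sub_cancel z₂ z]
  refine Submodule.add_mem_sup ⟨fun u w huw => ?_, hz₂⟩
    ⟨fun u w huw => ?_, by rw [map_sub, hz₂, hz.2, sub_zero]⟩
  · have : z₁ s(u, w) = 0 := by
      by_cases huS : u ∈ S <;> by_cases hwS : w ∈ S
      · rw [hin huS hwS, hz.1 u w fun h => huw ⟨h, by simp [huS], by simp [hwS]⟩]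
      all_goals exact hout (by simp [huS, hwS])
    simp [z₂, this, edgeVec_of_not_adj hadj huw]
  · have hor : u ∈ Q ∨ w ∈ Q ∨ ¬ G.Adj u w := by
      by_contra! hc
      exact huw ⟨hc.2.2, hc.1, hc.2.1⟩
    have hxy0 (hu : u ∈ Q ∨ w ∈ Q) : edgeVec x y s(u, w) = 0 :=
      edgeVec_of_ne (by aesop)
    rcases hor with hu | hw | hn
    · simp [z₂, hQz hu, hxy0 (.inl hu)]
    · simp [z₂, Sym2.eq_swap (a := u), hQz hw, Sym2.eq_swap (a := w) ▸ hxy0 (.inr hw)]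
    · have : z₁ s(u, w) = 0 := Set.indicator_apply_eq_zero.mpr fun _ => hz.1 u w hn
      simp [z₂, this, hz.1 u w hn, edgeVec_of_not_adj hxy hn]

theorem hasTwoBasis_of_edge_cut {G : SimpleGraph V} {x y : V} (hxy : G.Adj x y) {Q : Set V}
    (hx : x ∉ Q) (hy : y ∉ Q) (hQ : ∀ u ∈ Q, ∀ w, G.Adj u w → w ∈ Q ∪ {x, y})
    (h₁ : HasTwoBasis (isolate G (Q ∪ {x, y})ᶜ)) (h₂ : HasTwoBasis (isolate G Q)) :
    HasTwoBasis G := by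
  obtain ⟨ι, s, a, ha, hcova⟩ := h₁.exists_coverage_le_one s(x, y)
  obtain ⟨κ, t, b, hb, hcovb⟩ := h₂.exists_coverage_le_one s(x, y)
  refine hasTwoBasis_of_union (s := s) (t := t) (a := a) (b := b) ?_ ?_
  · rw [ha.span_eq, hb.span_eq]
    exact le_antisymm (sup_le (cycleSpace_mono (isolate_le _ _)) (cycleSpace_mono (isolate_le _ _)))
      (cycleSpace_le_sup_of_edge_cut hxy hx hy hQ)
  · rintro ⟨u, w⟩
    by_cases he : s(u, w) = s(x, y)
    · change coverage s a s(u, w) + coverage t b s(u, w) ≤ 2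
      rw [he]
      omega
    by_cases hu : (isolate G (Q ∪ {x, y})ᶜ).Adj u w
    · have hu' : ¬ (isolate G Q).Adj u w := fun h => he (edge_eq_of_isolate_adj hu h)
      exact (hb.coverage_eq_zero hu').symm ▸ ha.coverage_le_two _
    · exact (ha.coverage_eq_zero hu).symm ▸ (zero_add _).trans_le (hb.coverage_le_two _)

theorem IsMinimalCounterexample.reachable_isolate {G : SimpleGraph V}
    (h : IsMinimalCounterexample G) {x y : V} (hxy : G.Adj x y) {w₁ w₂ : V}
    (h₁ : w₁ ∉ ({x, y} : Set V)) (h₂ : w₂ ∉ ({x, y} : Set V))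
    (ha₁ : G.Adj x w₁ ∨ G.Adj y w₁) (ha₂ : G.Adj x w₂ ∨ G.Adj y w₂) :
    (isolate G {x, y}).Reachable w₁ w₂ := by
  by_contra hnr
  let Q : Set V := {v | (isolate G {x, y}).Reachable w₁ v}
  have hdisj (v : V) (hv : v ∈ Q) : v ∉ ({x, y} : Set V) := notMem_of_reachable_isolate h₁ hv
  refine h.not_hasTwoBasis (hasTwoBasis_of_edge_cut hxy (Q := Q) ?_ ?_ ?_ ?_ ?_)
  · exact fun hx => hdisj x hx (by simp)
  · exact fun hy => hdisj y hy (by simp)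
  · intro u hu w huw
    by_cases hw : w ∈ ({x, y} : Set V)
    · exact .inr hw
    · exact .inl (Reachable.trans hu (Adj.reachable ⟨huw, hdisj u hu, hw⟩))
  · have hn (v : V) : ¬ (isolate G (Q ∪ {x, y})ᶜ).Adj v w₂ := fun hv =>
      hv.2.2 fun hw => hw.elim hnr h₂
    exact ha₂.elim (fun ha => h.hasTwoBasis_of_le (isolate_le _ _) ha (hn x))
      fun ha => h.hasTwoBasis_of_le (isolate_le _ _) ha (hn y)
  · have hn (v : V) : ¬ (isolate G Q).Adj v w₁ := fun hv => hv.2.2 (Reachable.refl w₁)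
    exact ha₁.elim (fun ha => h.hasTwoBasis_of_le (isolate_le _ _) ha (hn x))
      fun ha => h.hasTwoBasis_of_le (isolate_le _ _) ha (hn y)

end MinimalCounterexample

section SmallDegree

variable {V : Type*}

/-- The substitution of the path `a p b` for the edge `ab`. The unused edge `ab` of the subdivided
graph is sent to a diagonal element, on which all cycles vanish. -/
def subdivision (p a b : V) (e : Sym2 V) : Sym2 V :=
  if e = s(a, b) then s(p, p) else if e = s(p, a) ∨ e = s(p, b) then s(a, b) else e

theorem comp_subdivision {p a b : V} (hpa : p ≠ a) (hpb : p ≠ b) (hab : a ≠ b) {z : EdgeSpace V}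
    (hz : ∀ w, z s(p, w) = 0) :
    z ∘ subdivision p a b = z + z s(a, b) • triangle p a b := by
  have h₁ : triangle p a b s(p, a) = 1 := triangle_apply_edge hpb hab
  have h₂ : triangle p a b s(p, b) = 1 := by
    rw [triangle_swap, triangle_rotate]; exact triangle_apply_edge hpa hab.symm
  have h₃ : triangle p a b s(a, b) = 1 := by
    rw [triangle_rotate]; exact triangle_apply_edge hpa.symm hpb.symm
  ext e
  by_cases hab' : e = s(a, b)
  · simp [subdivision, hab', h₃, hz, CharTwo.add_self_eq_zero]
  by_cases hpa' : e = s(p, a)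
  · simp [subdivision, hpa', h₁, hz, hpa, hpb]
  by_cases hpb' : e = s(p, b)
  · simp [subdivision, hpb', h₂, hz, hpa, hpb]
  · simp [subdivision, hab', hpa', hpb', triangle_of_ne hpa' hpb' hab']

theorem contractEdge_adj_of_neighbors {G : SimpleGraph V} {p a b : V} (hpa : G.Adj p a)
    (hpb : G.Adj p b) (hab : a ≠ b) (hN : ∀ w, G.Adj p w → w ∈ ({a, b} : Finset V)) {u w : V} :
    (contractEdge G b p).Adj u w ↔ s(u, w) = s(a, b) ∨ G.Adj u w ∧ u ≠ p ∧ w ≠ p := by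
  rw [contractEdge_adj hpb.ne']
  have hN' (v : V) (hvb : v ≠ b) (hv : G.Adj p v) : v = a := by simpa [hvb] using hN v hv
  constructor
  · rintro ⟨hne, hu, hw, h | ⟨rfl, h⟩ | ⟨rfl, h⟩⟩
    · exact .inr ⟨h, hu, hw⟩
    · exact .inl (by rw [hN' w hne.symm h, Sym2.eq_swap])
    · exact .inl (by rw [hN' u hne h.symm])
  · rintro (h | ⟨h, hu, hw⟩)
    · rcases Sym2.eq_iff.mp h with ⟨rfl, rfl⟩ | ⟨rfl, rfl⟩
      · exact ⟨hab, hpa.ne', hpb.ne', .inr (.inr ⟨rfl, hpa.symm⟩)⟩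
      · exact ⟨hab.symm, hpb.ne', hpa.ne', .inr (.inl ⟨rfl, hpa⟩)⟩
    · exact ⟨h.ne, hu, hw, .inl h⟩

variable [Fintype V]

theorem HasTwoBasis.of_comp {G H : SimpleGraph V} (hH : HasTwoBasis H) (ρ : Sym2 V → Sym2 V)
    (hmem : ∀ z ∈ cycleSpace H, z ∘ ρ ∈ cycleSpace G)
    (hsurj : ∀ z ∈ cycleSpace G, ∃ z' ∈ cycleSpace H, z' ∘ ρ = z) : HasTwoBasis G := by
  obtain ⟨ι, s, b, hb⟩ := hH
  refine ⟨ι, s, fun i => b i ∘ ρ, .of_exists_sum_eq (fun i hi => hmem _ (hb.mem_cycleSpace hi))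
    (fun z hz => ?_) fun e => hb.coverage_le_two (ρ e)⟩
  obtain ⟨z', hz', rfl⟩ := hsurj z hz
  obtain ⟨c, rfl⟩ := hb.exists_sum_eq hz'
  exact ⟨c, by ext e; simp⟩

theorem HasTwoBasis.of_cycleSpace_le {G H : SimpleGraph V} (hH : HasTwoBasis H) (hle : H ≤ G)
    (hcyc : cycleSpace G ≤ cycleSpace H) : HasTwoBasis G :=
  hH.of_comp id (fun _ hz => cycleSpace_mono hle hz) fun z hz => ⟨z, hcyc hz, rfl⟩

theorem IsTwoBasis.hasTwoBasis_of_add_cycle {G H : SimpleGraph V} {ι : Type} {s : Finset ι}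
    {b : ι → EdgeSpace V} (hb : IsTwoBasis H s b) (hle : H ≤ G) {t : EdgeSpace V}
    (ht : t ∈ cycleSpace G) {e₀ : Sym2 V} (hte : t e₀ = 1)
    (hH : ∀ z ∈ cycleSpace G, z e₀ = 0 → z ∈ cycleSpace H)
    (hcov : ∀ e, t e ≠ 0 → coverage s b e ≤ 1) : HasTwoBasis G := by
  refine hasTwoBasis_of_union (s := s) (t := {()}) (a := b) (b := fun _ => t) ?_ fun e => ?_
  · rw [hb.span_eq]
    refine le_antisymm (sup_le (cycleSpace_mono hle) ?_) fun z hz => ?_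
    · simpa [Submodule.span_le] using ht
    · rw [← sub_add_cancel z (z e₀ • t)]
      refine Submodule.add_mem_sup (hH _ ?_ (by simp [hte])) ?_
      · exact Submodule.sub_mem _ hz (Submodule.smul_mem _ _ ht)
      · exact Submodule.smul_mem _ _ (Submodule.subset_span (by simp))
  · by_cases he : t e = 0
    · simpa [coverage, he] using hb.coverage_le_two e
    · simpa [coverage, he, filter_singleton] using hcov e he

theorem mem_cycleSpace_isolate {G : SimpleGraph V} {S : Set V} {z : EdgeSpace V}
    (hz : z ∈ cycleSpace G) (hS : ∀ v ∈ S, ∀ w, z s(v, w) = 0) :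
    z ∈ cycleSpace (isolate G S) := by
  refine ⟨fun u w huw => ?_, hz.2⟩
  by_contra hne
  exact huw ⟨adj_of_mem_cycleSpace hz hne, fun hu => hne (hS u hu w),
    fun hw => hne (Sym2.eq_swap (a := u) ▸ hS w hw u)⟩

theorem mem_cycleSpace_deleteEdges {G : SimpleGraph V} {S : Set (Sym2 V)} {z : EdgeSpace V}
    (hz : z ∈ cycleSpace G) (hS : ∀ e ∈ S, z e = 0) : z ∈ cycleSpace (G.deleteEdges S) := by
  refine ⟨fun u w huw => ?_, hz.2⟩
  by_contra hne
  exact huw (deleteEdges_adj.mpr ⟨adj_of_mem_cycleSpace hz hne, fun he => hne (hS _ he)⟩)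

theorem hasTwoBasis_of_contractEdge {G : SimpleGraph V} {p a b : V} (hpa : G.Adj p a)
    (hpb : G.Adj p b) (hab : a ≠ b) (hadj : ¬ G.Adj a b)
    (hN : ∀ w, G.Adj p w → w ∈ ({a, b} : Finset V)) (h : HasTwoBasis (contractEdge G b p)) :
    HasTwoBasis G := by
  have hbd (z : EdgeSpace V) (k : ZMod 2) (hz : boundary z = 0) :
      boundary (z + k • triangle p a b) = 0 := by
    rw [map_add, map_smul, hz, boundary_triangle hpa.ne hpb.ne hab, smul_zero, add_zero]
  have htri : triangle p a b s(a, b) = 1 := by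
    rw [triangle_rotate]; exact triangle_apply_edge hpa.ne' hpb.ne'
  have htri' : triangle p a b s(p, b) = 1 := by
    rw [triangle_swap, triangle_rotate]; exact triangle_apply_edge hpa.ne hab.symm
  have hH {u w : V} := contractEdge_adj_of_neighbors hpa hpb hab hN (u := u) (w := w)
  have hsub {z : EdgeSpace V} (hz : z ∈ cycleSpace (contractEdge G b p)) :=
    comp_subdivision hpa.ne hpb.ne hab fun w => hz.1 p w (by simp [contractEdge_adj hpb.ne'])
  refine h.of_comp (subdivision p a b) (fun z hz => ?_) fun z hz => ?_
  · refine ⟨fun u w huw => ?_, ?_⟩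
    · have hne {c : V} (hpc : G.Adj p c) : s(u, w) ≠ s(p, c) := fun he =>
        huw ((adj_congr_of_sym2 G he).mpr hpc)
      by_cases he : s(u, w) = s(a, b)
      · simp [subdivision, he, apply_diag_of_mem_cycleSpace hz]
      · simpa [subdivision, he, hne hpa, hne hpb] using hz.1 u w (by simp [hH, he, huw])
    · rw [hsub hz]; exact hbd z _ hz.2
  · have hpab : z s(p, a) = z s(p, b) := by
      have := sum_neighbors_of_mem_cycleSpace hz hN
      rwa [sum_pair hab, CharTwo.add_eq_zero] at this
    have hz' : z + z s(p, a) • triangle p a b ∈ cycleSpace (contractEdge G b p) := by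
      refine ⟨fun u w huw => ?_, hbd z _ hz.2⟩
      rw [hH] at huw
      by_cases ha : s(u, w) = s(p, a)
      · simp [ha, triangle_apply_edge hpb.ne hab, CharTwo.add_self_eq_zero]
      by_cases hb : s(u, w) = s(p, b)
      · simp [hb, hpab, htri', CharTwo.add_self_eq_zero]
      have hab' : s(u, w) ≠ s(a, b) := fun he => huw (.inl he)
      have hN' {v : V} (hv : G.Adj p v) : s(p, v) = s(p, a) ∨ s(p, v) = s(p, b) := by
        rcases (by simpa using hN v hv : v = a ∨ v = b) with rfl | rfl <;> simp
      have hz0 : z s(u, w) = 0 :=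
        hz.1 u w fun hadj => huw <| .inr ⟨hadj, fun hu => ?_, fun hw => ?_⟩
      · simp [hz0, triangle_of_ne ha hb hab']
      · subst hu; exact (hN' hadj).elim ha hb
      · subst hw; rw [Sym2.eq_swap] at ha hb; exact (hN' hadj.symm).elim ha hb
    refine ⟨_, hz', ?_⟩
    rw [hsub hz']
    simp [htri, hz.1 a b hadj, add_assoc, ZModModule.add_self]

theorem HasTwoBasis.exists_coverage_le_one_pair {G : SimpleGraph V} (h : HasTwoBasis G)
    {p a b c : V} (hab : a ≠ b) (hac : a ≠ c) (hbc : b ≠ c)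
    (hN : ∀ w, G.Adj p w → w ∈ ({a, b, c} : Finset V)) :
    ∃ (ι : Type) (s : Finset ι) (f : ι → EdgeSpace V), IsTwoBasis G s f ∧
      coverage s f s(p, a) ≤ 1 ∧ coverage s f s(p, b) ≤ 1 := by
  obtain ⟨ι, s, f, hf, hsum⟩ := h.exists_sum_eq_zero
  by_cases hex : ∃ i ∈ s, f i s(p, a) ≠ 0 ∧ f i s(p, b) ≠ 0
  · obtain ⟨i, hi, ha, hb⟩ := hex
    exact ⟨ι, s.erase i, f, hf.erase hsum i, hf.coverage_erase_le_one hi ha,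
      hf.coverage_erase_le_one hi hb⟩
  push Not at hex
  have hle : coverage s f s(p, a) + coverage s f s(p, b) ≤ 2 := by
    refine le_trans ?_ (hf.coverage_le_two s(p, c))
    rw [coverage, coverage, ← card_union_of_disjoint (disjoint_filter.mpr fun i hi ha hb =>
      hb (hex i hi ha))]
    refine card_le_card fun i hi => ?_
    simp only [mem_union, mem_filter, ← and_or_left] at hi
    have hstar := sum_neighbors_of_mem_cycleSpace (hf.mem_cycleSpace hi.1) hN
    rw [sum_insert (by simp [hab, hac]), sum_pair hbc] at hstar
    refine mem_filter.mpr ⟨hi.1, fun hc => ?_⟩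
    rcases hi.2 with ha | hb
    · exact ha (by simpa [hc, hex i hi.1 ha] using hstar)
    · by_cases ha : f i s(p, a) = 0
      · exact hb (by simpa [hc, ha] using hstar)
      · exact hb (hex i hi.1 ha)
  rcases Nat.lt_or_ge 1 (coverage s f s(p, a)) with ha | ha
  · obtain ⟨i, hi, hia⟩ := coverage_pos.mp (Nat.zero_lt_of_lt ha)
    exact ⟨ι, s.erase i, f, hf.erase hsum i, hf.coverage_erase_le_one hi hia,
      (coverage_mono (erase_subset _ _) f _).trans (by omega)⟩
  rcases Nat.lt_or_ge 1 (coverage s f s(p, b)) with hb | hb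
  · obtain ⟨i, hi, hib⟩ := coverage_pos.mp (Nat.zero_lt_of_lt hb)
    exact ⟨ι, s.erase i, f, hf.erase hsum i, (coverage_mono (erase_subset _ _) f _).trans ha,
      hf.coverage_erase_le_one hi hib⟩
  · exact ⟨ι, s, f, hf, ha, hb⟩

namespace IsMinimalCounterexample

variable {G : SimpleGraph V}

theorem exists_third_neighbor (h : IsMinimalCounterexample G) {p a : V} (hpa : G.Adj p a) (b : V) :
    ∃ c, c ≠ a ∧ c ≠ b ∧ G.Adj p c := by
  by_contra! hc
  have hN (w : V) (hw : G.Adj p w) : w ∈ ({a, b} : Finset V) := by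
    by_contra hw'
    simp only [mem_insert, mem_singleton, not_or] at hw'
    exact hc w hw'.1 hw'.2 hw
  have hp : HasTwoBasis (isolate G {p}) :=
    h.hasTwoBasis_of_le (isolate_le _ _) hpa fun hadj => hadj.2.1 rfl
  have hstar {z : EdgeSpace V} (hz : z ∈ cycleSpace G) (h0 : z s(p, a) = 0) :
      z ∈ cycleSpace (isolate G {p}) := by
    refine mem_cycleSpace_isolate hz ?_
    rintro _ rfl w
    by_contra hne
    have hwa : w ≠ a := fun hw => hne (hw ▸ h0)
    have hwb : w = b := by simpa [hwa] using hN w (adj_of_mem_cycleSpace hz hne)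
    subst hwb
    have := sum_neighbors_of_mem_cycleSpace hz hN
    rw [sum_pair hwa.symm, h0, zero_add] at this
    exact hne this
  by_cases hpb : G.Adj p b ∧ a ≠ b
  swap
  · refine h.not_hasTwoBasis (hp.of_cycleSpace_le (isolate_le _ _) fun z hz => hstar hz ?_)
    simpa using sum_neighbors_of_mem_cycleSpace hz (s := {a}) fun w hw => by
      by_contra hwa
      obtain rfl : w = b := by simpa [mem_singleton.not.mp hwa] using hN w hw
      exact hpb ⟨hw, fun hab => hwa (by simp [hab])⟩
  obtain ⟨hpb, hab⟩ := hpb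
  by_cases hadj : G.Adj a b
  · obtain ⟨ι, s, f, hf, hcov⟩ := hp.exists_coverage_le_one s(a, b)
    refine h.not_hasTwoBasis (hf.hasTwoBasis_of_add_cycle (isolate_le _ _)
      (triangle_mem_cycleSpace hpa hpb hadj) (triangle_apply_edge hpb.ne hab)
      (fun z => hstar) fun e he => ?_)
    by_cases heab : e = s(a, b)
    · exact heab ▸ hcov
    have hp0 {c : V} : coverage s f s(p, c) = 0 := hf.coverage_eq_zero fun hpc => hpc.2.1 rfl
    have hep : e = s(p, a) ∨ e = s(p, b) := by
      by_contra! hne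
      exact he (triangle_of_ne hne.1 hne.2 heab)
    rcases hep with rfl | rfl <;> simp [hp0]
  · exact h.not_hasTwoBasis
      (hasTwoBasis_of_contractEdge hpa hpb hab hadj hN (h.hasTwoBasis_contractEdge hpb.symm))

theorem exists_fourth_neighbor (h : IsMinimalCounterexample G) {p a b c : V} (hpa : G.Adj p a)
    (hpb : G.Adj p b) (hab : G.Adj a b) (hac : a ≠ c) (hbc : b ≠ c) :
    ∃ d, d ≠ a ∧ d ≠ b ∧ d ≠ c ∧ G.Adj p d := by
  by_contra! hN
  have hle := G.deleteEdges_le {s(a, b)}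
  have hdel : HasTwoBasis (G.deleteEdges {s(a, b)}) :=
    h.hasTwoBasis_of_le hle hab (by simp [deleteEdges_adj])
  obtain ⟨ι, s, f, hf, hcova, hcovb⟩ := hdel.exists_coverage_le_one_pair (p := p) hab.ne hac hbc
    fun w hw => by
      have := fun ha hb hc => hN w ha hb hc (hle hw)
      simp only [mem_insert, mem_singleton]
      tauto
  refine h.not_hasTwoBasis (hf.hasTwoBasis_of_add_cycle hle (triangle_mem_cycleSpace hab hpa.symm
    hpb.symm) (triangle_apply_edge hpa.ne' hpb.ne') (fun z hz hz0 =>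
      mem_cycleSpace_deleteEdges hz (by simpa using hz0)) fun e he => ?_)
  by_contra hcov
  refine he (triangle_of_ne ?_ ?_ ?_) <;> rintro rfl <;> apply hcov
  · exact (hf.coverage_eq_zero (by simp [deleteEdges_adj])).trans_le zero_le_one
  · rwa [Sym2.eq_swap]
  · rwa [Sym2.eq_swap]

theorem exists_pair_isolate_adj (h : IsMinimalCounterexample G) {x y w v : V} (hxy : G.Adj x y)
    (hwx : w ≠ x) (hwy : w ≠ y) (hwv : G.Adj w v) :
    ∃ a b, a ≠ b ∧ (isolate G {x, y}).Adj w a ∧ (isolate G {x, y}).Adj w b := by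
  have hK {a : V} (ha : G.Adj w a) (hax : a ≠ x) (hay : a ≠ y) : (isolate G {x, y}).Adj w a :=
    ⟨ha, by simp [hwx, hwy], by simp [hax, hay]⟩
  by_cases hboth : G.Adj w x ∧ G.Adj w y
  · obtain ⟨a, hax, hay, ha⟩ := h.exists_third_neighbor hboth.1 y
    obtain ⟨b, hbx, hby, hba, hb⟩ :=
      h.exists_fourth_neighbor hboth.1 hboth.2 hxy hax.symm hay.symm
    exact ⟨a, b, hba.symm, hK ha hax hay, hK hb hbx hby⟩
  have hpair (c : V) : ∃ a b, a ≠ b ∧ a ≠ c ∧ b ≠ c ∧ G.Adj w a ∧ G.Adj w b := by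
    obtain ⟨a, -, hac, ha⟩ := h.exists_third_neighbor hwv c
    obtain ⟨b, hba, hbc, hb⟩ := h.exists_third_neighbor ha c
    exact ⟨a, b, hba.symm, hac, hbc, ha, hb⟩
  rcases not_and_or.mp hboth with hx | hy
  · obtain ⟨a, b, hab, hay, hby, ha, hb⟩ := hpair y
    exact ⟨a, b, hab, hK ha (fun e => hx (e ▸ ha)) hay, hK hb (fun e => hx (e ▸ hb)) hby⟩
  · obtain ⟨a, b, hab, hax, hbx, ha, hb⟩ := hpair x
    exact ⟨a, b, hab, hK ha hax fun e => hy (e ▸ ha), hK hb hbx fun e => hy (e ▸ hb)⟩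

end IsMinimalCounterexample

end SmallDegree

section StarsLinked

variable {V : Type*} [Fintype V]

/-- The edges at the vertices of `S` are linked by cycles of `H`: an edge weight orthogonal to the
star of every cycle at every vertex of `S` is constant on the edges of `H` meeting `S`. -/
def StarsLinked (H : SimpleGraph V) (S : Set V) : Prop :=
  ∀ τ : Sym2 V → ZMod 2, (∀ u ∈ S, ∀ P ∈ cycleSpace H, ∑ w, τ s(u, w) * P s(u, w) = 0) →
    ∃ c, ∀ u ∈ S, ∀ w, H.Adj u w → τ s(u, w) = c

theorem exists_link {H K : SimpleGraph V} (hK : K ≤ H) {x y w₁ w₂ : V} (h₁ : H.Adj x w₁)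
    (h₂ : H.Adj y w₂) (hr : K.Reachable w₁ w₂) :
    ∃ P : EdgeSpace V, (∀ u w, ¬ H.Adj u w → P s(u, w) = 0) ∧
      boundary P = Pi.single x 1 + Pi.single y 1 ∧
      ∀ u, (∀ w, ¬ K.Adj u w) → ∀ w, P s(u, w) = edgeVec x w₁ s(u, w) + edgeVec y w₂ s(u, w) := by
  obtain ⟨p⟩ := hr
  have hp {u w : V} (huw : ¬ K.Adj u w) : walkVec p s(u, w) = 0 :=
    walkVec_of_notMem p fun he => huw (p.edges_subset_edgeSet he)
  refine ⟨edgeVec x w₁ + walkVec p + edgeVec y w₂, fun u w huw => ?_, ?_, fun u hu w => ?_⟩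
  · simp [edgeVec_of_not_adj h₁ huw, edgeVec_of_not_adj h₂ huw, hp fun h => huw (hK h)]
  · rw [map_add, map_add, boundary_walkVec, boundary_edgeVec h₁.ne, boundary_edgeVec h₂.ne]
    linear_combination ZModModule.add_self (Pi.single w₁ 1 + Pi.single w₂ 1 : V → ZMod 2)
  · simp [hp (hu w)]

theorem sum_mul_edgeVec_left (f : V → ZMod 2) (u v : V) : ∑ w, f w * edgeVec u v s(u, w) = f v := by
  have h (w : V) : edgeVec u v s(u, w) = if w = v then 1 else 0 := by
    by_cases hw : w = v
    · simp [hw]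
    · rw [if_neg hw, edgeVec_of_ne fun h => hw (Sym2.congr_right.mp h)]
  simp [h]

theorem sum_mul_edgeVec_right (f : V → ZMod 2) (u v : V) :
    ∑ w, f w * edgeVec u v s(v, w) = f u := by
  rw [edgeVec_comm, sum_mul_edgeVec_left]

theorem starsLinked_singleton {H K : SimpleGraph V} (hK : K ≤ H) {u : V} (hu : ∀ w, ¬ K.Adj u w)
    (hr : ∀ w₁ w₂, H.Adj u w₁ → H.Adj u w₂ → K.Reachable w₁ w₂) : StarsLinked H {u} := by
  intro τ hτ
  by_cases hN : ∃ w₀, H.Adj u w₀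
  swap
  · exact ⟨0, by rintro _ rfl w hw; exact absurd ⟨w, hw⟩ hN⟩
  obtain ⟨w₀, hw₀⟩ := hN
  refine ⟨τ s(u, w₀), ?_⟩
  rintro _ rfl w hw
  obtain ⟨P, hPH, hbd, hPu⟩ := exists_link hK hw hw₀ (hr w w₀ hw hw₀)
  have := hτ _ rfl P ⟨hPH, hbd.trans (ZModModule.add_self _)⟩
  simpa only [hPu _ hu, mul_add, sum_add_distrib, sum_mul_edgeVec_left, CharTwo.add_eq_zero]
    using this

theorem starsLinked_pair {H K : SimpleGraph V} (hK : K ≤ H) {x y : V} (hxy : H.Adj x y)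
    (hx : ∀ w, ¬ K.Adj x w) (hy : ∀ w, ¬ K.Adj y w) (hx' : ∃ w ≠ y, H.Adj x w)
    (hy' : ∃ w ≠ x, H.Adj y w)
    (hr : ∀ w₁ w₂, w₁ ≠ y → w₂ ≠ x → H.Adj x w₁ → H.Adj y w₂ → K.Reachable w₁ w₂) :
    StarsLinked H {x, y} := by
  intro τ hτ
  have hlink (w₁ w₂ : V) (h₁ : w₁ ≠ y) (h₂ : w₂ ≠ x) (ha₁ : H.Adj x w₁) (ha₂ : H.Adj y w₂) :
      τ s(x, w₁) = τ s(x, y) ∧ τ s(y, w₂) = τ s(x, y) := by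
    obtain ⟨P, hPH, hbd, hPu⟩ := exists_link hK ha₁ ha₂ (hr w₁ w₂ h₁ h₂ ha₁ ha₂)
    have hP : P + edgeVec x y ∈ cycleSpace H := by
      refine ⟨fun u w huw => by simp [hPH u w huw, edgeVec_of_not_adj hxy huw], ?_⟩
      rw [map_add, hbd, boundary_edgeVec hxy.ne, ZModModule.add_self]
    have hxP := hτ x (by simp) _ hP
    have hyP := hτ y (by simp) _ hP
    have hx₂ (w : V) : edgeVec y w₂ s(x, w) = 0 := edgeVec_of_notMem hxy.ne h₂.symm
    have hy₁ (w : V) : edgeVec x w₁ s(y, w) = 0 := edgeVec_of_notMem hxy.ne' h₁.symm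
    simp only [Pi.add_apply, hPu x hx, hPu y hy, hx₂, hy₁, mul_add, add_zero, zero_add,
      sum_add_distrib, sum_mul_edgeVec_left, sum_mul_edgeVec_right, CharTwo.add_eq_zero] at hxP hyP
    exact ⟨hxP, by rw [hyP, Sym2.eq_swap]⟩
  obtain ⟨x', hx'y, hx'⟩ := hx'
  obtain ⟨y', hy'x, hy'⟩ := hy'
  refine ⟨τ s(x, y), ?_⟩
  rintro u (rfl | rfl) w hw
  · by_cases hwy : w = y
    · rw [hwy]
    · exact (hlink w y' hwy hy'x hw hy').1
  · by_cases hwx : w = x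
    · rw [hwx, Sym2.eq_swap]
    · exact (hlink x' w hx'y hwx hx' hw).2

variable {ι : Type} {G : SimpleGraph V} {s : Finset ι} {b : ι → EdgeSpace V}

/-- The members of a family of faces that do not touch the vertex set `S`. -/
def avoiding (s : Finset ι) (b : ι → EdgeSpace V) (S : Set V) : Finset ι :=
  {i ∈ s | ∀ u ∈ S, ∀ w, b i s(u, w) = 0}

theorem avoiding_subset (s : Finset ι) (b : ι → EdgeSpace V) (S : Set V) : avoiding s b S ⊆ s :=
  filter_subset _ _

/-- If an edge lies in two faces and the combination `∑ Uᵢ bᵢ` avoids it, both faces have the same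
coefficient. This defines a weight `τ` on the edges orthogonal to all faces. -/
theorem IsTwoBasis.exists_edge_weight (hb : IsTwoBasis G s b)
    (U : ι → ZMod 2) : ∃ τ : Sym2 V → ZMod 2,
      ∀ e, (∑ i ∈ s, U i • b i) e = 0 → ∀ i ∈ s, b i e ≠ 0 → U i = τ e := by
  suffices h : ∀ e, ∃ t, (∑ i ∈ s, U i • b i) e = 0 → ∀ i ∈ s, b i e ≠ 0 → U i = t by
    choose τ hτ using h
    exact ⟨τ, hτ⟩
  intro e
  by_cases hex : ∃ i ∈ s, b i e ≠ 0
  swap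
  · exact ⟨0, fun _ i hi hne => absurd ⟨i, hi, hne⟩ hex⟩
  obtain ⟨i, hi, hie⟩ := hex
  refine ⟨U i, fun he j hj hje => ?_⟩
  by_contra hne
  have hji : j ≠ i := fun h => hne (h ▸ rfl)
  have hpair : ({i ∈ s | b i e ≠ 0} : Finset ι) = {i, j} := by
    refine (eq_of_subset_of_card_le ?_ ?_).symm
    · simp [insert_subset_iff, hi, hj, hie, hje]
    · rw [card_pair hji.symm]
      exact hb.coverage_le_two e
  have hsupp : (∑ k ∈ s, U k • b k) e = ∑ k ∈ {i, j}, U k * b k e := by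
    rw [← hpair, sum_filter, Finset.sum_apply]
    exact sum_congr rfl fun k _ => by by_cases hk : b k e = 0 <;> simp [hk]
  rw [he, sum_pair hji.symm, zmod_two_eq_one hie, zmod_two_eq_one hje, mul_one, mul_one, eq_comm,
    CharTwo.add_eq_zero] at hsupp
  exact hne hsupp.symm

theorem IsTwoBasis.isolate_of_starsLinked (hb : IsTwoBasis G s b) (hsum : ∑ i ∈ s, b i = 0)
    {S : Set V} (hS : StarsLinked G S) : IsTwoBasis (isolate G S) (avoiding s b S) b := by
  refine .of_exists_sum_eq (fun i hi => ?_) (fun z hz => ?_) fun e =>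
    (coverage_mono (avoiding_subset s b S) b e).trans (hb.coverage_le_two e)
  · obtain ⟨hi, hiS⟩ := mem_filter.mp hi
    exact mem_cycleSpace_isolate (hb.mem_cycleSpace hi) hiS
  obtain ⟨U, rfl⟩ := hb.exists_sum_eq (cycleSpace_mono (isolate_le G S) hz)
  obtain ⟨τ, hτ⟩ := hb.exists_edge_weight U
  have hUτ {u : V} (hu : u ∈ S) (w : V) {i : ι} (hi : i ∈ s) :
      U i * b i s(u, w) = τ s(u, w) * b i s(u, w) := by
    by_cases h0 : b i s(u, w) = 0
    · simp [h0]
    · rw [hτ _ (hz.1 u w fun h => h.2.1 hu) i hi h0]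
  obtain ⟨c, hc⟩ := hS τ fun u hu P hP => by
    obtain ⟨a, rfl⟩ := hb.exists_sum_eq hP
    simp only [Finset.sum_apply, Pi.smul_apply, smul_eq_mul, mul_sum]
    rw [sum_comm]
    refine sum_eq_zero fun i hi => ?_
    calc ∑ w, τ s(u, w) * (a i * b i s(u, w)) = ∑ w, a i * (U i * b i s(u, w)) :=
          sum_congr rfl fun w _ => by rw [hUτ hu w hi]; ring
      _ = 0 := by rw [← mul_sum, ← mul_sum, sum_apply_of_mem_cycleSpace (hb.mem_cycleSpace hi),
          mul_zero, mul_zero]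
  have hUc {i : ι} (hi : i ∈ s) (hi' : i ∉ avoiding s b S) : U i = c := by
    obtain ⟨u, hu, w, hw⟩ : ∃ u ∈ S, ∃ w, b i s(u, w) ≠ 0 := by
      by_contra! h
      exact hi' (mem_filter.mpr ⟨hi, h⟩)
    rw [hτ _ (hz.1 u w fun h => h.2.1 hu) i hi hw,
      hc u hu w (adj_of_mem_cycleSpace (hb.mem_cycleSpace hi) hw)]
  refine ⟨fun i => U i - c, ?_⟩
  calc ∑ i ∈ avoiding s b S, (U i - c) • b i = ∑ i ∈ s, (U i - c) • b i :=
        sum_subset (avoiding_subset s b S) fun i hi hi' => by simp [hUc hi hi']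
    _ = ∑ i ∈ s, U i • b i := by simp [sub_smul, sum_sub_distrib, ← smul_sum, hsum]

end StarsLinked

section Contract

variable {V : Type*} {G : SimpleGraph V} {x y : V}

theorem isolate_deleteEdges_contractEdge (hxy : x ≠ y) (E : Set (Sym2 V)) :
    isolate ((contractEdge G x y).deleteEdges E) {x} = isolate (G.deleteEdges E) {x, y} := by
  ext u w
  simp only [isolate, deleteEdges_adj, contractEdge_adj hxy, Set.mem_singleton_iff,
    Set.mem_insert_iff, not_or]
  constructor
  · rintro ⟨⟨⟨-, huy, hwy, h | ⟨h, -⟩ | ⟨h, -⟩⟩, hE⟩, hux, hwx⟩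
    · exact ⟨⟨h, hE⟩, ⟨hux, huy⟩, hwx, hwy⟩
    · exact absurd h hux
    · exact absurd h hwx
  · rintro ⟨⟨h, hE⟩, ⟨hux, huy⟩, hwx, hwy⟩
    exact ⟨⟨⟨h.ne, huy, hwy, .inl h⟩, hE⟩, hux, hwx⟩

theorem isolate_contractEdge (hxy : x ≠ y) :
    isolate (contractEdge G x y) {x} = isolate G {x, y} := by
  simpa using isolate_deleteEdges_contractEdge (G := G) hxy ∅

theorem triangle_apply_of_notMem {v u w : V} (hu : u ∉ ({x, y} : Set V))
    (hw : w ∉ ({x, y} : Set V)) : triangle x y v s(u, w) = 0 := by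
  simp only [Set.mem_insert_iff, Set.mem_singleton_iff, not_or] at hu hw
  apply triangle_of_ne <;> rw [Ne, Sym2.eq_iff] <;> tauto

end Contract

section Product

variable {V : Type*} [Fintype V] {G H : SimpleGraph V} {ι κ : Type} {s : Finset ι}
  {b : ι → EdgeSpace V}

theorem sum_mul_triangle {x y w : V} (hxy : x ≠ y) (hw : w ∉ ({x, y} : Finset V)) (c : V → ZMod 2) :
    ∑ v ∈ {x, y}ᶜ, c v * triangle x y v s(y, w) = c w := by
  have hw' : w ≠ x ∧ w ≠ y := by simpa using hw
  have hterm (v : V) (hv : v ∈ ({x, y}ᶜ : Finset V)) :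
      c v * triangle x y v s(y, w) = if v = w then c v else 0 := by
    have hv' : v ≠ x ∧ v ≠ y := by simpa using hv
    split_ifs with hvw
    · rw [hvw, triangle_rotate, triangle_apply_edge hxy.symm hw'.1, mul_one]
    · rw [triangle_of_ne, mul_zero] <;> rw [Ne, Sym2.eq_iff] <;> tauto
  rw [sum_congr rfl hterm, sum_ite_eq', if_pos (by simpa using hw)]

/-- The image of an edge vector under contraction of `xy` into `x`, obtained by adding the triangles
on `xy` that empty the star of `y`. -/
def contractVec (x y : V) (z : EdgeSpace V) : EdgeSpace V :=
  z + ∑ v ∈ {x, y}ᶜ, z s(y, v) • triangle x y v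

theorem contractVec_apply (x y : V) (z : EdgeSpace V) (e : Sym2 V) :
    contractVec x y z e = z e + ∑ v ∈ {x, y}ᶜ, z s(y, v) * triangle x y v e := by
  simp [contractVec, Finset.sum_apply]

theorem contractVec_of_notMem {x y u w : V} (z : EdgeSpace V) (hu : u ∉ ({x, y} : Set V))
    (hw : w ∉ ({x, y} : Set V)) : contractVec x y z s(u, w) = z s(u, w) := by
  simp [contractVec_apply, triangle_apply_of_notMem hu hw]

theorem contractVec_left {x y w : V} (hxy : x ≠ y) (z : EdgeSpace V)
    (hw : w ∉ ({x, y} : Finset V)) :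
    contractVec x y z s(x, w) = z s(x, w) + z s(y, w) := by
  rw [pair_comm] at hw
  simp only [contractVec_apply, triangle_swap x y, pair_comm x y, sum_mul_triangle hxy.symm hw]

theorem contractVec_right {x y w : V} (hxy : x ≠ y) (z : EdgeSpace V)
    (hw : w ∉ ({x, y} : Finset V)) : contractVec x y z s(y, w) = 0 := by
  rw [contractVec_apply, sum_mul_triangle hxy hw, CharTwo.add_self_eq_zero]

theorem contractVec_contracted {x y : V} (hxy : x ≠ y) {z : EdgeSpace V} (hz : z ∈ cycleSpace G) :
    contractVec x y z s(x, y) = 0 := by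
  have htri (v : V) (hv : v ∈ ({x, y}ᶜ : Finset V)) :
      z s(y, v) * triangle x y v s(x, y) = z s(y, v) := by
    have hv' : v ≠ x ∧ v ≠ y := by simpa using hv
    rw [triangle_apply_edge hv'.1.symm hv'.2.symm, mul_one]
  rw [contractVec_apply, sum_congr rfl htri, ← sum_apply_of_mem_cycleSpace hz y,
    ← sum_add_sum_compl {x, y}, sum_pair hxy, apply_diag_of_mem_cycleSpace hz, add_zero,
    Sym2.eq_swap]

theorem contractVec_diag {x y : V} (hxy : x ≠ y) {z : EdgeSpace V} (hz : z ∈ cycleSpace G) (u : V) :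
    contractVec x y z s(u, u) = 0 := by
  rw [contractVec_apply, apply_diag_of_mem_cycleSpace hz, zero_add]
  refine sum_eq_zero fun v hv => ?_
  have hv' : v ≠ x ∧ v ≠ y := by simpa using hv
  rw [triangle_of_ne, mul_zero] <;> rw [Ne, Sym2.eq_iff] <;> rintro (⟨rfl, h⟩ | ⟨rfl, h⟩) <;> tauto

theorem boundary_contractVec {x y : V} (hxy : x ≠ y) (z : EdgeSpace V) :
    boundary (contractVec x y z) = boundary z := by
  rw [contractVec, map_add, map_sum, add_eq_left]
  refine sum_eq_zero fun v hv => ?_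
  have hv' : v ≠ x ∧ v ≠ y := by simpa using hv
  rw [map_smul, boundary_triangle hxy hv'.1.symm hv'.2.symm, smul_zero]

theorem contractVec_mem_cycleSpace {x y : V} (hxy : x ≠ y) {z : EdgeSpace V}
    (hz : z ∈ cycleSpace G) : contractVec x y z ∈ cycleSpace (contractEdge G x y) := by
  have hstar (u w : V) (hu : u ∈ ({x, y} : Set V)) (hw : w ∉ ({x, y} : Set V))
      (hne : contractVec x y z s(u, w) ≠ 0) : (contractEdge G x y).Adj u w := by
    have hw' : w ≠ x ∧ w ≠ y := by simpa using hw
    obtain rfl | rfl := hu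
    · rw [contractVec_left hxy z (by simpa using hw)] at hne
      refine (contractEdge_adj hxy).mpr ⟨hw'.1.symm, hxy, hw'.2, ?_⟩
      by_contra! hnot
      exact hne (by rw [hz.1 _ _ hnot.1, hz.1 _ _ (hnot.2.1 rfl), add_zero])
    · exact absurd (contractVec_right hxy z (by simpa using hw)) hne
  refine ⟨fun u w huw => ?_, (boundary_contractVec hxy z).trans hz.2⟩
  by_contra hne
  apply huw
  by_cases hu : u ∈ ({x, y} : Set V) <;> by_cases hw : w ∈ ({x, y} : Set V)
  · obtain rfl | rfl := hu <;> obtain rfl | rfl := hw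
    · exact absurd (contractVec_diag hxy hz _) hne
    · exact absurd (contractVec_contracted hxy hz) hne
    · exact absurd (Sym2.eq_swap ▸ contractVec_contracted hxy hz) hne
    · exact absurd (contractVec_diag hxy hz _) hne
  · exact hstar u w hu hw hne
  · exact (hstar w u hw hu (Sym2.eq_swap ▸ hne)).symm
  · have hu' : u ≠ x ∧ u ≠ y := by simpa using hu
    have hw' : w ≠ x ∧ w ≠ y := by simpa using hw
    rw [contractVec_of_notMem z hu hw] at hne
    have hadj := adj_of_mem_cycleSpace hz hne
    exact (contractEdge_adj hxy).mpr ⟨hadj.ne, hu'.2, hw'.2, .inl hadj⟩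

theorem mul_mem_cycleSpace_of_coverage_le_one (hb : IsTwoBasis G s b)
    (hcov : ∀ e, coverage s b e ≤ 1) {z z' : EdgeSpace V} (hz : z ∈ cycleSpace G)
    (hz' : z' ∈ cycleSpace G) : z * z' ∈ cycleSpace G := by
  obtain ⟨c, rfl⟩ := hb.exists_sum_eq hz
  obtain ⟨d, rfl⟩ := hb.exists_sum_eq hz'
  have hmul (i : ι) (hi : i ∈ s) (j : ι) (hj : j ∈ s) :
      b i * b j = if i = j then b i else 0 := by
    ext e
    split_ifs with hij
    · subst hij
      by_cases h : b i e = 0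
      · simp [h]
      · simp [zmod_two_eq_one h]
    · by_contra hne
      rw [Pi.mul_apply, Pi.zero_apply, mul_eq_zero, not_or] at hne
      exact hij (card_le_one.mp (hcov e) i (by simp [hi, hne.1]) j (by simp [hj, hne.2]))
  have hsum : (∑ i ∈ s, c i • b i) * ∑ j ∈ s, d j • b j = ∑ i ∈ s, (c i * d i) • b i := by
    rw [sum_mul_sum]
    refine sum_congr rfl fun i hi => ?_
    rw [sum_congr rfl fun j hj => by rw [smul_mul_smul_comm, hmul i hi j hj]]
    simp [hi]
  rw [hsum]
  exact Submodule.sum_mem _ fun i hi => Submodule.smul_mem _ _ (hb.mem_cycleSpace hi)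

theorem sum_mul_eq_zero_of_constant_off {P : EdgeSpace V} (hP : P ∈ cycleSpace G) {q : V → ZMod 2}
    {x : V} (hqx : q x = 0) (hq : ∀ v w, v ≠ x → w ≠ x → P s(v, w) ≠ 0 → q v = q w) :
    ∑ w, q w * P s(x, w) = 0 := by
  have hsq (a : ZMod 2) : a * a = a := by
    by_cases h : a = 0
    · simp [h]
    · simp [zmod_two_eq_one h]
  have hrow (v : V) : q v * P s(x, v) = ∑ w, q v * q w * P s(v, w) := by
    have hterm (w : V) : q v * P s(v, w) =
        q v * q w * P s(v, w) + if w = x then q v * P s(x, v) else 0 := by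
      by_cases hw : w = x
      · simp [hw, hqx, Sym2.eq_swap (a := x)]
      by_cases hv : v = x
      · simp [hv, hqx]
      by_cases hvw : P s(v, w) = 0
      · simp [hvw, hw]
      · simp [← hq v w hv hw hvw, hsq, hw]
    rw [eq_comm, ← CharTwo.add_eq_zero]
    calc ∑ w, q v * q w * P s(v, w) + q v * P s(x, v) = ∑ w, q v * P s(v, w) := by
          simp [sum_congr rfl fun w _ => hterm w, sum_add_distrib]
      _ = 0 := by rw [← mul_sum, sum_apply_of_mem_cycleSpace hP, mul_zero]
  rw [sum_congr rfl fun v _ => hrow v]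
  refine sum_sum_eq_zero_of_symm (fun v w => ?_) fun v => ?_
  · rw [Sym2.eq_swap, mul_comm (q v)]
  · rw [apply_diag_of_mem_cycleSpace hP, mul_zero]

theorem reachable_isolate_deleteEdges (hb : IsTwoBasis G s b) {x : V} (hG : StarsLinked G {x})
    {E : Set (Sym2 V)} (hE : ∀ e ∈ E, ∀ i ∈ s, i ∉ avoiding s b {x} → b i e = 0) {w₁ w₂ : V}
    (h₁ : G.Adj x w₁) (h₂ : G.Adj x w₂) : (isolate (G.deleteEdges E) {x}).Reachable w₁ w₂ := by
  let q (v : V) : ZMod 2 := if (isolate (G.deleteEdges E) {x}).Reachable w₁ v then 1 else 0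
  have hqx : q x = 0 :=
    if_neg fun h => notMem_of_reachable_isolate (S := {x}) h₁.ne' h rfl
  let τ : Sym2 V → ZMod 2 := Sym2.lift ⟨fun u w => q u + q w, fun u w => add_comm _ _⟩
  have hτ (w : V) : τ s(x, w) = q w := by simp [τ, hqx]
  have hface (i : ι) (hi : i ∈ s) : ∑ w, q w * b i s(x, w) = 0 := by
    by_cases hiT : i ∈ avoiding s b {x}
    · exact sum_eq_zero fun w _ => by rw [(mem_filter.mp hiT).2 x rfl w, mul_zero]
    refine sum_mul_eq_zero_of_constant_off (hb.mem_cycleSpace hi) hqx fun v w hv hw hvw => ?_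
    have hadj : (isolate (G.deleteEdges E) {x}).Adj v w :=
      ⟨deleteEdges_adj.mpr ⟨adj_of_mem_cycleSpace (hb.mem_cycleSpace hi) hvw,
        fun he => hvw (hE _ he i hi hiT)⟩, hv, hw⟩
    simp only [q, show (isolate (G.deleteEdges E) {x}).Reachable w₁ v ↔
      (isolate (G.deleteEdges E) {x}).Reachable w₁ w from
      ⟨fun h => h.trans hadj.reachable, fun h => h.trans hadj.symm.reachable⟩]
  obtain ⟨c, hc⟩ := hG τ <| by
    rintro _ rfl P hP
    obtain ⟨a, rfl⟩ := hb.exists_sum_eq hP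
    simp only [hτ, Finset.sum_apply, Pi.smul_apply, smul_eq_mul, mul_sum]
    rw [sum_comm]
    exact sum_eq_zero fun i hi => by
      rw [sum_congr rfl fun w _ => mul_left_comm _ _ _, ← mul_sum, hface i hi, mul_zero]
  have heq : q w₂ = q w₁ := by rw [← hτ, ← hτ, hc x rfl w₁ h₁, hc x rfl w₂ h₂]
  by_contra hn
  simp [q, hn] at heq

end Product

section Exchange

variable {V : Type*} [Fintype V] {G H K R : SimpleGraph V} {x y : V} {ι κ : Type} {s T : Finset ι}
  {b : ι → EdgeSpace V} {t t₀ : Finset κ} {a : κ → EdgeSpace V} {E : Set (Sym2 V)}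

/-- The edges lying in at least two members of a family of faces. -/
def doublyCovered (s : Finset ι) (b : ι → EdgeSpace V) : Set (Sym2 V) := {e | 2 ≤ coverage s b e}

theorem IsTwoBasis.mem_edgeSet_of_mem_doublyCovered (hb : IsTwoBasis G s b) {e : Sym2 V}
    (he : e ∈ doublyCovered s b) : e ∈ G.edgeSet := by
  induction e with
  | h u w =>
    by_contra hn
    exact absurd he (by simp [doublyCovered, hb.coverage_eq_zero hn])

theorem IsTwoBasis.notMem_of_mem_doublyCovered {S : Set V} (hb : IsTwoBasis (isolate G S) s b)
    {e : Sym2 V} (he : e ∈ doublyCovered s b) {v : V} (hv : v ∈ e) : v ∉ S := by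
  have hadj := hb.mem_edgeSet_of_mem_doublyCovered he
  induction e with
  | h u w => obtain rfl | rfl := Sym2.mem_iff.mp hv <;> [exact hadj.2.1; exact hadj.2.2]

theorem IsTwoBasis.apply_eq_zero_of_mem_doublyCovered (hb : IsTwoBasis G s b) (hT : T ⊆ s)
    {e : Sym2 V} (he : e ∈ doublyCovered T b) {i : ι} (hi : i ∈ s) (hiT : i ∉ T) : b i e = 0 := by
  have heq : ({i ∈ T | b i e ≠ 0} : Finset ι) = {i ∈ s | b i e ≠ 0} :=
    eq_of_subset_of_card_le (filter_subset_filter _ hT) ((hb.coverage_le_two e).trans he)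
  by_contra hne
  exact hiT (mem_filter.mp (heq ▸ mem_filter.mpr ⟨hi, hne⟩)).1

/-- Every member of the second family that is removed is spanned by the first one, and the removed
members cover the edges covered once by the first family. -/
theorem IsTwoBasis.hasTwoBasis_of_exchange (hb : IsTwoBasis K T b) (ha : IsTwoBasis R t a)
    (hK : K ≤ G) (hR : R ≤ G) (hspan : cycleSpace G ≤ cycleSpace R ⊔ cycleSpace K)
    (ht₀ : ∀ j ∈ t₀, a j ∈ cycleSpace K)
    (hone : ∀ e, coverage T b e = 1 → ∃ j ∈ t, j ∈ t₀ ∧ a j e ≠ 0)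
    (htwo : ∀ e, 2 ≤ coverage T b e → coverage t a e = 0) : HasTwoBasis G := by
  refine hasTwoBasis_of_union (s := T) (t := t \ t₀) (a := b) (b := a) (le_antisymm ?_ ?_)
    fun e => ?_
  · rw [hb.span_eq]
    refine sup_le (cycleSpace_mono hK) (Submodule.span_le.mpr ?_)
    rintro _ ⟨j, hj, rfl⟩
    exact cycleSpace_mono hR (ha.mem_cycleSpace (mem_sdiff.mp hj).1)
  · refine hspan.trans (sup_le ?_ (hb.span_eq ▸ le_sup_left))
    rw [← ha.span_eq, Submodule.span_le]
    rintro _ ⟨j, hj, rfl⟩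
    by_cases hj₀ : j ∈ t₀
    · exact Submodule.mem_sup_left (hb.span_eq ▸ ht₀ j hj₀)
    · exact Submodule.mem_sup_right (Submodule.subset_span ⟨j, mem_sdiff.mpr ⟨hj, hj₀⟩, rfl⟩)
  · have hle := coverage_mono (sdiff_subset (s := t) (t := t₀)) a e
    have := ha.coverage_le_two e
    have := hb.coverage_le_two e
    obtain h2 | h2 := le_or_gt 2 (coverage T b e)
    · have := htwo e h2
      omega
    obtain h0 | h1 : coverage T b e = 0 ∨ coverage T b e = 1 := by omega
    · omega
    obtain ⟨j, hj, hj₀, hje⟩ := hone e h1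
    have hle' := coverage_mono (s := t \ t₀) (t := t.erase j) (fun k hk =>
      mem_erase.mpr ⟨fun hkj => (mem_sdiff.mp hk).2 (hkj ▸ hj₀), (mem_sdiff.mp hk).1⟩) a e
    have := ha.coverage_erase_le_one hj hje
    omega

theorem IsTwoBasis.cycleSpace_le_sup (hb : IsTwoBasis (contractEdge G x y) s b) (hxy : x ≠ y)
    (hT : IsTwoBasis (isolate G {x, y}) T b) (hTs : T ⊆ s) :
    cycleSpace G ≤
      cycleSpace (G.deleteEdges (doublyCovered T b)) ⊔ cycleSpace (isolate G {x, y}) := by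
  intro z hz
  obtain ⟨c, hc⟩ := hb.exists_sum_eq (contractVec_mem_cycleSpace hxy hz)
  have hr : ∑ i ∈ T, c i • b i ∈ cycleSpace (isolate G {x, y}) :=
    Submodule.sum_mem _ fun i hi => Submodule.smul_mem _ _ (hT.mem_cycleSpace hi)
  rw [← sub_add_cancel z (∑ i ∈ T, c i • b i)]
  refine add_mem (Submodule.mem_sup_left (mem_cycleSpace_deleteEdges
    (sub_mem hz (cycleSpace_mono (isolate_le _ _) hr)) fun e he => ?_)) (Submodule.mem_sup_right hr)
  have hze : contractVec x y z e = z e := by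
    induction e with
    | h u w =>
      exact contractVec_of_notMem z (hT.notMem_of_mem_doublyCovered he (Sym2.mem_mk_left u w))
        (hT.notMem_of_mem_doublyCovered he (Sym2.mem_mk_right u w))
  rw [Pi.sub_apply, sub_eq_zero, ← hze, ← hc, Finset.sum_apply, Finset.sum_apply]
  exact (sum_subset hTs fun i hi hiT => by
    simp [hb.apply_eq_zero_of_mem_doublyCovered hTs he hi hiT]).symm

theorem IsTwoBasis.sum_mem_cycleSpace_isolate_deleteEdges {S : Set V}
    (hb : IsTwoBasis (isolate G S) s b) :
    ∑ i ∈ s, b i ∈ cycleSpace (isolate (G.deleteEdges (doublyCovered s b)) S) := by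
  have hmem : ∑ i ∈ s, b i ∈ cycleSpace (isolate G S) :=
    Submodule.sum_mem _ fun i => hb.mem_cycleSpace
  refine mem_cycleSpace_isolate (mem_cycleSpace_deleteEdges
    (cycleSpace_mono (isolate_le G S) hmem) fun e he => ?_) fun v hv w =>
    hmem.1 v w fun hadj => hadj.2.1 hv
  rw [Finset.sum_apply, ← natCast_coverage, (hb.coverage_le_two e).antisymm he]
  rfl

/-- The boundary of the family `T` is a sum of faces of `G` without the doubly covered edges; the
family itself replaces these faces. -/
theorem IsTwoBasis.hasTwoBasis_of_deleteEdges (hb : IsTwoBasis (contractEdge G x y) s b)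
    (hxy : x ≠ y) (hT : IsTwoBasis (isolate G {x, y}) T b) (hTs : T ⊆ s)
    (hR : HasTwoBasis (G.deleteEdges (doublyCovered T b)))
    (hlink : StarsLinked (G.deleteEdges (doublyCovered T b)) {x, y}) : HasTwoBasis G := by
  obtain ⟨κ, t, a, ha, hsum⟩ := hR.exists_sum_eq_zero
  have hA := ha.isolate_of_starsLinked hsum hlink
  obtain ⟨W, hW⟩ := hA.exists_sum_eq hT.sum_mem_cycleSpace_isolate_deleteEdges
  refine hT.hasTwoBasis_of_exchange (t₀ := {j ∈ avoiding t a {x, y} | W j ≠ 0}) ha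
    (isolate_le _ _) (deleteEdges_le _) (hb.cycleSpace_le_sup hxy hT hTs) (fun j hj => ?_)
    (fun e he => ?_) fun e he => ?_
  · refine cycleSpace_mono (fun u w huw => ?_) (hA.mem_cycleSpace (mem_filter.mp hj).1)
    exact ⟨(deleteEdges_adj.mp huw.1).1, huw.2⟩
  · by_contra! hnot
    have hone : (∑ i ∈ T, b i) e = 1 := by
      rw [Finset.sum_apply, ← natCast_coverage, he, Nat.cast_one]
    rw [← hW, Finset.sum_apply, sum_eq_zero fun j hj => ?_] at hone
    · exact zero_ne_one hone
    by_cases hWj : W j = 0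
    · simp [hWj]
    · simp [hnot j (avoiding_subset _ _ _ hj) (mem_filter.mpr ⟨hj, hWj⟩)]
  · induction e with
    | h u w => exact ha.coverage_eq_zero fun hadj => (deleteEdges_adj.mp hadj).2 he

end Exchange

namespace IsMinimalCounterexample

variable {V : Type*} [Fintype V] {G : SimpleGraph V} {x y : V}

theorem starsLinked_contractEdge (h : IsMinimalCounterexample G) (hxy : G.Adj x y) :
    StarsLinked (contractEdge G x y) {x} := by
  have hN {w : V} (hw : (contractEdge G x y).Adj x w) :
      w ∉ ({x, y} : Set V) ∧ (G.Adj x w ∨ G.Adj y w) := by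
    obtain ⟨hne, -, hwy, h | ⟨-, h⟩ | ⟨hwx, -⟩⟩ := (contractEdge_adj hxy.ne).mp hw
    · exact ⟨by simp [hne.symm, hwy], .inl h⟩
    · exact ⟨by simp [hne.symm, hwy], .inr h⟩
    · exact absurd hwx hne.symm
  refine starsLinked_singleton (K := isolate (contractEdge G x y) {x}) (isolate_le _ _)
    (fun w hw => hw.2.1 rfl) fun w₁ w₂ h₁ h₂ => ?_
  rw [isolate_contractEdge hxy.ne]
  exact h.reachable_isolate hxy (hN h₁).1 (hN h₂).1 (hN h₁).2 (hN h₂).2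

theorem starsLinked_deleteEdges (h : IsMinimalCounterexample G) (hxy : G.Adj x y)
    {E : Set (Sym2 V)} (hE : ∀ e ∈ E, ∀ v ∈ e, v ∉ ({x, y} : Set V))
    (hr : ∀ w₁ w₂, (contractEdge G x y).Adj x w₁ → (contractEdge G x y).Adj x w₂ →
      (isolate (G.deleteEdges E) {x, y}).Reachable w₁ w₂) :
    StarsLinked (G.deleteEdges E) {x, y} := by
  have hadj {u w : V} (hu : u ∈ ({x, y} : Set V)) (huw : G.Adj u w) : (G.deleteEdges E).Adj u w :=
    deleteEdges_adj.mpr ⟨huw, fun he => hE _ he u (by simp) hu⟩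
  obtain ⟨x', hx', -, hxx'⟩ := h.exists_third_neighbor hxy y
  obtain ⟨y', hy', -, hyy'⟩ := h.exists_third_neighbor hxy.symm x
  refine starsLinked_pair (isolate_le _ {x, y}) (hadj (by simp) hxy)
    (fun w hw => hw.2.1 (by simp)) (fun w hw => hw.2.1 (by simp))
    ⟨x', hx', hadj (by simp) hxx'⟩ ⟨y', hy', hadj (by simp) hyy'⟩ fun w₁ w₂ h₁ h₂ ha₁ ha₂ => ?_
  have ha₁ := (deleteEdges_adj.mp ha₁).1
  have ha₂ := (deleteEdges_adj.mp ha₂).1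
  exact hr w₁ w₂ ((contractEdge_adj hxy.ne).mpr ⟨ha₁.ne, hxy.ne, h₁, .inl ha₁⟩)
    ((contractEdge_adj hxy.ne).mpr ⟨h₂.symm, hxy.ne, ha₂.ne', .inr (.inl ⟨rfl, ha₂⟩)⟩)

theorem exists_isTwoBasis_isolate_coverage_le_one (h : IsMinimalCounterexample G)
    (hxy : G.Adj x y) : ∃ (ι : Type) (s : Finset ι) (b : ι → EdgeSpace V),
      IsTwoBasis (isolate G {x, y}) s b ∧ ∀ e, coverage s b e ≤ 1 := by
  obtain ⟨ι, s, b, hb, hsum⟩ := (h.hasTwoBasis_contractEdge hxy).exists_sum_eq_zero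
  have hC := h.starsLinked_contractEdge hxy
  have hTs := avoiding_subset s b {x}
  have hT : IsTwoBasis (isolate G {x, y}) (avoiding s b {x}) b :=
    isolate_contractEdge hxy.ne ▸ hb.isolate_of_starsLinked hsum hC
  refine ⟨ι, avoiding s b {x}, b, hT, ?_⟩
  by_contra! hcov
  obtain ⟨e₀, he₀⟩ := hcov
  refine h.not_hasTwoBasis (hb.hasTwoBasis_of_deleteEdges hxy.ne hT hTs ?_ ?_)
  · induction e₀ with
    | h u w =>
      exact h.hasTwoBasis_of_le (deleteEdges_le _) (hT.mem_edgeSet_of_mem_doublyCovered he₀).1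
        fun hadj => (deleteEdges_adj.mp hadj).2 he₀
  · refine h.starsLinked_deleteEdges hxy
      (fun e he v hv => hT.notMem_of_mem_doublyCovered he hv) fun w₁ w₂ h₁ h₂ => ?_
    rw [← isolate_deleteEdges_contractEdge hxy.ne]
    exact reachable_isolate_deleteEdges hb hC (fun e he i hi hiT =>
      hb.apply_eq_zero_of_mem_doublyCovered hTs he hi hiT) h₁ h₂

theorem mul_mem_cycleSpace (h : IsMinimalCounterexample G) (hxy : G.Adj x y) {z z' : EdgeSpace V}
    (hz : z ∈ cycleSpace (isolate G {x, y})) (hz' : z' ∈ cycleSpace (isolate G {x, y})) :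
    z * z' ∈ cycleSpace (isolate G {x, y}) := by
  obtain ⟨ι, s, b, hb, hcov⟩ := h.exists_isTwoBasis_isolate_coverage_le_one hxy
  exact mul_mem_cycleSpace_of_coverage_le_one hb hcov hz hz'

end IsMinimalCounterexample

section LongestPaths

variable {V : Type*} {K : SimpleGraph V}

/-- `p` is a path of maximal length among all paths of the graph. -/
def IsLongestPath {u t : V} (p : K.Walk u t) : Prop :=
  p.IsPath ∧ ∀ (u' t' : V) (p' : K.Walk u' t'), p'.IsPath → p'.length ≤ p.length

theorem IsLongestPath.mem_support {u t c : V} {p : K.Walk u t} (hp : IsLongestPath p)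
    (hc : K.Adj u c) : c ∈ p.support := by
  by_contra h
  simpa using hp.2 _ _ _ (hp.1.cons h : (Walk.cons hc.symm p).IsPath)

theorem IsLongestPath.reroute {u z q t : V} {p : K.Walk u z} {hzq : K.Adj z q} {r : K.Walk q t}
    (h : IsLongestPath (p.append (.cons hzq r))) (huq : K.Adj u q) :
    IsLongestPath (p.reverse.append (.cons huq r)) := by
  refine ⟨?_, fun u' t' p' hp' => (h.2 u' t' p' hp').trans_eq (by simp)⟩
  have := h.1
  rw [Walk.isPath_def, Walk.support_append, Walk.support_cons, List.tail_cons] at this ⊢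
  rwa [Walk.support_reverse, (p.support.reverse_perm.append_right _).nodup_iff]

theorem exists_eq_append_cons_last {u t : V} (p : K.Walk u t) {S : Set V}
    (hS : ∃ c ∈ p.support.tail, c ∈ S) :
    ∃ (z q : V) (p₁ : K.Walk u z) (hzq : K.Adj z q) (p₂ : K.Walk q t),
      p = p₁.append (.cons hzq p₂) ∧ q ∈ S ∧ ∀ c ∈ p₂.support.tail, c ∉ S := by
  induction p with
  | nil => simp at hS
  | @cons u v t huv p ih =>
    by_cases hp : ∃ c ∈ p.support.tail, c ∈ S
    · obtain ⟨z, q, p₁, hzq, p₂, rfl, hq⟩ := ih hp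
      exact ⟨z, q, .cons huv p₁, hzq, p₂, rfl, hq⟩
    · push Not at hp
      obtain ⟨c, hc, hcS⟩ := hS
      rw [Walk.support_cons, List.tail_cons, ← Walk.cons_tail_support] at hc
      obtain rfl : c = v := (List.mem_cons.mp hc).resolve_right fun h => hp c h hcS
      exact ⟨u, c, .nil, huv, p, rfl, hcS, hp⟩

/-- Close the path with the edge from its first vertex to the farthest neighbour of it. -/
theorem IsLongestPath.exists_isCycle {u t a b : V} {p : K.Walk u t} (hp : IsLongestPath p)
    (hab : a ≠ b) (ha : K.Adj u a) (hb : K.Adj u b) :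
    ∃ (z q : V) (p₁ : K.Walk u z) (hzq : K.Adj z q) (p₂ : K.Walk q t) (hqu : K.Adj q u),
      p = p₁.append (.cons hzq p₂) ∧ (Walk.cons hqu (p₁.concat hzq)).IsCycle ∧
        ∀ c, K.Adj u c → c ∈ (Walk.cons hqu (p₁.concat hzq)).support := by
  have hnbr {c : V} (hc : K.Adj u c) : c ∈ p.support.tail := by
    have := hp.mem_support hc
    rw [← Walk.cons_tail_support] at this
    exact (List.mem_cons.mp this).resolve_left hc.ne'
  obtain ⟨z, q, p₁, hzq, p₂, rfl, huq, hlast⟩ :=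
    exists_eq_append_cons_last p (S := {c | K.Adj u c}) ⟨a, hnbr ha, ha⟩
  have hsupp (c : V) (hc : K.Adj u c) : c ∈ (p₁.concat hzq).support := by
    have := hp.mem_support hc
    rw [Walk.support_append, Walk.support_cons, List.tail_cons, ← Walk.cons_tail_support p₂,
      List.mem_append, List.mem_cons] at this
    rw [Walk.support_concat, List.mem_append, List.mem_singleton]
    exact this.imp_right fun h => h.resolve_right fun h => hlast c h hc
  have hpath : (p₁.concat hzq).IsPath := by
    have := hp.1
    rw [← Walk.concat_append] at this
    exact this.of_append_left
  refine ⟨z, q, p₁, hzq, p₂, huq.symm, rfl, (Walk.cons_isCycle_iff _ _).mpr ⟨hpath, fun he => ?_⟩,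
    fun c hc => List.mem_cons_of_mem _ (hsupp c hc)⟩
  have hq : q ∉ p₁.support := ((Walk.concat_isPath_iff hzq).mp hpath).2
  rw [Walk.edges_concat, List.concat_eq_append, List.mem_append, List.mem_singleton] at he
  obtain he | he := he
  · exact hq (p₁.fst_mem_support_of_mem_edges he)
  obtain rfl : u = z := by simpa [hzq.ne'] using he
  obtain rfl := (Walk.isPath_iff_nil.mp hp.1.of_append_left).eq_nil
  have hone (c : V) (hc : K.Adj u c) : c = q := by simpa [hc.ne'] using hsupp c hc
  exact hab ((hone a ha).trans (hone b hb).symm)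

end LongestPaths

section ThetaFree

variable {V : Type*} {K : SimpleGraph V}

/-- The cycle space is closed under intersection. Equivalently, any two cycles share at most a
vertex, so `K` contains no subdivision of a theta graph. -/
def IsMulClosed (K : SimpleGraph V) [Fintype V] : Prop :=
  ∀ z ∈ cycleSpace K, ∀ z' ∈ cycleSpace K, z * z' ∈ cycleSpace K

variable [Fintype V]

/-- The intersection of the closed walk with the cycle formed by the two connections would be a
single path. -/
theorem IsMulClosed.not_reachable_deleteEdges (hK : IsMulClosed K) {v : V} {c : K.Walk v v}
    (hc : c.IsTrail) {a b : V} (ha : a ∈ c.support) (hb : b ∈ c.support) (hab : a ≠ b) :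
    ¬ (K.deleteEdges {e | e ∈ c.edges}).Reachable a b := by
  rintro ⟨q⟩
  have hb' : b ∈ (c.rotate a ha).support := (c.mem_support_rotate_iff a ha).mpr hb
  set p := (c.rotate a ha).takeUntil b hb'
  have hpc {e : Sym2 V} (he : e ∈ p.edges) : e ∈ c.edges :=
    (c.rotate_edges a ha).mem_iff.mp ((c.rotate a ha).edges_takeUntil_subset_edges hb' he)
  have hp : walkVec c * walkVec p = walkVec p := by
    ext e
    by_cases he : e ∈ p.edges
    · rw [Pi.mul_apply, walkVec_of_mem hc (hpc he), one_mul]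
    · rw [Pi.mul_apply, walkVec_of_notMem p he, mul_zero]
  have hq : walkVec c * walkVec q = 0 := by
    ext e
    by_cases he : e ∈ q.edges
    · have hec : e ∉ c.edges := by
        have := q.edges_subset_edgeSet he
        rw [edgeSet_deleteEdges] at this
        exact this.2
      rw [Pi.mul_apply, walkVec_of_notMem c hec, zero_mul, Pi.zero_apply]
    · rw [Pi.mul_apply, walkVec_of_notMem q he, mul_zero, Pi.zero_apply]
  have hmem := hK _ (walkVec_mem_cycleSpace c) _
    (walkVec_mem_cycleSpace (p.append (q.mapLe (K.deleteEdges_le _)).reverse))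
  have hadd : walkVec (p.append (q.mapLe (K.deleteEdges_le _)).reverse) =
      walkVec p + walkVec q := by
    ext e
    simp [walkVec]
  rw [hadd, mul_add, hp, hq, add_zero] at hmem
  have := congrFun ((boundary_walkVec p).symm.trans hmem.2) a
  simp [hab] at this

theorem IsMulClosed.mem_edges (hK : IsMulClosed K) {v : V} {c : K.Walk v v} (hc : c.IsTrail)
    {a b : V} (ha : a ∈ c.support) (hb : b ∈ c.support) (hab : K.Adj a b) : s(a, b) ∈ c.edges := by
  by_contra he
  exact hK.not_reachable_deleteEdges hc ha hb hab.ne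
    (Adj.reachable (deleteEdges_adj.mpr ⟨hab, he⟩))

theorem IsMulClosed.exists_notMem_support (hK : IsMulClosed K) {v : V} {c : K.Walk v v}
    (hc : c.IsCycle) {w : V} (hw : w ∈ c.support) {s : Finset V} (hs : 3 ≤ #s)
    (hadj : ∀ a ∈ s, K.Adj w a) : ∃ a ∈ s, a ∉ c.support := by
  by_contra! hmem
  have hsub : (s : Set V) ⊆ c.toSubgraph.neighborSet w := fun a ha => by
    rw [Subgraph.mem_neighborSet, Walk.adj_toSubgraph_iff_mem_edges]
    exact hK.mem_edges hc.isTrail hw (hmem a ha) (hadj a ha)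
  have := Set.ncard_le_ncard hsub
  rw [Set.ncard_coe_finset, hc.ncard_neighborSet_toSubgraph_eq_two hw] at this
  omega

end ThetaFree

section Comb

variable {V : Type*} [Fintype V] {G : SimpleGraph V}

namespace IsMinimalCounterexample

variable {x y : V}

theorem isMulClosed_isolate (h : IsMinimalCounterexample G) (hxy : G.Adj x y) :
    IsMulClosed (isolate G {x, y}) := fun _ hz _ hz' => h.mul_mem_cycleSpace hxy hz hz'

theorem exists_three_le_card_adj (h : IsMinimalCounterexample G) {w v : V} (hwv : G.Adj w v) :
    ∃ s : Finset V, 3 ≤ #s ∧ ∀ a ∈ s, G.Adj w a := by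
  obtain ⟨b, hbv, -, hb⟩ := h.exists_third_neighbor hwv v
  obtain ⟨c, hcv, hcb, hc⟩ := h.exists_third_neighbor hwv b
  exact ⟨{v, b, c}, (card_eq_three.mpr ⟨v, b, c, hbv.symm, hcv.symm, hcb.symm, rfl⟩).ge,
    by simp [hwv, hb, hc]⟩

/-- All neighbours of the first vertex in `isolate G {x, y}` lie on a chordless cycle through it,
so only two of its at least three neighbours do. -/
theorem adj_of_isLongestPath (h : IsMinimalCounterexample G) (hxy : G.Adj x y) {u t v : V}
    {p : (isolate G {x, y}).Walk u t} (hp : IsLongestPath p)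
    (huv : (isolate G {x, y}).Adj u v) : G.Adj u x ∨ G.Adj u y := by
  have hux : u ≠ x ∧ u ≠ y := by simpa using huv.2.1
  obtain ⟨a, b, hab, ha, hb⟩ := h.exists_pair_isolate_adj hxy hux.1 hux.2 huv.1
  obtain ⟨z, q, p₁, hzq, p₂, hqu, -, hc, hmem⟩ := hp.exists_isCycle hab ha hb
  obtain ⟨s, hs, hadj⟩ := h.exists_three_le_card_adj huv.1
  by_contra! hx
  have hK (d : V) (hd : d ∈ s) : (isolate G {x, y}).Adj u d := by
    refine ⟨hadj d hd, huv.2.1, ?_⟩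
    rintro (rfl | rfl)
    exacts [hx.1 (hadj _ hd), hx.2 (hadj _ hd)]
  obtain ⟨d, hd, hdc⟩ :=
    (h.isMulClosed_isolate hxy).exists_notMem_support hc (by simp) hs hK
  exact hdc (hmem d (hK d hd))

theorem exists_isCycle_adj_pair (h : IsMinimalCounterexample G) (hxy : G.Adj x y) {w v : V}
    (hwv : (isolate G {x, y}).Adj w v) :
    ∃ (q : V) (c : (isolate G {x, y}).Walk q q) (a b : V), c.IsCycle ∧ a ≠ b ∧
      a ∈ c.support ∧ b ∈ c.support ∧ (G.Adj a x ∨ G.Adj a y) ∧ (G.Adj b x ∨ G.Adj b y) := by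
  obtain ⟨u, t, p, hpath, hmax⟩ :=
    @Walk.exists_isPath_forall_isPath_length_le_length _ (isolate G {x, y}) ⟨w⟩ _
  have hp : IsLongestPath p := ⟨hpath, hmax⟩
  obtain ⟨v, huv⟩ : ∃ v, (isolate G {x, y}).Adj u v := by
    cases p with
    | nil => simpa using hmax _ _ _ (Walk.IsPath.nil.cons (by simpa using hwv.ne) :
        (Walk.cons hwv .nil).IsPath)
    | cons huv _ => exact ⟨_, huv⟩
  have hux : u ≠ x ∧ u ≠ y := by simpa using huv.2.1
  obtain ⟨a, b, hab, ha, hb⟩ := h.exists_pair_isolate_adj hxy hux.1 hux.2 huv.1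
  obtain ⟨z, q, p₁, hzq, p₂, hqu, rfl, hc, -⟩ := hp.exists_isCycle hab ha hb
  refine ⟨q, _, u, z, hc, ?_, by simp, by simp [Walk.support_concat],
    h.adj_of_isLongestPath hxy hp huv, h.adj_of_isLongestPath hxy (hp.reroute hqu.symm) hzq⟩
  rintro rfl
  exact ((Walk.cons_isCycle_iff _ _).mp hc).2 (by simp [Walk.edges_concat])

/-- The detour through `x` and `y` connects two vertices of the cycle. -/
theorem mem_support_or_mem_support_of_adj (h : IsMinimalCounterexample G) (hxy : G.Adj x y) {q : V}
    {c : (isolate G {x, y}).Walk q q} (hc : c.IsCycle) {a b : V} (hab : a ≠ b)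
    (ha : a ∈ c.support) (hb : b ∈ c.support) (hax : G.Adj a x ∨ G.Adj a y)
    (hbx : G.Adj b x ∨ G.Adj b y) {r s : V} (hrs : (isolate G {x, y}).Adj r s) :
    r ∈ c.support ∨ s ∈ c.support := by
  by_contra! hr
  have hrs' : ∀ v ∈ ({x, y} : Set V), v ∉ ({r, s} : Set V) := by
    rintro v hv (rfl | rfl)
    exacts [hrs.2.1 hv, hrs.2.2 hv]
  have hcrs : ∀ v ∈ c.support, v ∉ ({r, s} : Set V) := by
    rintro v hv (rfl | rfl)
    exacts [hr.1 hv, hr.2 hv]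
  have hedge (e : Sym2 V) (he : e ∈ c.edges) : e ∈ (isolate G {r, s}).edgeSet := by
    induction e with
    | h u w =>
      exact ⟨(c.adj_of_mem_edges he).1, hcrs u (c.fst_mem_support_of_mem_edges he),
        hcrs w (c.snd_mem_support_of_mem_edges he)⟩
  have hoff {u v : V} (hv : v ∈ ({x, y} : Set V)) (hu : u ∉ ({r, s} : Set V)) (huv : G.Adj u v) :
      ((isolate G {r, s}).deleteEdges {e | e ∈ c.edges}).Adj u v :=
    deleteEdges_adj.mpr ⟨⟨huv, hu, hrs' v hv⟩, fun he => (c.adj_of_mem_edges he).2.2 hv⟩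
  have hreach {u : V} (hu : u ∈ c.support) (hux : G.Adj u x ∨ G.Adj u y) :
      ((isolate G {r, s}).deleteEdges {e | e ∈ c.edges}).Reachable u x :=
    hux.elim (fun hu' => (hoff (by simp) (hcrs u hu) hu').reachable) fun hu' =>
      (hoff (by simp) (hcrs u hu) hu').reachable.trans
        (hoff (by simp) (hrs' y (by simp)) hxy.symm).reachable
  refine (h.isMulClosed_isolate hrs.1).not_reachable_deleteEdges
    (hc.transfer hedge).isTrail (a := a) (b := b) (by simpa) (by simpa) hab ?_
  rw [Walk.edges_transfer]
  exact (hreach ha hax).trans (hreach hb hbx).symm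

theorem mem_support_of_adj (h : IsMinimalCounterexample G) (hxy : G.Adj x y) {q : V}
    {c : (isolate G {x, y}).Walk q q} (hc : c.IsCycle) {a b : V} (hab : a ≠ b)
    (ha : a ∈ c.support) (hb : b ∈ c.support) (hax : G.Adj a x ∨ G.Adj a y)
    (hbx : G.Adj b x ∨ G.Adj b y) {r s : V} (hrs : (isolate G {x, y}).Adj r s) :
    r ∈ c.support := by
  by_contra hr
  have hrx : r ≠ x ∧ r ≠ y := by simpa using hrs.2.1
  have hoff {d : V} (hd : (isolate G {x, y}).Adj r d) :
      d ∈ c.support ∧ ((isolate G {x, y}).deleteEdges {e | e ∈ c.edges}).Adj r d :=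
    ⟨(h.mem_support_or_mem_support_of_adj hxy hc hab ha hb hax hbx hd).resolve_left hr,
      deleteEdges_adj.mpr ⟨hd, fun he => hr (c.fst_mem_support_of_mem_edges he)⟩⟩
  obtain ⟨d, e, hde, hd, he⟩ := h.exists_pair_isolate_adj hxy hrx.1 hrx.2 hrs.1
  exact (h.isMulClosed_isolate hxy).not_reachable_deleteEdges hc.isTrail (hoff hd).1 (hoff he).1 hde
    ((hoff hd).2.symm.reachable.trans (hoff he).2.reachable)

theorem card_lt_three_of_isolate_adj (h : IsMinimalCounterexample G) (hxy : G.Adj x y) {w : V}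
    {s : Finset V} (hs : ∀ a ∈ s, (isolate G {x, y}).Adj w a) : #s < 3 := by
  by_contra! hcard
  obtain ⟨v, hv⟩ := card_pos.mp (show 0 < #s by omega)
  obtain ⟨q, c, a, b, hc, hab, ha, hb, hax, hbx⟩ := h.exists_isCycle_adj_pair hxy (hs v hv)
  have hmem {r s : V} (hrs : (isolate G {x, y}).Adj r s) : r ∈ c.support :=
    h.mem_support_of_adj hxy hc hab ha hb hax hbx hrs
  obtain ⟨d, hd, hdc⟩ :=
    (h.isMulClosed_isolate hxy).exists_notMem_support hc (hmem (hs v hv)) hcard hs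
  exact hdc (hmem (hs d hd).symm)

end IsMinimalCounterexample

end Comb

section Kuratowski

variable {V W : Type*} {G : SimpleGraph V}

theorem hasMinor_of_hom_injective {H : SimpleGraph W} (g : H →g G) (hg : Function.Injective g) :
    HasMinor G H := by
  have hinv (v : V) (w : W) : Function.partialInv g v = some w ↔ g w = v :=
    hg.isPartialInv w v
  refine ⟨Function.partialInv g, fun w => ⟨g w, (hinv _ w).mpr rfl⟩, fun w => ?_,
    fun w₁ w₂ h => ⟨g w₁, g w₂, (hinv _ _).mpr rfl, (hinv _ _).mpr rfl, g.map_adj h⟩⟩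
  rintro ⟨u, hu⟩ ⟨v, hv⟩
  obtain rfl : u = v := ((hinv u w).mp hu).symm.trans ((hinv v w).mp hv)
  rfl

theorem not_isPlanar_of_pairwise_adj {a b c d e : V}
    (h : [a, b, c, d, e].Pairwise G.Adj) : ¬ IsPlanar G := by
  have hlt {i j : Fin 5} (hij : i < j) : G.Adj (![a, b, c, d, e] i) (![a, b, c, d, e] j) := by
    rw [List.pairwise_iff_getElem] at h
    have := h i j i.2 j.2 hij
    fin_cases i <;> fin_cases j <;> exact this
  have hadj {i j : Fin 5} (hij : i ≠ j) : G.Adj (![a, b, c, d, e] i) (![a, b, c, d, e] j) :=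
    hij.lt_or_gt.elim hlt fun hji => (hlt hji).symm
  exact fun hp => hp.1 (hasMinor_of_hom_injective ⟨_, hadj⟩
    fun i j hij => by_contra fun hne => (hadj hne).ne hij)

theorem not_isPlanar_of_forall_adj {a b : Fin 3 → V} (ha : Function.Injective a)
    (hb : Function.Injective b) (hab : ∀ i j, G.Adj (a i) (b j)) : ¬ IsPlanar G := by
  refine fun hp => hp.2 (hasMinor_of_hom_injective ⟨Sum.elim a b, ?_⟩
    (ha.sumElim hb fun i j => (hab i j).ne))
  rintro (i | i) (j | j) hij
  · simp at hij
  · exact hab i j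
  · exact (hab j i).symm
  · simp at hij

end Kuratowski

section MacLane

variable {V : Type*} [Fintype V] {G : SimpleGraph V}

namespace IsMinimalCounterexample

variable {x y w a : V}

theorem adj_or_adj (h : IsMinimalCounterexample G) (hxy : G.Adj x y) (hwx : w ≠ x) (hwy : w ≠ y)
    (hwa : G.Adj w a) : G.Adj w x ∨ G.Adj w y := by
  obtain ⟨s, hs, hadj⟩ := h.exists_three_le_card_adj hwa
  by_contra! hw
  refine (h.card_lt_three_of_isolate_adj hxy (w := w) (s := s) fun b hb => ?_).not_ge hs
  refine ⟨hadj b hb, by simp [hwx, hwy], ?_⟩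
  rintro (rfl | rfl)
  exacts [hw.1 (hadj _ hb), hw.2 (hadj _ hb)]

theorem adj_of_triangle (h : IsMinimalCounterexample G) (hxy : G.Adj x y) (hxw : G.Adj x w)
    (hyw : G.Adj y w) (hwa : G.Adj w a) (hax : a ≠ x) (hay : a ≠ y) : G.Adj x a := by
  by_contra hxa
  obtain ⟨p, q, hpq, hp, hq⟩ := h.exists_pair_isolate_adj hyw hxy.ne hxw.ne hxy
  have hx : x ∉ ({w, a} : Set V) := by simp [hxw.ne, hax.symm]
  have hnbr {p : V} (hp : (isolate G {y, w}).Adj x p) : p ≠ y ∧ (isolate G {w, a}).Adj x p := by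
    have hpyw : p ≠ y ∧ p ≠ w := by simpa using hp.2.2
    refine ⟨hpyw.1, hp.1, hx, ?_⟩
    rintro (rfl | rfl)
    exacts [hpyw.2 rfl, hxa hp.1]
  refine (h.card_lt_three_of_isolate_adj hwa (w := x) (s := {y, p, q}) ?_).ne
    (card_eq_three.mpr ⟨y, p, q, (hnbr hp).1.symm, (hnbr hq).1.symm, hpq, rfl⟩)
  have hxy' : (isolate G {w, a}).Adj x y := ⟨hxy, hx, by simp [hyw.ne, hay.symm]⟩
  simp [hxy', (hnbr hp).2, (hnbr hq).2]

theorem not_adj_of_adj_of_adj (h : IsMinimalCounterexample G) (hxy : G.Adj x y)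
    (hxw : G.Adj x w) : ¬ G.Adj y w := by
  intro hyw
  obtain ⟨a, b, hab, ha, hb⟩ := h.exists_pair_isolate_adj hxy hxw.ne' hyw.ne' hxw.symm
  have hcone {a : V} (ha : (isolate G {x, y}).Adj w a) : G.Adj x a ∧ G.Adj y a := by
    have hax : a ≠ x ∧ a ≠ y := by simpa using ha.2.2
    exact ⟨h.adj_of_triangle hxy hxw hyw ha.1 hax.1 hax.2,
      h.adj_of_triangle hxy.symm hyw hxw ha.1 hax.2 hax.1⟩
  have hab' : G.Adj a b := h.adj_of_triangle (hcone ha).1.symm ha.1.symm hxw hb.1 hab.symm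
    (hcone hb).1.ne'
  refine not_isPlanar_of_pairwise_adj (a := x) (b := y) (c := w) (d := a) (e := b) ?_ h.planar
  simp [hxy, hxw, hyw, hcone ha, hcone hb, ha.1, hb.1, hab']

theorem exists_neighbors (h : IsMinimalCounterexample G) (hxy : G.Adj x y) :
    ∃ a : Fin 3 → V, a 0 = y ∧ Function.Injective a ∧ ∀ i, G.Adj x (a i) := by
  obtain ⟨b, hb, -, hxb⟩ := h.exists_third_neighbor hxy y
  obtain ⟨c, hc, hcb, hxc⟩ := h.exists_third_neighbor hxy b
  refine ⟨![y, b, c], rfl, ?_, by simp [Fin.forall_fin_succ, hxy, hxb, hxc]⟩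
  intro i j hij
  fin_cases i <;> fin_cases j <;> simp_all

/-- Three neighbours of `x` and three of `y` span a `K₃,₃`. -/
theorem not_adj (h : IsMinimalCounterexample G) : ¬ G.Adj x y := by
  intro hxy
  obtain ⟨a, rfl, ha, hxa⟩ := h.exists_neighbors hxy
  obtain ⟨b, rfl, hb, hyb⟩ := h.exists_neighbors hxy.symm
  refine not_isPlanar_of_forall_adj ha hb (fun i j => ?_) h.planar
  by_cases hi : a i = a 0
  · exact hi ▸ hyb j
  by_cases hj : b j = b 0
  · exact hj ▸ (hxa i).symm
  have hij : b j ≠ a i := fun he => h.not_adj_of_adj_of_adj hxy (hxa i) (he ▸ hyb j)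
  exact ((h.adj_or_adj (hxa i) hj hij (hyb j).symm).resolve_left fun hbx =>
    h.not_adj_of_adj_of_adj hxy hbx.symm (hyb j)).symm

end IsMinimalCounterexample

theorem hasTwoBasis_of_forall_not_adj (hG : ∀ u w, ¬ G.Adj u w) : HasTwoBasis G := by
  refine ⟨Empty, ∅, nofun, ?_, fun e => by simp [coverage]⟩
  refine (Submodule.span_eq_bot.mpr (by simp)).trans (eq_bot_iff.mpr fun z hz => ?_).symm
  ext e
  induction e with
  | h u w => exact hz.1 u w (hG u w)

theorem hasTwoBasis_of_isPlanar (hG : IsPlanar G) : HasTwoBasis G := by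
  induction hn : G.edgeSet.ncard using Nat.strong_induction_on generalizing G with
  | _ n ih =>
    by_contra hbasis
    have hmin : IsMinimalCounterexample G :=
      ⟨hG, hbasis, fun H hH hlt => ih _ (hn ▸ hlt) hH rfl⟩
    exact hbasis (hasTwoBasis_of_forall_not_adj fun u w => hmin.not_adj)

end MacLane

section SmallCycles

variable {V : Type*}

/-- The edges of the closed walk through the vertices of a list in their order. -/
def cycleEdges (c : List V) : Finset (Sym2 V) := (c.zipWith (s(·, ·)) (c.rotate 1)).toFinset

theorem card_cycleEdges {c : List V} (hc : c.Nodup) (hlen : 3 ≤ c.length) :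
    #(cycleEdges c) = c.length := by
  rw [cycleEdges, List.toFinset_card_of_nodup, List.length_zipWith, List.length_rotate, min_self]
  rw [List.Nodup, List.pairwise_iff_getElem]
  intro i j hi hj hij heq
  simp only [List.length_zipWith, List.length_rotate, min_self] at hi hj
  simp only [List.getElem_zipWith, List.getElem_rotate, Sym2.eq_iff, hc.getElem_inj_iff] at heq
  rw [Nat.mod_eq_of_lt (a := i + 1) (by omega)] at heq
  obtain hjn | hjn : j + 1 < c.length ∨ j + 1 = c.length := by omega
  · rw [Nat.mod_eq_of_lt hjn] at heq
    omega
  · rw [hjn, Nat.mod_self] at heq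
    omega

variable [Fintype V] {G : SimpleGraph V} {x y : V} {z w : EdgeSpace V}

/-- The set of edges of which `z` is the indicator. -/
def edgeSupport (z : EdgeSpace V) : Finset (Sym2 V) := {e | z e ≠ 0}

theorem mem_edgeSupport {e : Sym2 V} : e ∈ edgeSupport z ↔ z e ≠ 0 := by
  simp [edgeSupport]

theorem sum_edgeSupport (z : EdgeSpace V) : ∑ e ∈ edgeSupport z, Pi.single e 1 = z := by
  ext f
  by_cases hf : z f = 0
  · simp [Finset.sum_apply, Pi.single_apply, mem_edgeSupport, hf]
  · simp [Finset.sum_apply, Pi.single_apply, mem_edgeSupport, zmod_two_eq_one hf]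

theorem sum_sum_compl_of_mem_cycleSpace (hz : z ∈ cycleSpace G) (s : Finset V) :
    ∑ v ∈ s, ∑ w ∈ sᶜ, z s(v, w) = 0 := by
  have hin : ∑ v ∈ s, ∑ w ∈ s, z s(v, w) = 0 := by
    have h := sum_sum_eq_zero_of_symm (f := fun v w => if v ∈ s ∧ w ∈ s then z s(v, w) else 0)
      (fun v w => by simp only [Sym2.eq_swap, and_comm])
      (fun v => by simp [apply_diag_of_mem_cycleSpace hz])
    simpa [ite_and, sum_ite_mem, ← sum_filter] using h
  have hall : ∑ v ∈ s, ∑ w, z s(v, w) = 0 :=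
    sum_eq_zero fun v _ => sum_apply_of_mem_cycleSpace hz v
  simpa only [← sum_add_sum_compl s, sum_add_distrib, hin, zero_add] using hall

theorem exists_isPath_of_mem_cycleSpace (hz : z ∈ cycleSpace G) (hxy : z s(x, y) ≠ 0) :
    ∃ p : G.Walk y x, p.IsPath ∧ s(x, y) ∉ p.edges ∧ ∀ e ∈ p.edges, z e ≠ 0 := by
  let H := (fromEdgeSet (edgeSupport z : Set (Sym2 V))).deleteEdges {s(x, y)}
  have hH : ∀ {u v}, H.Adj u v ↔ z s(u, v) ≠ 0 ∧ s(u, v) ≠ s(x, y) := by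
    intro u v
    simp only [H, deleteEdges_adj, fromEdgeSet_adj, mem_coe, mem_edgeSupport,
      Set.mem_singleton_iff, and_congr_left_iff, and_iff_left_iff_imp]
    exact fun _ h => (adj_of_mem_cycleSpace hz h).ne
  have hle : H ≤ G := fun u v huv => adj_of_mem_cycleSpace hz (hH.mp huv).1
  -- Otherwise `xy` would be the only edge of `z` leaving the component of `y`.
  have hreach : H.Reachable y x := by
    by_contra hreach
    have hout : ∀ v w, H.Reachable y v → ¬ H.Reachable y w → z s(v, w) ≠ 0 → v = y ∧ w = x := by
      intro v w hv hw hvw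
      by_cases heq : s(v, w) = s(x, y)
      · obtain ⟨rfl, rfl⟩ | h := Sym2.eq_iff.mp heq
        exacts [(hreach hv).elim, h]
      · exact (hw (hv.trans (Adj.reachable (hH.mpr ⟨hvw, heq⟩)))).elim
    have hcut := sum_sum_compl_of_mem_cycleSpace hz {v | H.Reachable y v}
    rw [sum_eq_single_of_mem y (by simp) ?_, sum_eq_single_of_mem x (by simpa) ?_,
      Sym2.eq_swap] at hcut
    · exact hxy hcut
    · intro w hw hwx
      by_contra h
      exact hwx (hout y w (.refl _) (by simpa using hw) h).2
    · refine fun v hv hvy => sum_eq_zero fun w hw => ?_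
      by_contra h
      exact hvy (hout v w (by simpa using hv) (by simpa using hw) h).1
  obtain ⟨p, hp⟩ := hreach.exists_isPath
  have hpz : ∀ e ∈ p.edges, z e ≠ 0 ∧ e ≠ s(x, y) := by
    intro e he
    induction e with | h u v => exact hH.mp (p.adj_of_mem_edges he)
  refine ⟨p.mapLe hle, hp.mapLe hle, fun h => ?_, fun e he => ?_⟩
  · exact (hpz _ (by simpa using h)).2 rfl
  · exact (hpz e (by simpa using he)).1

theorem edgeSupport_walkVec {u v : V} {p : G.Walk u v} (hp : p.IsTrail) :
    edgeSupport (walkVec p) = p.edges.toFinset := by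
  ext e
  rw [mem_edgeSupport, List.mem_toFinset]
  by_cases he : e ∈ p.edges
  · simp [he, walkVec_of_mem hp he]
  · simp [he, walkVec_of_notMem p he]

theorem exists_isCycle_of_mem_cycleSpace (hz : z ∈ cycleSpace G) (hxy : z s(x, y) ≠ 0) :
    ∃ (h : G.Adj x y) (p : G.Walk y x), (p.cons h).IsCycle ∧
      (p.cons h).edges.toFinset ⊆ edgeSupport z := by
  obtain ⟨p, hp, hnot, hpz⟩ := exists_isPath_of_mem_cycleSpace hz hxy
  refine ⟨adj_of_mem_cycleSpace hz hxy, p, (p.cons_isCycle_iff _).mpr ⟨hp, hnot⟩, fun e he => ?_⟩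
  rw [mem_edgeSupport]
  obtain rfl | he := List.mem_cons.mp (List.mem_toFinset.mp he)
  exacts [hxy, hpz e he]

theorem three_le_card_edgeSupport (hz : z ∈ cycleSpace G) (h : z ≠ 0) : 3 ≤ #(edgeSupport z) := by
  obtain ⟨e, he⟩ := Function.ne_iff.mp h
  induction e with | h x y =>
  obtain ⟨hxy, p, hp, hpz⟩ := exists_isCycle_of_mem_cycleSpace hz he
  calc 3 ≤ (p.cons hxy).edges.length := (Walk.length_edges _).symm ▸ hp.three_le_length
    _ = #(p.cons hxy).edges.toFinset := (List.toFinset_card_of_nodup hp.edges_nodup).symm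
    _ ≤ #(edgeSupport z) := card_le_card hpz

theorem eq_of_edgeSupport_subset (hz : z ∈ cycleSpace G) (hw : w ∈ cycleSpace G)
    (hsub : edgeSupport w ⊆ edgeSupport z) (hcard : #(edgeSupport z) < #(edgeSupport w) + 3) :
    z = w := by
  by_contra hne
  have hthree := three_le_card_edgeSupport ((cycleSpace G).sub_mem hz hw) (sub_ne_zero.mpr hne)
  have hdiff : edgeSupport (z - w) ⊆ edgeSupport z \ edgeSupport w := by
    intro e he
    simp only [mem_sdiff, mem_edgeSupport, Pi.sub_apply] at he ⊢
    by_cases hwe : w e = 0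
    · simpa [hwe] using he
    · have hze := mem_edgeSupport.mp (hsub (mem_edgeSupport.mpr hwe))
      simp [zmod_two_eq_one hwe, zmod_two_eq_one hze] at he
  have hle := card_le_card hdiff
  rw [card_sdiff_of_subset hsub] at hle
  omega

/-- `z` is the indicator of the cycle through the vertices of `c`. -/
def IsCycleVec (z : EdgeSpace V) (c : List V) : Prop := c.Nodup ∧ edgeSupport z = cycleEdges c

theorem exists_isCycleVec_of_card_le_five (hz : z ∈ cycleSpace G) (hxy : z s(x, y) ≠ 0)
    (hcard : #(edgeSupport z) ≤ 5) :
    (∃ s, IsCycleVec z [x, y, s]) ∨ (∃ s r, IsCycleVec z [x, y, s, r]) ∨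
      ∃ s t r, IsCycleVec z [x, y, s, t, r] := by
  obtain ⟨h, p, hp, hpz⟩ := exists_isCycle_of_mem_cycleSpace hz hxy
  have hlen := hp.three_le_length
  have hcp : #(p.cons h).edges.toFinset = (p.cons h).length := by
    rw [List.toFinset_card_of_nodup hp.edges_nodup, Walk.length_edges]
  have hzp : z = walkVec (p.cons h) := by
    refine eq_of_edgeSupport_subset hz (walkVec_mem_cycleSpace _) ?_ ?_ <;>
      rw [edgeSupport_walkVec hp.isTrail]
    exacts [hpz, by omega]
  have hsupp : edgeSupport z = (p.cons h).edges.toFinset := by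
    rw [hzp, edgeSupport_walkVec hp.isTrail]
  have hpath := ((p.cons_isCycle_iff h).mp hp).1.support_nodup
  rw [hsupp, hcp] at hcard
  rcases p with _ | ⟨h₁, _ | ⟨h₂, _ | ⟨h₃, _ | ⟨h₄, _ | ⟨h₅, p⟩⟩⟩⟩⟩
  · simp at hlen
  · simp at hlen
  · exact .inl ⟨_, List.nodup_rotate (n := 1).mp hpath, hsupp⟩
  · exact .inr (.inl ⟨_, _, List.nodup_rotate (n := 1).mp hpath, hsupp⟩)
  · exact .inr (.inr ⟨_, _, _, List.nodup_rotate (n := 1).mp hpath, hsupp⟩)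
  · simp only [Walk.length_cons] at hcard
    omega

theorem IsCycleVec.card_edgeSupport {c : List V} (h : IsCycleVec z c) (hlen : 3 ≤ c.length) :
    #(edgeSupport z) = c.length := by
  rw [h.2, card_cycleEdges h.1 hlen]

end SmallCycles

section Theta6

variable {V : Type*} {G : SimpleGraph V} {a b c d e f : V}

theorem hasTheta6_mono {H : SimpleGraph V} (h : G ≤ H) (hG : HasTheta6 G) :
    HasTheta6 H := by
  obtain ⟨v, hv, hcycle, i, j, hij, hj, hi, hchord⟩ := hG
  exact ⟨v, hv, fun k => h (hcycle k), i, j, hij, hj, hi, h hchord⟩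

theorem hasTheta6_of_hexagon (hnodup : [a, b, c, d, e, f].Nodup) (hab : G.Adj a b)
    (hbc : G.Adj b c) (hcd : G.Adj c d) (hde : G.Adj d e) (hef : G.Adj e f) (hfa : G.Adj f a)
    (hchord : G.Adj a c ∨ G.Adj a d) : HasTheta6 G := by
  refine ⟨![a, b, c, d, e, f], ?_, ?_, ?_⟩
  · rw [← List.nodup_ofFn]
    simpa [List.ofFn_succ] using hnodup
  · intro i
    fin_cases i <;> assumption
  · rcases hchord with h | h
    exacts [⟨0, 2, by decide, by decide, by decide, h⟩, ⟨0, 3, by decide, by decide, by decide, h⟩]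

end Theta6

/-- The faces of a plane drawing of a planar `Θ₆`-free graph other than the unbounded one, as far as
the discharging argument is concerned: linearly independent elements of the cycle space, of which no
three share an edge. -/
structure FaceSystem {V : Type*} [Fintype V] (G : SimpleGraph V) (ι : Type*) where
  /-- The boundary of a face. -/
  vec : ι → EdgeSpace V
  mem_cycleSpace : ∀ i, vec i ∈ cycleSpace G
  linearIndependent : LinearIndependent (ZMod 2) vec
  eq_of_mem_edgeSupport : ∀ {i j k e}, e ∈ edgeSupport (vec i) → e ∈ edgeSupport (vec j) →
    e ∈ edgeSupport (vec k) → i = j ∨ i = k ∨ j = k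
  isPlanar : IsPlanar G
  not_hasTheta6 : ¬ HasTheta6 G

namespace FaceSystem

variable {V : Type*} [Fintype V] {G : SimpleGraph V} {ι : Type*} (F : FaceSystem G ι)
  {i j k l : ι} {x y z u v w p q s t r : V}

/-- The edges on the boundary of a face. -/
def edges (i : ι) : Finset (Sym2 V) := edgeSupport (F.vec i)

/-- The face `i` is bounded by the cycle through the vertices of `c`. -/
def IsFace (i : ι) (c : List V) : Prop := IsCycleVec (F.vec i) c

/-- There is a triangular face with vertices `x`, `y`, `z`. -/
def HasTriangle (x y z : V) : Prop := ∃ i, F.IsFace i [x, y, z]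

/-- The face `i` is a triangle. -/
def IsTriangular (i : ι) : Prop := #(F.edges i) = 3

variable {F}

theorem adj_of_mem_edges (h : s(x, y) ∈ F.edges i) : G.Adj x y :=
  adj_of_mem_cycleSpace (F.mem_cycleSpace i) (mem_edgeSupport.mp h)

theorem IsFace.card_edges {c : List V} (h : F.IsFace i c) (hlen : 3 ≤ c.length) :
    #(F.edges i) = c.length := h.card_edgeSupport hlen

theorem IsFace.mem_edges {c : List V} (h : F.IsFace i c) {e : Sym2 V} :
    e ∈ F.edges i ↔ e ∈ c.zipWith (s(·, ·)) (c.rotate 1) := by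
  rw [edges, h.2, cycleEdges, List.mem_toFinset]

theorem IsFace.of_mem_edges {c c' : List V} (h : F.IsFace i c) (hnd : c'.Nodup)
    (hedges : ∀ e, e ∈ c.zipWith (s(·, ·)) (c.rotate 1) ↔ e ∈ c'.zipWith (s(·, ·)) (c'.rotate 1)) :
    F.IsFace i c' := by
  refine ⟨hnd, ?_⟩
  ext e
  rw [cycleEdges, List.mem_toFinset, ← hedges]
  exact h.mem_edges

theorem IsFace.nodup {c : List V} (h : F.IsFace i c) : c.Nodup := h.1

theorem IsFace.rotate {c : List V} (h : F.IsFace i (x :: c)) : F.IsFace i (c ++ [x]) := by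
  have hrotate : c ++ [x] = (x :: c).rotate 1 := by simp
  rw [hrotate]
  refine h.of_mem_edges (List.nodup_rotate.mpr h.nodup) fun e => ?_
  rw [← List.zipWith_rotate_distrib _ _ _ _ (List.length_rotate ..).symm, List.mem_rotate]

theorem IsFace.rotate_three (h : F.IsFace i [x, y, z]) : F.IsFace i [y, z, x] := h.rotate

theorem IsFace.rotate_four (h : F.IsFace i [x, y, s, r]) : F.IsFace i [y, s, r, x] := h.rotate

theorem IsFace.rotate_five (h : F.IsFace i [x, y, s, t, r]) : F.IsFace i [y, s, t, r, x] :=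
  h.rotate

theorem IsFace.swap_three (h : F.IsFace i [x, y, z]) : F.IsFace i [y, x, z] := by
  refine h.of_mem_edges (by have := h.1; simp at this; grind) ?_
  simp
  grind

theorem IsFace.reflect_three (h : F.IsFace i [x, y, z]) : F.IsFace i [x, z, y] :=
  h.rotate_three.rotate_three.swap_three

theorem IsFace.reflect_four (h : F.IsFace i [x, y, s, r]) : F.IsFace i [y, x, r, s] := by
  refine h.of_mem_edges (by have := h.1; simp at this; grind) ?_
  simp
  grind

theorem IsFace.mk_mem_edges {c : List V} (h : F.IsFace i (x :: y :: c)) : s(x, y) ∈ F.edges i :=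
  h.mem_edges.mpr (by simp)

theorem IsFace.adj {c : List V} (h : F.IsFace i (x :: y :: c)) : G.Adj x y :=
  adj_of_mem_edges h.mk_mem_edges

theorem IsFace.isTriangular (h : F.IsFace i [x, y, z]) : F.IsTriangular i := h.card_edges le_rfl

theorem IsFace.not_isTriangular {c : List V} (h : F.IsFace i c) (hlen : 3 < c.length) :
    ¬ F.IsTriangular i := fun h' => by
  rw [IsTriangular, h.card_edges hlen.le] at h'
  omega

theorem IsFace.vec_eq_sum {c : List V} (h : F.IsFace i c) :
    F.vec i = ∑ e ∈ cycleEdges c, Pi.single e 1 := by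
  rw [← h.2, sum_edgeSupport]

theorem IsFace.vec_three (h : F.IsFace i [x, y, z]) : F.vec i = triangle x y z := by
  have hnd := h.1
  simp only [List.nodup_cons, List.mem_cons, List.not_mem_nil] at hnd
  have hedges : cycleEdges [x, y, z] = {s(x, y), s(x, z), s(y, z)} := by
    ext
    simp [cycleEdges]
    grind
  rw [h.vec_eq_sum, hedges, sum_insert (by grind), sum_insert (by grind), sum_singleton,
    ← add_assoc]
  rfl

theorem IsFace.vec_four (h : F.IsFace i [x, y, s, r]) :
    F.vec i = edgeVec x y + edgeVec y s + edgeVec s r + edgeVec r x := by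
  have hnd := h.1
  simp only [List.nodup_cons, List.mem_cons, List.not_mem_nil] at hnd
  have hedges : cycleEdges [x, y, s, r] = {s(x, y), s(y, s), s(s, r), s(r, x)} := by
    ext
    simp [cycleEdges]
  rw [h.vec_eq_sum, hedges, sum_insert (by grind), sum_insert (by grind), sum_insert (by grind),
    sum_singleton, ← add_assoc, ← add_assoc]
  rfl

theorem IsFace.index_unique (hi : F.IsFace i [x, y, z]) (hj : F.IsFace j [x, y, z]) : i = j :=
  F.linearIndependent.injective (hi.vec_three.trans hj.vec_three.symm)

theorem IsFace.mem_of_three (h : F.IsFace i [x, y, z]) (h' : F.IsFace i [u, v, w]) :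
    w = x ∨ w = y ∨ w = z := by
  have hw := h'.mem_edges (e := s(v, w)).mpr (by simp)
  rw [h.mem_edges] at hw
  simp at hw
  grind

theorem vec_ne_sum_triangle {T : List (V × V × V)} (hT : ∀ t ∈ T, F.HasTriangle t.1 t.2.1 t.2.2)
    (hl : ∀ t ∈ T, ¬ F.IsFace l [t.1, t.2.1, t.2.2]) :
    F.vec l ≠ (T.map fun t => triangle t.1 t.2.1 t.2.2).sum := by
  intro h
  refine F.linearIndependent.notMem_span_image (s := {i | i ≠ l}) (x := l) (by simp) ?_
  rw [h]
  refine list_sum_mem fun z hz => ?_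
  obtain ⟨t, ht, rfl⟩ := List.mem_map.mp hz
  obtain ⟨i, hi⟩ := hT t ht
  rw [← hi.vec_three]
  exact Submodule.subset_span ⟨i, fun hil => hl t ht (hil ▸ hi), rfl⟩

theorem HasTriangle.rotate (h : F.HasTriangle x y z) : F.HasTriangle y z x :=
  h.imp fun _ => IsFace.rotate_three

theorem HasTriangle.swap (h : F.HasTriangle x y z) : F.HasTriangle y x z :=
  h.imp fun _ => IsFace.swap_three

theorem HasTriangle.reflect (h : F.HasTriangle x y z) : F.HasTriangle x z y :=
  h.imp fun _ => IsFace.reflect_three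

theorem HasTriangle.adj (h : F.HasTriangle x y z) : G.Adj x y := by
  obtain ⟨i, hi⟩ := h
  exact hi.adj

theorem HasTriangle.eq_of_three (hu : F.HasTriangle x y u) (hv : F.HasTriangle x y v)
    (hw : F.HasTriangle x y w) : u = v ∨ u = w ∨ v = w := by
  obtain ⟨i, hi⟩ := hu
  obtain ⟨j, hj⟩ := hv
  obtain ⟨k, hk⟩ := hw
  have hmem : ∀ {i u}, F.IsFace i [x, y, u] → s(x, y) ∈ F.edges i ∧ x ≠ u ∧ y ≠ u := fun h =>
    ⟨h.mk_mem_edges, by have := h.1; simp at this; grind⟩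
  rcases F.eq_of_mem_edgeSupport (hmem hi).1 (hmem hj).1 (hmem hk).1 with rfl | rfl | rfl
  · grind [hi.mem_of_three hj]
  · grind [hi.mem_of_three hk]
  · grind [hj.mem_of_three hk]

theorem HasTriangle.notMem_edges (hu : F.HasTriangle x y u) (hv : F.HasTriangle x y v)
    (huv : u ≠ v) (hl : ¬ F.IsTriangular l) : s(x, y) ∉ F.edges l := by
  intro hmem
  obtain ⟨i, hi⟩ := hu
  obtain ⟨j, hj⟩ := hv
  rcases F.eq_of_mem_edgeSupport hi.mk_mem_edges hj.mk_mem_edges hmem with rfl | rfl | rfl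
  · have := hi.1
    have := hj.1
    grind [hi.mem_of_three hj]
  · exact hl hi.isTriangular
  · exact hl hj.isTriangular

theorem IsFace.apex_unique {c : List V} (h : F.IsFace l (x :: y :: s :: t :: c))
    (hu : F.HasTriangle x y u) (hv : F.HasTriangle x y v) : u = v := by
  by_contra huv
  exact hu.notMem_edges hv huv (h.not_isTriangular (by simp)) h.mk_mem_edges

theorem IsTriangular.exists_isFace (h : F.IsTriangular i) (hxy : s(x, y) ∈ F.edges i) :
    ∃ z, F.IsFace i [x, y, z] := by
  have h3 : #(F.edges i) = 3 := h
  rcases exists_isCycleVec_of_card_le_five (F.mem_cycleSpace i) (mem_edgeSupport.mp hxy)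
    (show #(F.edges i) ≤ 5 by omega) with hs | ⟨s, r, hs⟩ | ⟨s, t, r, hs⟩
  · exact hs
  · exact (IsFace.not_isTriangular hs (by simp) h).elim
  · exact (IsFace.not_isTriangular hs (by simp) h).elim

theorem IsTriangular.exists_vertices (h : F.IsTriangular i) : ∃ x y z, F.IsFace i [x, y, z] := by
  obtain ⟨e, he⟩ : (F.edges i).Nonempty := card_pos.mp (h ▸ three_pos)
  induction e with
  | h x y => exact ⟨x, y, h.exists_isFace he⟩

theorem exists_isFace_of_not_isTriangular (h : ¬ F.IsTriangular i) (hxy : s(x, y) ∈ F.edges i) :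
    6 ≤ #(F.edges i) ∨ (∃ s r, F.IsFace i [x, y, s, r]) ∨ ∃ s t r, F.IsFace i [x, y, s, t, r] := by
  by_cases h6 : 6 ≤ #(F.edges i)
  · exact .inl h6
  rcases exists_isCycleVec_of_card_le_five (F.mem_cycleSpace i) (mem_edgeSupport.mp hxy)
    (show #(F.edges i) ≤ 5 by omega) with ⟨s, hs⟩ | hs | hs
  · exact (h (IsFace.isTriangular hs)).elim
  · exact .inr (.inl hs)
  · exact .inr (.inr hs)

theorem not_nodup_of_hexagon (F : FaceSystem G ι) (a b c d e f : V) (hab : G.Adj a b)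
    (hbc : G.Adj b c) (hcd : G.Adj c d) (hde : G.Adj d e) (hef : G.Adj e f) (hfa : G.Adj f a)
    (hchord : G.Adj a c ∨ G.Adj a d) : a = c ∨ a = d ∨ a = e ∨ b = d ∨ b = e ∨ b = f ∨ c = e ∨
      c = f ∨ d = f := by
  by_contra! hne
  refine F.not_hasTheta6 (hasTheta6_of_hexagon ?_ hab hbc hcd hde hef hfa hchord)
  grind [hab.ne, hbc.ne, hcd.ne, hde.ne, hef.ne, hfa.ne]

theorem not_pairwise_adj (F : FaceSystem G ι) (a b c d e : V) :
    ¬ [a, b, c, d, e].Pairwise G.Adj := fun h => not_isPlanar_of_pairwise_adj h F.isPlanar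

end FaceSystem

namespace FaceSystem

variable {V : Type*} [Fintype V] {G : SimpleGraph V} {ι : Type*} {F : FaceSystem G ι} {l : ι}
  {x y z p q w c g s t r : V}

attribute [local grind →] HasTriangle.rotate HasTriangle.swap HasTriangle.adj
  HasTriangle.eq_of_three IsFace.adj IsFace.nodup IsFace.rotate_four IsFace.rotate_five
  IsFace.apex_unique SimpleGraph.Adj.symm SimpleGraph.Adj.ne

/-- The edge `e` lies on a triangular face. -/
def IsTriangleEdge (F : FaceSystem G ι) (e : Sym2 V) : Prop :=
  ∃ i, F.IsTriangular i ∧ e ∈ F.edges i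

/-- At least two edges of the face `l` lie on no triangular face. -/
def HasTwoFreeEdges (F : FaceSystem G ι) (l : ι) : Prop :=
  ∃ e ∈ F.edges l, ∃ f ∈ F.edges l, e ≠ f ∧ ¬ F.IsTriangleEdge e ∧ ¬ F.IsTriangleEdge f

/-- The triangular faces `cpq`, `cqw` and `cwp`, which surround a vertex `c` of degree three. -/
def IsCone (F : FaceSystem G ι) (c p q w : V) : Prop :=
  F.HasTriangle c p q ∧ F.HasTriangle c q w ∧ F.HasTriangle c w p

/-- Five of the six faces of the bipyramid with apexes `c`, `z` over the triangle `pqw`: all but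
the face `zqw`. -/
def IsOpenBipyramid (F : FaceSystem G ι) (p q w c z : V) : Prop :=
  F.IsCone c p q w ∧ F.HasTriangle z p q ∧ F.HasTriangle z p w ∧ z ≠ c

theorem isTriangleEdge_iff : F.IsTriangleEdge s(x, y) ↔ ∃ g, F.HasTriangle x y g := by
  constructor
  · rintro ⟨i, hi, hxy⟩
    obtain ⟨g, hg⟩ := hi.exists_isFace hxy
    exact ⟨g, i, hg⟩
  · rintro ⟨g, i, hi⟩
    exact ⟨i, hi.isTriangular, hi.mk_mem_edges⟩

theorem hasTwoFreeEdges_of_adjacent (hl : F.IsFace l [x, y, s, r])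
    (hxy : ∀ g, ¬ F.HasTriangle x y g) (hys : ∀ g, ¬ F.HasTriangle y s g) :
    F.HasTwoFreeEdges l :=
  ⟨s(x, y), hl.mk_mem_edges, s(y, s), hl.rotate_four.mk_mem_edges, by grind,
    fun h => (isTriangleEdge_iff.mp h).elim hxy, fun h => (isTriangleEdge_iff.mp h).elim hys⟩

theorem IsCone.rotate (h : F.IsCone c p q w) : F.IsCone c q w p := ⟨h.2.1, h.2.2, h.1⟩

theorem IsCone.swap (h : F.IsCone c p q w) : F.IsCone c q p w := by
  unfold IsCone at *
  grind

theorem IsOpenBipyramid.swap (h : F.IsOpenBipyramid p q w c z) : F.IsOpenBipyramid p w q c z :=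
  ⟨h.1.rotate.rotate.swap, h.2.2.1, h.2.1, h.2.2.2⟩

section Cone

theorem IsCone.hasTwoFreeEdges_of_mem_face (h : F.IsCone c p q w) (hl : F.IsFace l [p, q, w, r])
    (hrc : r ≠ c) : F.HasTwoFreeEdges l := by
  have hwrp : ¬ F.HasTriangle w r p := fun hwrp => by
    refine vec_ne_sum_triangle (l := l) (T := [(c, p, q), (c, q, w), (c, w, p), (w, r, p)])
      (by simp [hwrp, h.1, h.2.1, h.2.2])
      (fun t _ ht => hl.not_isTriangular (by simp) ht.isTriangular) ?_
    simp only [hl.vec_four, triangle, edgeVec_comm w p, edgeVec_comm r p, List.map_cons,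
      List.map_nil, List.sum_cons, List.sum_nil]
    funext e
    simp only [Pi.add_apply, Pi.zero_apply]
    grind
  obtain ⟨hcpq, hcqw, hcwp⟩ := h
  refine hasTwoFreeEdges_of_adjacent hl.rotate_four.rotate_four (fun g hg => ?_) fun g hg => ?_
  · have := F.not_nodup_of_hexagon p c q w g r
    grind
  · have := F.not_nodup_of_hexagon c q p g r w
    grind

theorem IsCone.hasTwoFreeEdges (h : F.IsCone c p q w) (hl : F.IsFace l [p, q, s, r]) :
    F.HasTwoFreeEdges l := by
  have hrim : s ≠ c ∧ r ≠ c ∧ (s = w ∨ r = w) := by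
    obtain ⟨hcpq, hcqw, hcwp⟩ := h
    have := F.not_nodup_of_hexagon p c w q s r
    grind
  obtain ⟨hsc, hrc, rfl | rfl⟩ := hrim
  · exact h.hasTwoFreeEdges_of_mem_face hl hrc
  · exact h.swap.hasTwoFreeEdges_of_mem_face hl.reflect_four hsc

theorem IsCone.not_hasTriangle_of_pendant (h : F.IsCone c p q w) (hpqz : F.HasTriangle p q z)
    (hzc : z ≠ c) (hzw : z ≠ w) (hl : F.IsFace l [z, p, s, r]) (hsq : G.Adj s q) (hsc : s ≠ c)
    (hsw : s ≠ w) : ¬ F.HasTriangle p s t := by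
  obtain ⟨hcpq, hcqw, hcwp⟩ := h
  intro hpst
  have := F.not_nodup_of_hexagon p s w c q z
  have := F.not_nodup_of_hexagon q s t p w c
  grind

theorem IsCone.hasTwoFreeEdges_of_pendant (h : F.IsCone c p q w) (hpqz : F.HasTriangle p q z)
    (hzc : z ≠ c) (hzw : z ≠ w) (hl : F.IsFace l [z, p, s, r]) : F.HasTwoFreeEdges l := by
  have hne : ¬ (r = q ∧ s = w) := by
    rintro ⟨rfl, rfl⟩
    refine vec_ne_sum_triangle (l := l) (T := [(c, p, r), (c, r, s), (c, s, p), (p, r, z)])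
      (by simp [hpqz, h.1, h.2.1, h.2.2])
      (fun t _ ht => hl.not_isTriangular (by simp) ht.isTriangular) ?_
    simp only [hl.vec_four, triangle, edgeVec_comm z p, edgeVec_comm s r, edgeVec_comm s p,
      List.map_cons, List.map_nil, List.sum_cons, List.sum_nil]
    funext e
    simp only [Pi.add_apply, Pi.zero_apply]
    grind
  have hq : r = q ∧ s ≠ c ∧ s ≠ w := by
    obtain ⟨hcpq, hcqw, hcwp⟩ := h
    have := F.not_nodup_of_hexagon p s r z q w
    have := F.not_nodup_of_hexagon p s r z q c
    grind
  obtain ⟨rfl, hsc, hsw⟩ := hq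
  have hl' := hl.rotate_four.rotate_four.rotate_four.reflect_four
  exact hasTwoFreeEdges_of_adjacent hl.rotate_four
    (fun g => h.not_hasTriangle_of_pendant hpqz hzc hzw hl (by grind) hsc hsw)
    (fun g hg => h.swap.not_hasTriangle_of_pendant hpqz.swap hzc hzw hl' (by grind) hsc hsw hg.swap)

end Cone

section TwoApexes

theorem not_isFace_four_of_wheel (hpqc : F.HasTriangle p q c) (hpcy : F.HasTriangle p c y)
    (hpyz : F.HasTriangle p y z) (hpzq : F.HasTriangle p z q) (hqy : q ≠ y) (hcz : c ≠ z) :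
    ¬ F.IsFace l [q, c, s, r] := by
  intro hl
  have hne : ¬ (s = y ∧ r = z) := by
    rintro ⟨rfl, rfl⟩
    refine vec_ne_sum_triangle (l := l) (T := [(p, q, c), (p, c, s), (p, s, r), (p, r, q)])
      (by simp [*]) (fun t _ ht => hl.not_isTriangular (by simp) ht.isTriangular) ?_
    simp only [hl.vec_four, triangle, List.map_cons, List.map_nil, List.sum_cons, List.sum_nil]
    funext e
    simp only [Pi.add_apply, Pi.zero_apply]
    grind
  have := F.not_nodup_of_hexagon p c s r q z
  have := F.not_nodup_of_hexagon p y c s r q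
  have := F.not_pairwise_adj p y c q z
  grind

theorem hasTriangle_or_adj_of_apex (hpqc : F.HasTriangle p q c) (hpqz : F.HasTriangle p q z)
    (hpcy : F.HasTriangle p c y) (hzc : z ≠ c) (hyq : y ≠ q) (hyz : y ≠ z)
    (hqc : ∀ g, F.HasTriangle q c g → g = p)
    (hz : (∃ g, g ≠ q ∧ F.HasTriangle p z g) ∨ ∃ g, g ≠ p ∧ F.HasTriangle q z g) :
    F.HasTriangle p y z ∨ G.Adj q y := by
  rcases hz with ⟨g, hgq, hg⟩ | ⟨g, hgp, hg⟩
  · have := F.not_nodup_of_hexagon p g z q c y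
    grind
  · have := hqc z
    have := F.not_nodup_of_hexagon p z g q c y
    grind

theorem not_isFace_four_of_apexes (hpqc : F.HasTriangle p q c) (hpqz : F.HasTriangle p q z)
    (hpcy : F.HasTriangle p c y) (hzc : z ≠ c) (hyq : y ≠ q) (hyz : y ≠ z)
    (hz : (∃ g, g ≠ q ∧ F.HasTriangle p z g) ∨ ∃ g, g ≠ p ∧ F.HasTriangle q z g)
    (hy : (∃ g, g ≠ c ∧ F.HasTriangle p y g) ∨ ∃ g, g ≠ p ∧ F.HasTriangle c y g) :
    ¬ F.IsFace l [q, c, s, r] := by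
  intro hl
  have hqc : ∀ g, F.HasTriangle q c g → g = p := fun g hg => hl.apex_unique hg hpqc.rotate
  have hpyz : ¬ F.HasTriangle p y z := fun hpyz =>
    not_isFace_four_of_wheel hpqc hpcy hpyz (by grind) hyq.symm hzc.symm hl
  have hqy : G.Adj q y :=
    (hasTriangle_or_adj_of_apex hpqc hpqz hpcy hzc hyq hyz hqc hz).resolve_left hpyz
  have hcz : G.Adj c z :=
    (hasTriangle_or_adj_of_apex (q := c) (c := q) (by grind) hpcy hpqz hyq hzc hyz.symm
      (fun g hg => hqc g hg.swap) hy).resolve_left (by grind)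
  have hzy : G.Adj z y := by
    rcases hz with ⟨g, hgq, hg⟩ | ⟨g, hgp, hg⟩
    · have := F.not_nodup_of_hexagon p g z q c y
      grind
    · have := F.not_nodup_of_hexagon p z g q c y
      grind
  have := F.not_pairwise_adj p q c y z
  grind

end TwoApexes

section Bipyramid

theorem IsCone.eq_of_hasTriangle (h : F.IsCone c p q w) (hpqz : F.HasTriangle p q z)
    (hzc : z ≠ c) (hzw : z ≠ w) (hpzg : F.HasTriangle p z g) (hgq : g ≠ q) : g = w := by
  obtain ⟨hcpq, hcqw, hcwp⟩ := h
  have := F.not_nodup_of_hexagon p g z q w c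
  grind

theorem IsOpenBipyramid.eq_of_hasTriangle (h : F.IsOpenBipyramid p q w c z)
    (hg : F.HasTriangle q z g) : g = p := by
  obtain ⟨⟨hcpq, hcqw, hcwp⟩, hzpq, hzpw, hzc⟩ := h
  have hgw : g ≠ w := by
    rintro rfl
    obtain ⟨l, hl⟩ := id hcpq
    refine vec_ne_sum_triangle (F := F) (l := l)
      (T := [(c, q, g), (p, c, g), (p, q, z), (z, p, g), (q, z, g)]) ?_ ?_ ?_
    · simp only [List.forall_mem_cons, List.not_mem_nil]
      grind
    · have := fun u v w => hl.mem_of_three (u := u) (v := v) (w := w)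
      simp only [List.mem_cons, List.not_mem_nil]
      grind
    · simp only [hl.vec_three, triangle, edgeVec_comm p c, edgeVec_comm z p, List.map_cons,
        List.map_nil, List.sum_cons, List.sum_nil]
      funext e
      simp only [Pi.add_apply, Pi.zero_apply]
      grind
  have := F.not_nodup_of_hexagon q g z p w c
  grind

theorem IsOpenBipyramid.eq_of_hasTriangle_base (h : F.IsOpenBipyramid p q w c z)
    (hg : F.HasTriangle q w g) : g = c := by
  obtain ⟨⟨hcpq, hcqw, hcwp⟩, hzpq, hzpw, hzc⟩ := id h
  have := h.eq_of_hasTriangle (g := w)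
  have := F.not_nodup_of_hexagon q g w z p c
  grind

theorem IsOpenBipyramid.not_isFace_four (h : F.IsOpenBipyramid p q w c z) :
    ¬ F.IsFace l [q, z, s, r] := by
  obtain ⟨⟨hcpq, hcqw, hcwp⟩, hzpq, hzpw, hzc⟩ := h
  intro hl
  have := F.not_nodup_of_hexagon q r s z p w
  have := F.not_nodup_of_hexagon q r s z p c
  grind

theorem IsOpenBipyramid.not_isFace_four_base (h : F.IsOpenBipyramid p q w c z) :
    ¬ F.IsFace l [q, w, s, r] := by
  obtain ⟨⟨hcpq, hcqw, hcwp⟩, hzpq, hzpw, hzc⟩ := h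
  intro hl
  have := F.not_nodup_of_hexagon q p c w s r
  grind

theorem IsOpenBipyramid.not_isFace_five (h : F.IsOpenBipyramid p q w c z) :
    ¬ F.IsFace l [q, z, s, t, r] := by
  obtain ⟨⟨hcpq, hcqw, hcwp⟩, hzpq, hzpw, hzc⟩ := h
  intro hl
  have := F.not_nodup_of_hexagon z w q r t s
  have := F.not_nodup_of_hexagon z p q r t s
  grind

theorem IsOpenBipyramid.not_isFace_five_base (h : F.IsOpenBipyramid p q w c z) :
    ¬ F.IsFace l [q, w, s, t, r] := by
  obtain ⟨⟨hcpq, hcqw, hcwp⟩, hzpq, hzpw, hzc⟩ := h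
  intro hl
  have := F.not_nodup_of_hexagon q c w s t r
  have := F.not_nodup_of_hexagon q p w s t r
  grind

end Bipyramid

end FaceSystem

namespace FaceSystem

variable {V : Type*} [Fintype V] {G : SimpleGraph V} {ι : Type*} (F : FaceSystem G ι)
  {i j l : ι} {e : Sym2 V} {x y z : V}

/-- The value of `f` at the face across the edge `e` of the face `i`. The unbounded face is not a
member of the system; it contributes `5`, as much as any other face. -/
def across (f : ι → ℤ) (i : ι) (e : Sym2 V) : ℤ :=
  if h : ∃ j ≠ i, e ∈ F.edges j then f h.choose else 5

/-- There is a triangular face across the edge `e` of the face `i`. -/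
def IsInner (i : ι) (e : Sym2 V) : Prop := ∃ j ≠ i, F.IsTriangular j ∧ e ∈ F.edges j

/-- The number of triangular faces across the edges of the face `i`. -/
def innerDegree (i : ι) : ℕ := #{e ∈ F.edges i | F.IsInner i e}

/-- The number of edges of the face `l` that lie on a triangular face. -/
def triangleDegree (l : ι) : ℕ := #{e ∈ F.edges l | F.IsTriangleEdge e}

/-- The charge that a face which is not a triangle sends across each of its edges to triangular
faces. -/
def rate (l : ι) : ℤ :=
  if 6 ≤ #(F.edges l) then 5 else if #(F.edges l) = 4 ∧ 2 < F.triangleDegree l then 2 else 3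

/-- The charge that the triangular face `i` receives across its edge `e` if the face on the other
side is not a triangle. -/
def outerGift (i : ι) (e : Sym2 V) : ℤ := F.across F.rate i e

/-- The total charge that the triangular face `i` receives from faces which are not triangles. -/
def outerCharge (i : ι) : ℤ := ∑ e ∈ F.edges i with ¬ F.IsInner i e, F.outerGift i e

/-- Across the edge `e` of the face `i` there is a triangular face all of whose neighbours are
triangles, so that it needs charge from them. -/
def IsNeedy (i : ι) (e : Sym2 V) : Prop :=
  ∃ j ≠ i, F.IsTriangular j ∧ e ∈ F.edges j ∧ F.innerDegree j = 3

/-- The number of needy triangular faces adjacent to the face `i`. -/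
def needyDegree (i : ι) : ℕ := #{e ∈ F.edges i | F.IsNeedy i e}

/-- The charge that the triangular face `i` sends across its edge `e` to another triangular face:
what it has in excess of `3`. -/
def triangleGift (i : ι) (e : Sym2 V) : ℤ :=
  if F.innerDegree i = 1 then F.outerCharge i - 3
  else if F.innerDegree i = 2 ∧ F.outerCharge i = 5 ∧ F.IsNeedy i e then
    if F.needyDegree i = 1 then 2 else 1
  else 0

/-- The charge that the face `i` sends across its edge `e`. -/
def gift (i : ι) (e : Sym2 V) : ℤ :=
  if F.IsTriangular i then if F.IsInner i e then F.triangleGift i e else 0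
  else if F.IsTriangleEdge e then F.rate i else 0

/-- The charge that the face `i` receives across its edge `e`. -/
def received (i : ι) (e : Sym2 V) : ℤ := F.across (F.gift · e) i e

variable {F}

section Across

variable {f : ι → ℤ}

theorem across_eq (hij : i ≠ j) (hi : e ∈ F.edges i) (hj : e ∈ F.edges j) :
    F.across f i e = f j := by
  have h : ∃ k ≠ i, e ∈ F.edges k := ⟨j, hij.symm, hj⟩
  have hchoose : h.choose = j := by
    rcases F.eq_of_mem_edgeSupport hi hj h.choose_spec.2 with h' | h' | h'
    exacts [(hij h').elim, (h.choose_spec.1 h'.symm).elim, h'.symm]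
  rw [across, dif_pos h, hchoose]

theorem across_eq_five (h : ¬ ∃ j ≠ i, e ∈ F.edges j) : F.across f i e = 5 := dif_neg h

theorem le_across {c : ℤ} (hc : c ≤ 5) (hf : ∀ j, c ≤ f j) : c ≤ F.across f i e := by
  unfold across
  split_ifs
  exacts [hf _, hc]

end Across

section Rate

theorem two_le_rate (l : ι) : 2 ≤ F.rate l := by
  unfold rate
  split_ifs <;> norm_num

theorem two_le_outerGift (i : ι) (e : Sym2 V) : 2 ≤ F.outerGift i e :=
  le_across (by norm_num) two_le_rate

theorem HasTwoFreeEdges.triangleDegree_add_two_le (h : F.HasTwoFreeEdges l) :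
    F.triangleDegree l + 2 ≤ #(F.edges l) := by
  obtain ⟨e, he, f, hf, hef, hfree⟩ := h
  have hsub : {e, f} ⊆ {e ∈ F.edges l | ¬ F.IsTriangleEdge e} := by
    grind
  rw [triangleDegree, ← card_filter_add_card_filter_not (s := F.edges l) F.IsTriangleEdge,
    ← card_pair hef]
  exact Nat.add_le_add_left (card_le_card hsub) _

theorem outerGift_cases (h : F.IsFace i [x, y, z]) (hxy : ¬ F.IsInner i s(x, y)) :
    F.outerGift i s(x, y) = 5 ∨
      (∃ l, (∃ s r, F.IsFace l [x, y, s, r]) ∨ ∃ s t r, F.IsFace l [x, y, s, t, r]) ∧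
        F.outerGift i s(x, y) = 3 ∨
      ∃ l s r, F.IsFace l [x, y, s, r] ∧ ¬ F.HasTwoFreeEdges l ∧ F.outerGift i s(x, y) = 2 := by
  by_cases hj : ∃ j ≠ i, s(x, y) ∈ F.edges j
  swap
  · exact .inl (across_eq_five hj)
  obtain ⟨j, hji, hj⟩ := hj
  have hgift : F.outerGift i s(x, y) = F.rate j := across_eq hji.symm h.mk_mem_edges hj
  rw [hgift, rate]
  rcases exists_isFace_of_not_isTriangular (fun ht => hxy ⟨j, hji, ht, hj⟩) hj with
    h6 | ⟨s, r, hs⟩ | ⟨s, t, r, hs⟩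
  · exact .inl (if_pos h6)
  · have h4 := hs.card_edges (by simp)
    have htwo := HasTwoFreeEdges.triangleDegree_add_two_le (F := F) (l := j)
    simp only [List.length_cons, List.length_nil] at h4
    split_ifs <;> grind
  · have h5 := hs.card_edges (by simp)
    simp only [List.length_cons, List.length_nil] at h5
    split_ifs <;> grind

theorem outerGift_eq_five (h : F.IsFace i [x, y, z]) (hxy : ¬ F.IsInner i s(x, y))
    (hfour : ∀ l s r, ¬ F.IsFace l [x, y, s, r]) (hfive : ∀ l s t r, ¬ F.IsFace l [x, y, s, t, r]) :
    F.outerGift i s(x, y) = 5 := by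
  grind [outerGift_cases h hxy]

theorem three_le_outerGift (h : F.IsFace i [x, y, z]) (hxy : ¬ F.IsInner i s(x, y))
    (hfour : ∀ l s r, F.IsFace l [x, y, s, r] → F.HasTwoFreeEdges l) :
    3 ≤ F.outerGift i s(x, y) := by
  grind [outerGift_cases h hxy]

end Rate

section Triangle

theorem IsFace.sum_edges {M : Type*} [AddCommMonoid M] (h : F.IsFace i [x, y, z])
    (f : Sym2 V → M) : ∑ e ∈ F.edges i, f e = f s(x, y) + f s(x, z) + f s(y, z) := by
  have hnd := h.nodup
  have hedges : F.edges i = {s(x, y), s(x, z), s(y, z)} := by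
    ext
    simp only [h.mem_edges, List.rotate_cons_succ]
    simp
    grind
  simp only [List.nodup_cons, List.mem_cons, List.not_mem_nil] at hnd
  rw [hedges, sum_insert (by grind), sum_insert (by grind), sum_singleton, add_assoc]

theorem IsFace.innerDegree (h : F.IsFace i [x, y, z]) :
    F.innerDegree i = (if F.IsInner i s(x, y) then 1 else 0) +
      (if F.IsInner i s(x, z) then 1 else 0) + if F.IsInner i s(y, z) then 1 else 0 := by
  rw [FaceSystem.innerDegree, card_filter, h.sum_edges]

theorem IsFace.needyDegree (h : F.IsFace i [x, y, z]) :
    F.needyDegree i = (if F.IsNeedy i s(x, y) then 1 else 0) +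
      (if F.IsNeedy i s(x, z) then 1 else 0) + if F.IsNeedy i s(y, z) then 1 else 0 := by
  rw [FaceSystem.needyDegree, card_filter, h.sum_edges]

theorem IsFace.outerCharge (h : F.IsFace i [x, y, z]) :
    F.outerCharge i = (if ¬ F.IsInner i s(x, y) then F.outerGift i s(x, y) else 0) +
      (if ¬ F.IsInner i s(x, z) then F.outerGift i s(x, z) else 0) +
        if ¬ F.IsInner i s(y, z) then F.outerGift i s(y, z) else 0 := by
  rw [FaceSystem.outerCharge, sum_filter, h.sum_edges]

theorem IsFace.eq_of_isFace (h : F.IsFace i [x, y, z]) {g : V} (h' : F.IsFace i [x, y, g]) :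
    g = z := by
  have := h'.nodup
  grind [h.mem_of_three h']

theorem IsFace.isInner_iff (h : F.IsFace i [x, y, z]) :
    F.IsInner i s(x, y) ↔ ∃ g ≠ z, F.HasTriangle x y g := by
  constructor
  · rintro ⟨j, hji, hj, hxy⟩
    obtain ⟨g, hg⟩ := hj.exists_isFace hxy
    refine ⟨g, ?_, j, hg⟩
    rintro rfl
    exact hji (hg.index_unique h)
  · rintro ⟨g, hgz, j, hj⟩
    exact ⟨j, fun hji => hgz (h.eq_of_isFace (hji ▸ hj)), hj.isTriangular, hj.mk_mem_edges⟩

theorem IsNeedy.isInner (h : F.IsNeedy i e) : F.IsInner i e :=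
  h.imp fun _ hj => ⟨hj.1, hj.2.1, hj.2.2.1⟩

theorem two_mul_three_sub_innerDegree_le (hi : F.IsTriangular i) :
    2 * (3 - F.innerDegree i : ℤ) ≤ F.outerCharge i := by
  have hcard : F.innerDegree i + #{e ∈ F.edges i | ¬ F.IsInner i e} = 3 :=
    (card_filter_add_card_filter_not _).trans hi
  have hle := card_nsmul_le_sum {e ∈ F.edges i | ¬ F.IsInner i e} _ 2
    fun e _ => F.two_le_outerGift i e
  rw [nsmul_eq_mul] at hle
  change _ ≤ F.outerCharge i at hle
  omega

end Triangle

section Gift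

theorem triangleGift_nonneg (hi : F.IsTriangular i) (e : Sym2 V) : 0 ≤ F.triangleGift i e := by
  have := two_mul_three_sub_innerDegree_le hi
  unfold triangleGift
  split_ifs <;> omega

theorem gift_nonneg (i : ι) (e : Sym2 V) : 0 ≤ F.gift i e := by
  have := F.two_le_rate i
  unfold gift
  split_ifs with hi
  exacts [triangleGift_nonneg hi e, le_rfl, by omega, le_rfl]

theorem received_nonneg (i : ι) (e : Sym2 V) : 0 ≤ F.received i e :=
  le_across (by norm_num) fun j => gift_nonneg j e

theorem received_eq_triangleGift (hij : i ≠ j) (hi : F.IsTriangular i) (hie : e ∈ F.edges i)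
    (hj : F.IsTriangular j) (hje : e ∈ F.edges j) : F.received i e = F.triangleGift j e := by
  rw [received, across_eq hij hie hje, gift, if_pos hj, if_pos ⟨i, hij, hi, hie⟩]

theorem received_eq_outerGift (hi : F.IsTriangular i) (hie : e ∈ F.edges i)
    (hinner : ¬ F.IsInner i e) : F.received i e = F.outerGift i e := by
  by_cases hj : ∃ j ≠ i, e ∈ F.edges j
  swap
  · exact (across_eq_five hj).trans (across_eq_five hj).symm
  obtain ⟨j, hji, hje⟩ := hj
  have hjt : ¬ F.IsTriangular j := fun ht => hinner ⟨j, hji, ht, hje⟩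
  rw [received, outerGift, across_eq hji.symm hie hje, across_eq hji.symm hie hje, gift,
    if_neg hjt, if_pos ⟨i, hi, hie⟩]

theorem sum_received_sub_gift (hi : F.IsTriangular i) :
    ∑ e ∈ F.edges i, (F.received i e - F.gift i e) =
      F.outerCharge i + ∑ e ∈ F.edges i with F.IsInner i e,
        (F.received i e - F.triangleGift i e) := by
  rw [← sum_filter_add_sum_filter_not _ (F.IsInner i), add_comm, outerCharge]
  congr 1 <;> refine sum_congr rfl fun e he => ?_ <;> obtain ⟨hie, hinner⟩ := mem_filter.mp he
  · rw [received_eq_outerGift hi hie hinner, gift, if_pos hi, if_neg hinner, sub_zero]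
  · rw [gift, if_pos hi, if_pos hinner]

theorem triangleDegree_mul_rate_le (hi : ¬ F.IsTriangular i) :
    F.triangleDegree i * F.rate i ≤ 11 * #(F.edges i) - 36 := by
  have hne : F.vec i ≠ 0 := F.linearIndependent.ne_zero i
  have hthree : 3 ≤ #(F.edges i) := three_le_card_edgeSupport (F.mem_cycleSpace i) hne
  have hfour : #(F.edges i) ≠ 3 := hi
  have hle : F.triangleDegree i ≤ #(F.edges i) := card_filter_le _ _
  unfold rate
  split_ifs <;> omega

theorem le_sum_charge_of_not_isTriangular (hi : ¬ F.IsTriangular i) :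
    36 ≤ ∑ e ∈ F.edges i, (11 - F.gift i e + F.received i e) := by
  have hgift : ∑ e ∈ F.edges i, F.gift i e = F.triangleDegree i * F.rate i := by
    simp only [gift, if_neg hi]
    rw [← sum_filter, sum_const, nsmul_eq_mul, triangleDegree]
  have hrate := triangleDegree_mul_rate_le hi
  have hreceived := sum_nonneg fun e (_ : e ∈ F.edges i) => F.received_nonneg i e
  rw [sum_add_distrib, sum_sub_distrib, hgift, sum_const, nsmul_eq_mul]
  linarith

theorem sum_charge_le (e : Sym2 V) [Fintype ι] :
    ∑ i with e ∈ F.edges i, (11 - F.gift i e + F.received i e) ≤ 22 := by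
  rcases eq_empty_or_nonempty {i | e ∈ F.edges i} with hempty | ⟨i, hi⟩
  · simp [hempty]
  have hie : e ∈ F.edges i := by simpa using hi
  by_cases hj : ∃ j ≠ i, e ∈ F.edges j
  · obtain ⟨j, hji, hje⟩ := hj
    have hfaces : ({i | e ∈ F.edges i} : Finset ι) = {i, j} := by
      ext k
      have := fun hk => F.eq_of_mem_edgeSupport (k := k) hie hje hk
      simp only [mem_filter_univ]
      grind [edges]
    rw [hfaces, sum_pair hji.symm, received, received, across_eq hji.symm hie hje,
      across_eq hji hje hie]
    linarith
  · have hfaces : ({i | e ∈ F.edges i} : Finset ι) = {i} := by grind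
    have := F.gift_nonneg i e
    rw [hfaces, sum_singleton, received, across_eq_five hj]
    linarith

end Gift

end FaceSystem

namespace FaceSystem

variable {V : Type*} [Fintype V] {G : SimpleGraph V} {ι : Type*} {F : FaceSystem G ι}
  {i j l : ι} {x y z g s r p q w c : V}

section InnerDegreeLeTwo

theorem three_le_balance_of_innerDegree_le_one (hi : F.IsTriangular i) (h : F.innerDegree i ≤ 1) :
    3 ≤ ∑ e ∈ F.edges i, (F.received i e - F.gift i e) := by
  have houter := two_mul_three_sub_innerDegree_le hi
  rw [sum_received_sub_gift hi]
  rcases Nat.le_one_iff_eq_zero_or_eq_one.mp h with h0 | h1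
  · rw [card_eq_zero.mp h0, sum_empty]
    omega
  · obtain ⟨e, he⟩ := card_eq_one.mp h1
    have := F.received_nonneg i e
    rw [he, sum_singleton, triangleGift, if_pos h1]
    linarith

theorem sum_triangleGift_le_two (h : F.innerDegree i = 2) :
    ∑ e ∈ F.edges i with F.IsInner i e, F.triangleGift i e ≤ 2 := by
  by_cases houter : F.outerCharge i = 5
  swap
  · simp [triangleGift, h, houter]
  have hneedy : {e ∈ F.edges i | F.IsInner i e ∧ F.IsNeedy i e} =
      {e ∈ F.edges i | F.IsNeedy i e} :=
    filter_congr fun e _ => and_iff_right_of_imp IsNeedy.isInner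
  have hle : F.needyDegree i ≤ F.innerDegree i :=
    card_le_card (monotone_filter_right _ fun _ _ => IsNeedy.isInner)
  calc ∑ e ∈ F.edges i with F.IsInner i e, F.triangleGift i e
      = F.needyDegree i * (if F.needyDegree i = 1 then 2 else 1) := by
        simp only [triangleGift, h, houter, true_and, OfNat.ofNat_ne_one, if_false]
        rw [← sum_filter, filter_filter, hneedy, sum_const, nsmul_eq_mul, needyDegree]
    _ ≤ 2 := by split_ifs <;> omega

theorem received_eq_of_pendant (hi : F.IsFace i [x, y, z]) (hj : F.IsFace j [x, y, g])
    (hgz : g ≠ z) (hxg : ¬ F.IsInner j s(x, g)) (hyg : ¬ F.IsInner j s(y, g)) :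
    F.received i s(x, y) = F.outerGift j s(x, g) + F.outerGift j s(y, g) - 3 := by
  have hij : i ≠ j := by
    rintro rfl
    exact hgz (hi.eq_of_isFace hj)
  have hxy : F.IsInner j s(x, y) := ⟨i, hij, hi.isTriangular, hi.mk_mem_edges⟩
  have hdegree : F.innerDegree j = 1 := by simp [hj.innerDegree, hxy, hxg, hyg]
  rw [received_eq_triangleGift hij hi.isTriangular hi.mk_mem_edges hj.isTriangular hj.mk_mem_edges,
    triangleGift, if_pos hdegree, hj.outerCharge]
  simp [hxy, hxg, hyg]

theorem one_le_received_of_pendant (hi : F.IsFace i [x, y, z]) (hg : F.HasTriangle x y g)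
    (hgz : g ≠ z) (hpendant : ¬ ((∃ k ≠ y, F.HasTriangle x g k) ∨ ∃ k ≠ x, F.HasTriangle y g k)) :
    1 ≤ F.received i s(x, y) := by
  obtain ⟨j, hj⟩ := hg
  rw [← hj.reflect_three.isInner_iff, ← hj.rotate_three.isInner_iff, not_or] at hpendant
  have hxg := F.two_le_outerGift j s(x, g)
  have hyg := F.two_le_outerGift j s(y, g)
  linarith [received_eq_of_pendant hi hj hgz hpendant.1 hpendant.2]

theorem one_le_received_of_isFace_four (h : F.IsFace i [x, y, z]) (hxy : F.IsInner i s(x, y))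
    (hxz : F.IsInner i s(x, z)) (hl : F.IsFace l [y, z, s, r]) (hfree : ¬ F.HasTwoFreeEdges l) :
    1 ≤ F.received i s(x, y) ∨ 1 ≤ F.received i s(x, z) := by
  obtain ⟨g, hgz, hg⟩ := h.isInner_iff.mp hxy
  obtain ⟨k, hky, hk⟩ := h.reflect_three.isInner_iff.mp hxz
  have hkg : k ≠ g := by
    rintro rfl
    exact hfree (IsCone.hasTwoFreeEdges ⟨⟨i, h⟩, hk, hg.reflect⟩ hl)
  by_contra! hlt
  refine not_isFace_four_of_apexes ⟨i, h⟩ hg hk hgz hky hkg ?_ ?_ hl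
  · by_contra hpendant
    exact hlt.1.not_ge (one_le_received_of_pendant h hg hgz hpendant)
  · by_contra hpendant
    exact hlt.2.not_ge (one_le_received_of_pendant h.reflect_three hk hky hpendant)

theorem exists_isFace_of_innerDegree_eq_two (hi : F.IsTriangular i) (h : F.innerDegree i = 2) :
    ∃ x y z, F.IsFace i [x, y, z] ∧ F.IsInner i s(x, y) ∧ F.IsInner i s(x, z) ∧
      ¬ F.IsInner i s(y, z) := by
  have hne : F.innerDegree i ≠ #(F.edges i) := by rw [h, hi]; norm_num
  obtain ⟨e, he, hinner⟩ : ∃ e ∈ F.edges i, ¬ F.IsInner i e := by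
    by_contra! hall
    exact hne (congrArg card (filter_true_of_mem hall))
  induction e with | h y z =>
  obtain ⟨x, hx⟩ := hi.exists_isFace he
  have hx' := hx.rotate_three.rotate_three
  have hdegree := h ▸ hx'.innerDegree
  refine ⟨x, y, z, hx', ?_⟩
  split_ifs at hdegree <;> grind

theorem three_le_balance_of_innerDegree_eq_two (hi : F.IsTriangular i) (h : F.innerDegree i = 2) :
    3 ≤ ∑ e ∈ F.edges i, (F.received i e - F.gift i e) := by
  obtain ⟨x, y, z, hf, hxy, hxz, hyz⟩ := exists_isFace_of_innerDegree_eq_two hi h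
  have houter : F.outerCharge i = F.outerGift i s(y, z) := by simp [hf.outerCharge, hxy, hxz, hyz]
  have hgift := sum_triangleGift_le_two h
  have hsum : ∑ e ∈ F.edges i with F.IsInner i e, F.received i e =
      F.received i s(x, y) + F.received i s(x, z) := by
    simp [sum_filter, hf.sum_edges, hxy, hxz, hyz]
  have hrxy := F.received_nonneg i s(x, y)
  have hrxz := F.received_nonneg i s(x, z)
  rw [sum_received_sub_gift hi, sum_sub_distrib, hsum, houter]
  rcases outerGift_cases hf.rotate_three hyz with h5 | ⟨-, h3⟩ | ⟨l, s, r, hl, hfree, h2⟩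
  · linarith
  · have hzero : ∑ e ∈ F.edges i with F.IsInner i e, F.triangleGift i e = 0 := by
      simp [triangleGift, h, houter, h3]
    linarith
  · have hzero : ∑ e ∈ F.edges i with F.IsInner i e, F.triangleGift i e = 0 := by
      simp [triangleGift, h, houter, h2]
    rcases one_le_received_of_isFace_four hf hxy hxz hl hfree with h1 | h1 <;> linarith

end InnerDegreeLeTwo

section InnerDegreeThree

theorem IsFace.isNeedy (hi : F.IsFace i [x, y, z]) (hdegree : F.innerDegree i = 3)
    (hj : F.IsFace j [x, y, g]) (hgz : g ≠ z) : F.IsNeedy j s(x, y) :=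
  ⟨i, fun hij => hgz (hi.eq_of_isFace (hij ▸ hj)), hi.isTriangular, hi.mk_mem_edges, hdegree⟩

theorem triangleGift_eq_of_isNeedy (hj : F.IsFace j [x, y, g]) (hxy : F.IsNeedy j s(x, y))
    (hxg : F.IsInner j s(x, g)) (hyg : ¬ F.IsInner j s(y, g))
    (houter : F.outerGift j s(y, g) = 5) :
    F.triangleGift j s(x, y) = if F.IsNeedy j s(x, g) then 1 else 2 := by
  have hdegree : F.innerDegree j = 2 := by simp [hj.innerDegree, hxy.isInner, hxg, hyg]
  have hcharge : F.outerCharge j = 5 := by simp [hj.outerCharge, hxy.isInner, hxg, hyg, houter]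
  have hneedy : ¬ F.IsNeedy j s(y, g) := fun h => hyg h.isInner
  simp only [triangleGift, hdegree, hcharge, hj.needyDegree, hxy, hneedy]
  split_ifs <;> simp_all

theorem IsFace.received_eq_triangleGift (hi : F.IsFace i [x, y, z]) (hj : F.IsFace j [x, y, g])
    (hgz : g ≠ z) : F.received i s(x, y) = F.triangleGift j s(x, y) :=
  FaceSystem.received_eq_triangleGift (fun hij => hgz (hi.eq_of_isFace (hij ▸ hj)))
    hi.isTriangular hi.mk_mem_edges hj.isTriangular hj.mk_mem_edges

theorem IsOpenBipyramid.innerDegree_eq_three (h : F.IsOpenBipyramid p q w c z)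
    (hi : F.IsFace i [p, q, c]) : F.innerDegree i = 3 := by
  obtain ⟨⟨-, hcqw, hcwp⟩, hzpq, -, hzc⟩ := h
  have hpq : F.IsInner i s(p, q) := hi.isInner_iff.mpr ⟨z, hzc, hzpq.rotate⟩
  have hpc : F.IsInner i s(p, c) :=
    hi.reflect_three.isInner_iff.mpr ⟨w, hcqw.rotate.adj.ne', hcwp.rotate.rotate⟩
  have hqc : F.IsInner i s(q, c) :=
    hi.rotate_three.isInner_iff.mpr ⟨w, hcwp.rotate.adj.ne, hcqw.swap⟩
  simp [hi.innerDegree, hpq, hpc, hqc]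

theorem IsOpenBipyramid.not_isNeedy (h : F.IsOpenBipyramid p q w c z)
    (hj : F.IsFace j [p, q, z]) : ¬ F.IsNeedy j s(p, z) := by
  obtain ⟨⟨hcpq, hcqw, -⟩, hzpq, hzpw, -⟩ := id h
  rintro ⟨k, hkj, hk, hpz, hdegree⟩
  obtain ⟨g, hg⟩ := hk.exists_isFace hpz
  have hgq : g ≠ q := by
    rintro rfl
    exact hkj (hg.index_unique hj.reflect_three)
  have hqw := hcqw.rotate.adj.ne
  obtain rfl : w = g :=
    ((hzpq.swap.reflect.reflect.eq_of_three hzpw.swap ⟨k, hg⟩).resolve_left hqw).resolve_left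
      hgq.symm
  have hzw : F.IsInner k s(z, w) := by
    rw [hg.innerDegree] at hdegree
    grind
  obtain ⟨f, hfp, hf⟩ := hg.rotate_three.isInner_iff.mp hzw
  exact hfp (h.swap.eq_of_hasTriangle hf.swap)

theorem IsOpenBipyramid.received_eq_two (h : F.IsOpenBipyramid p q w c z)
    (hi : F.IsFace i [p, q, c]) : F.received i s(p, q) = 2 := by
  obtain ⟨⟨-, hcqw, -⟩, hzpq, hzpw, hzc⟩ := id h
  obtain ⟨j, hj⟩ := hzpq.rotate
  have hpq := hi.isNeedy (h.innerDegree_eq_three hi) hj hzc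
  have hpz : F.IsInner j s(p, z) :=
    hj.reflect_three.isInner_iff.mpr ⟨w, hcqw.rotate.adj.ne', hzpw.swap⟩
  have hqz : ¬ F.IsInner j s(q, z) := by
    rw [hj.rotate_three.isInner_iff]
    rintro ⟨g, hgp, hg⟩
    exact hgp (h.eq_of_hasTriangle hg)
  have houter : F.outerGift j s(q, z) = 5 := outerGift_eq_five hj.rotate_three hqz
    (fun _ _ _ => h.not_isFace_four) fun _ _ _ _ => h.not_isFace_five
  rw [hi.received_eq_triangleGift hj hzc, triangleGift_eq_of_isNeedy hj hpq hpz hqz houter,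
    if_neg (h.not_isNeedy hj)]

theorem IsOpenBipyramid.one_le_received (h : F.IsOpenBipyramid p q w c z)
    (hi : F.IsFace i [p, q, c]) : 1 ≤ F.received i s(q, c) := by
  obtain ⟨⟨hcpq, ⟨k, hk⟩, hcwp⟩, -, -, -⟩ := id h
  have hi' : F.IsFace i [c, q, p] := hi.rotate_three.swap_three
  have hwp := hcwp.rotate.adj.ne
  have hcq := hi'.isNeedy (h.innerDegree_eq_three hi) hk hwp
  have hcw : F.IsInner k s(c, w) :=
    hk.reflect_three.isInner_iff.mpr ⟨p, hcpq.rotate.adj.ne, hcwp⟩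
  have hqw : ¬ F.IsInner k s(q, w) := by
    rw [hk.rotate_three.isInner_iff]
    rintro ⟨g, hgc, hg⟩
    exact hgc (h.eq_of_hasTriangle_base hg)
  have houter : F.outerGift k s(q, w) = 5 := outerGift_eq_five hk.rotate_three hqw
    (fun _ _ _ => h.not_isFace_four_base) fun _ _ _ _ => h.not_isFace_five_base
  rw [Sym2.eq_swap, hi'.received_eq_triangleGift hk hwp,
    triangleGift_eq_of_isNeedy hk hcq hcw hqw houter]
  split_ifs <;> norm_num

theorem IsOpenBipyramid.three_le_sum_received (h : F.IsOpenBipyramid p q w c z)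
    (hi : F.IsFace i [p, q, c]) : 3 ≤ ∑ e ∈ F.edges i, F.received i e := by
  have hpq := h.received_eq_two hi
  have hqc := h.one_le_received hi
  have hpc := F.received_nonneg i s(p, c)
  rw [hi.sum_edges]
  linarith

theorem IsCone.three_le_sum_received (h : F.IsCone c p q w) (hi : F.IsFace i [p, q, c])
    (hpqz : F.HasTriangle p q z) (hzc : z ≠ c) (hzw : z ≠ w) :
    3 ≤ ∑ e ∈ F.edges i, F.received i e := by
  by_cases hpz : ∃ g ≠ q, F.HasTriangle p z g
  · obtain ⟨g, hgq, hg⟩ := hpz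
    obtain rfl := h.eq_of_hasTriangle hpqz hzc hzw hg hgq
    exact IsOpenBipyramid.three_le_sum_received ⟨h, hpqz.rotate.rotate, hg.swap, hzc⟩ hi
  by_cases hqz : ∃ g ≠ p, F.HasTriangle q z g
  · obtain ⟨g, hgp, hg⟩ := hqz
    obtain rfl := h.swap.eq_of_hasTriangle hpqz.swap hzc hzw hg hgp
    exact IsOpenBipyramid.three_le_sum_received
      ⟨h.swap, hpqz.swap.rotate.rotate, hg.swap, hzc⟩ hi.swap_three
  obtain ⟨j, hj⟩ := id hpqz
  rw [← hj.reflect_three.isInner_iff] at hpz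
  rw [← hj.rotate_three.isInner_iff] at hqz
  have hpz3 : 3 ≤ F.outerGift j s(p, z) := three_le_outerGift hj.reflect_three hpz
    fun _ _ _ hl => h.hasTwoFreeEdges_of_pendant hpqz hzc hzw hl.reflect_four
  have hqz3 : 3 ≤ F.outerGift j s(q, z) := three_le_outerGift hj.rotate_three hqz
    fun _ _ _ hl => h.swap.hasTwoFreeEdges_of_pendant hpqz.swap hzc hzw hl.reflect_four
  have hpq := received_eq_of_pendant hi hj hzc hpz hqz
  have hpc := F.received_nonneg i s(p, c)
  have hqc := F.received_nonneg i s(q, c)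
  rw [hi.sum_edges]
  linarith

theorem IsFace.not_hasTriangle_common_apex (hi : F.IsFace i [x, y, z])
    (hxy : F.HasTriangle x y g) (hxz : F.HasTriangle x z g) : ¬ F.HasTriangle y z g := by
  intro hyz
  refine vec_ne_sum_triangle (F := F) (l := i) (T := [(x, y, g), (x, z, g), (y, z, g)])
    (by simp [*]) ?_ ?_
  · have := hxy.rotate.adj.ne
    have := hxz.rotate.adj.ne
    have := hxy.rotate.rotate.adj.ne
    have := fun u v w => hi.mem_of_three (u := u) (v := v) (w := w)
    simp only [List.mem_cons, List.not_mem_nil]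
    grind
  · simp only [hi.vec_three, triangle, List.map_cons, List.map_nil, List.sum_cons, List.sum_nil]
    funext e
    simp only [Pi.add_apply, Pi.zero_apply]
    grind

theorem three_le_sum_received_of_innerDegree_eq_three (hi : F.IsTriangular i)
    (h : F.innerDegree i = 3) : 3 ≤ ∑ e ∈ F.edges i, F.received i e := by
  obtain ⟨x, y, z, hf⟩ := hi.exists_vertices
  have hinner : F.IsInner i s(x, y) ∧ F.IsInner i s(x, z) ∧ F.IsInner i s(y, z) := by
    rw [hf.innerDegree] at h
    grind
  have hxyz : F.HasTriangle x y z := ⟨i, hf⟩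
  obtain ⟨u, huz, hu⟩ := hf.isInner_iff.mp hinner.1
  obtain ⟨v, hvy, hv⟩ := hf.reflect_three.isInner_iff.mp hinner.2.1
  obtain ⟨w, hwx, hw⟩ := hf.rotate_three.isInner_iff.mp hinner.2.2
  by_cases huv : u = v
  · subst huv
    have hwu : w ≠ u := by
      rintro rfl
      exact hf.not_hasTriangle_common_apex hu hv hw
    exact IsCone.three_le_sum_received ⟨hxyz, hv, hu.reflect⟩ hf.rotate_three hw hwx hwu
  by_cases huw : u = w
  · subst huw
    exact IsCone.three_le_sum_received ⟨hxyz.swap, hw, hu.swap.reflect⟩ hf.reflect_three hv hvy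
      (Ne.symm huv)
  by_cases hvw : v = w
  · subst hvw
    exact IsCone.three_le_sum_received ⟨hxyz.rotate.rotate, hw.swap, hv.swap.reflect⟩ hf hu huz huv
  have hhexagon := F.not_nodup_of_hexagon x u y w z v hu.reflect.adj hu.rotate.adj.symm
    hw.reflect.adj hw.rotate.adj.symm hv.rotate.adj hv.rotate.rotate.adj (.inl hxyz.adj)
  grind [hxyz.adj.ne, hxyz.rotate.adj.ne, hxyz.reflect.adj.ne]

end InnerDegreeThree

section Count

theorem IsTriangular.three_le_balance (hi : F.IsTriangular i) :
    3 ≤ ∑ e ∈ F.edges i, (F.received i e - F.gift i e) := by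
  have hle : F.innerDegree i ≤ 3 := (card_filter_le _ _).trans_eq hi
  rcases (show F.innerDegree i ≤ 1 ∨ F.innerDegree i = 2 ∨ F.innerDegree i = 3 by omega)
    with h | h | h
  · exact three_le_balance_of_innerDegree_le_one hi h
  · exact three_le_balance_of_innerDegree_eq_two hi h
  · have hgift : ∀ e, F.gift i e = 0 := fun e => by simp [gift, triangleGift, h, hi]
    simpa only [hgift, sub_zero] using three_le_sum_received_of_innerDegree_eq_three hi h

theorem le_sum_charge (i : ι) : 36 ≤ ∑ e ∈ F.edges i, (11 - F.gift i e + F.received i e) := by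
  by_cases hi : F.IsTriangular i
  swap
  · exact le_sum_charge_of_not_isTriangular hi
  have hbalance := hi.three_le_balance
  have hcard : (#(F.edges i) : ℤ) = 3 := by exact_mod_cast hi
  simp only [sum_add_distrib, sum_sub_distrib, sum_const, nsmul_eq_mul, hcard] at hbalance ⊢
  linarith

theorem card_le (F : FaceSystem G ι) [Fintype ι] :
    18 * Fintype.card ι ≤ 11 * G.edgeSet.ncard := by
  have hcomm : ∑ i, ∑ e ∈ F.edges i, (11 - F.gift i e + F.received i e) =
      ∑ e ∈ G.edgeFinset, ∑ i with e ∈ F.edges i, (11 - F.gift i e + F.received i e) := by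
    refine sum_comm' fun i e => ?_
    induction e with | h x y =>
    simpa using fun hxy => adj_of_mem_edges hxy
  have hcharge : (36 * Fintype.card ι : ℤ) ≤ 22 * #G.edgeFinset := by
    calc (36 * Fintype.card ι : ℤ) = ∑ _i : ι, 36 := by simp [mul_comm]
      _ ≤ _ := sum_le_sum fun i _ => F.le_sum_charge i
      _ = _ := hcomm
      _ ≤ ∑ _e ∈ G.edgeFinset, 22 := sum_le_sum fun e _ => F.sum_charge_le e
      _ = 22 * #G.edgeFinset := by simp [mul_comm]
  rw [Set.ncard_eq_toFinset_card', Set.toFinset_card, ← edgeFinset_card]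
  omega

end Count

end FaceSystem

section Rank

variable {V : Type*}

/-- Extension by zero identifies `𝔽₂`-vectors on the edges of `G` with elements of the edge space.
-/
def extendEdges (G : SimpleGraph V) : (G.edgeSet → ZMod 2) →ₗ[ZMod 2] EdgeSpace V :=
  Function.ExtendByZero.linearMap (ZMod 2) Subtype.val

theorem extendEdges_injective (G : SimpleGraph V) : Function.Injective (extendEdges G) :=
  Function.extend_injective Subtype.val_injective (0 : Sym2 V → ZMod 2)

theorem extendEdges_of_not_adj {G : SimpleGraph V} (f : G.edgeSet → ZMod 2) {u w : V}
    (h : ¬ G.Adj u w) : extendEdges G f s(u, w) = 0 :=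
  Function.extend_apply' _ _ _ (by rintro ⟨e, he⟩; exact h (G.mem_edgeSet.mp (he ▸ e.2)))

variable [Fintype V]

/-- Summation of the coordinates of a vector in the vertex space over each component of `G`. -/
def componentSum (G : SimpleGraph V) :
    (V → ZMod 2) →ₗ[ZMod 2] (G.ConnectedComponent → ZMod 2) where
  toFun f c := ∑ v with G.connectedComponentMk v = c, f v
  map_add' f g := by ext c; simp [sum_add_distrib]
  map_smul' r f := by ext c; simp [mul_sum]

theorem componentSum_apply (G : SimpleGraph V) (f : V → ZMod 2) (c : G.ConnectedComponent) :
    componentSum G f c = ∑ v with G.connectedComponentMk v = c, f v := rfl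

theorem componentSum_surjective (G : SimpleGraph V) : Function.Surjective (componentSum G) := by
  intro g
  choose rep hrep using fun c : G.ConnectedComponent => c.exists_rep
  refine ⟨fun v => if rep (G.connectedComponentMk v) = v then g (G.connectedComponentMk v) else 0,
    funext fun c => ?_⟩
  rw [componentSum_apply, sum_eq_single (rep c)]
  · rw [show G.connectedComponentMk (rep c) = c from hrep c, if_pos rfl]
  · intro v hv hvc
    rw [(mem_filter.mp hv).2, if_neg hvc.symm]
  · exact fun h => (h (mem_filter.mpr ⟨mem_univ _, hrep c⟩)).elim

theorem componentSum_boundary {G : SimpleGraph V} {z : EdgeSpace V}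
    (hz : ∀ u w, ¬ G.Adj u w → z s(u, w) = 0) : componentSum G (boundary z) = 0 := by
  ext c
  calc componentSum G (boundary z) c
      = ∑ v, ∑ w, if G.connectedComponentMk v = c then z s(v, w) else 0 := by
        simp only [componentSum_apply, boundary_apply, sum_filter, ite_sum_zero]
    _ = 0 := sum_sum_eq_zero_of_symm (fun v w => ?_) fun v => by simp [hz v v G.irrefl]
  rw [Sym2.eq_swap]
  by_cases h : G.Adj v w
  · rw [ConnectedComponent.connectedComponentMk_eq_of_adj h]
  · simp [hz w v fun h' => h h'.symm]

theorem finrank_ker_le_finrank_cycleSpace (G : SimpleGraph V) :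
    Module.finrank (ZMod 2) (boundary ∘ₗ extendEdges G).ker ≤
      Module.finrank (ZMod 2) (cycleSpace G) := by
  rw [(Submodule.equivMapOfInjective _ (extendEdges_injective G) _).finrank_eq]
  refine Submodule.finrank_mono ?_
  rintro _ ⟨f, hf, rfl⟩
  exact ⟨fun u w => extendEdges_of_not_adj f, hf⟩

theorem ncard_edgeSet_add_card_connectedComponent_le (G : SimpleGraph V) :
    G.edgeSet.ncard + Nat.card G.ConnectedComponent ≤
      Fintype.card V + Module.finrank (ZMod 2) (cycleSpace G) := by
  have hrange : Module.finrank (ZMod 2) (boundary ∘ₗ extendEdges G).range ≤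
      Module.finrank (ZMod 2) (componentSum G).ker := by
    refine Submodule.finrank_mono ?_
    rintro _ ⟨f, rfl⟩
    exact componentSum_boundary fun u w => extendEdges_of_not_adj f
  have hker := finrank_ker_le_finrank_cycleSpace G
  have hedges := (boundary ∘ₗ extendEdges G).finrank_range_add_finrank_ker
  have hvertices := (componentSum G).finrank_range_add_finrank_ker
  rw [LinearMap.range_eq_top.mpr (componentSum_surjective G), finrank_top] at hvertices
  rw [Module.finrank_fintype_fun_eq_card] at hedges
  rw [Module.finrank_fintype_fun_eq_card, Module.finrank_fintype_fun_eq_card] at hvertices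
  rw [← Nat.card_coe_set_eq, Nat.card_eq_fintype_card, Nat.card_eq_fintype_card]
  omega

end Rank

section Density

variable {V : Type*} [Fintype V] {G : SimpleGraph V}

theorem exists_faceSystem (hG : IsPlanar G) (hfree : ¬ HasTheta6 G) :
    ∃ (ι : Type) (_ : Fintype ι), Nonempty (FaceSystem G ι) ∧
      Fintype.card ι = Module.finrank (ZMod 2) (cycleSpace G) := by
  obtain ⟨κ, s, b, hb⟩ := hasTwoBasis_of_isPlanar hG
  obtain ⟨ι, a, ha, hspan, hind⟩ := exists_linearIndependent' (ZMod 2) fun k : s => b k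
  let := @Fintype.ofFinite ι (Finite.of_injective a ha)
  refine ⟨ι, inferInstance, ⟨{
    vec := fun i => b (a i)
    mem_cycleSpace := fun i => hb.mem_cycleSpace (a i).2
    linearIndependent := hind
    eq_of_mem_edgeSupport := fun {i j k e} hi hj hk => ?_
    isPlanar := hG
    not_hasTheta6 := hfree }⟩, ?_⟩
  · by_contra! hne
    refine (two_lt_card.mpr ⟨(a i : κ), ?_, a j, ?_, a k, ?_, ?_, ?_, ?_⟩).not_ge
      (hb.coverage_le_two e)
    all_goals simp_all [mem_edgeSupport, ha.eq_iff]
  · have hrange : Set.range (fun k : s => b k) = b '' s := by ext z; simp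
    rw [← finrank_span_eq_card hind, hspan, hrange, hb.span_eq]

theorem seven_mul_ncard_edgeSet_add_le (hG : IsPlanar G) (hfree : ¬ HasTheta6 G) :
    7 * G.edgeSet.ncard + 18 * Nat.card G.ConnectedComponent ≤ 18 * Fintype.card V := by
  obtain ⟨ι, _, ⟨F⟩, hcard⟩ := exists_faceSystem hG hfree
  have hfaces := F.card_le
  have hrank := ncard_edgeSet_add_card_connectedComponent_le G
  omega

end Density

section Block

variable {V : Type*} {G : SimpleGraph V} {s t B : Set V} {x y u v : V}

theorem preconnected_induce_of_exists_walk (hst : s ⊆ t) (hs : (G.induce s).Preconnected)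
    (hwalk : ∀ u ∈ t, ∃ v ∈ s, ∃ p : G.Walk u v, ∀ w ∈ p.support, w ∈ t) :
    (G.induce t).Preconnected := by
  rintro ⟨u₁, hu₁⟩ ⟨u₂, hu₂⟩
  obtain ⟨v₁, hv₁, p₁, hp₁⟩ := hwalk u₁ hu₁
  obtain ⟨v₂, hv₂, p₂, hp₂⟩ := hwalk u₂ hu₂
  have hv : (G.induce t).Reachable ⟨v₁, hst hv₁⟩ ⟨v₂, hst hv₂⟩ :=
    (hs ⟨v₁, hv₁⟩ ⟨v₂, hv₂⟩).map (G.induceHomOfLE hst).toHom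
  exact (Walk.reachable (p₁.induce t hp₁)).trans (hv.trans (Walk.reachable (p₂.induce t hp₂)).symm)

theorem exists_walk_to_endpoint_avoiding {p : G.Walk x y} (hp : p.IsPath) (hu : u ∈ p.support)
    (huv : u ≠ v) : ∃ c, (c = x ∨ c = y) ∧
      ∃ q : G.Walk u c, ∀ w ∈ q.support, w ∈ p.support ∧ w ≠ v := by
  by_cases hv : v ∈ (p.takeUntil u hu).support
  · refine ⟨y, .inr rfl, p.dropUntil u hu, fun w hw =>
      ⟨p.support_dropUntil_subset_support hu hw, ?_⟩⟩
    rintro rfl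
    have hnodup := hp.support_nodup
    rw [← p.take_spec hu, Walk.support_append] at hnodup
    exact (List.nodup_append.mp hnodup).2.2 w hv w
      (((Walk.mem_support_iff _).mp hw).resolve_left huv.symm) rfl
  · refine ⟨x, .inl rfl, (p.takeUntil u hu).reverse, fun w hw => ?_⟩
    rw [Walk.support_reverse, List.mem_reverse] at hw
    exact ⟨p.support_takeUntil_subset_support hu hw, fun h => hv (h ▸ hw)⟩

theorem _root_.IsTwoConnSet.union_support (hB : IsTwoConnSet G B) (hx : x ∈ B) (hy : y ∈ B)
    {p : G.Walk x y} (hp : p.IsPath) : IsTwoConnSet G (B ∪ {u | u ∈ p.support}) := by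
  refine ⟨⟨x, .inl hx⟩, ?_, fun v _ => ?_⟩
  · refine preconnected_induce_of_exists_walk Set.subset_union_left hB.2.1 ?_
    rintro u (hu | hu)
    · exact ⟨u, hu, .nil, by simp [hu]⟩
    · refine ⟨x, hx, (p.takeUntil u hu).reverse, fun w hw => .inr ?_⟩
      rw [Walk.support_reverse, List.mem_reverse] at hw
      exact p.support_takeUntil_subset_support hu hw
  · have hBv : (G.induce (B \ {v})).Preconnected := by
      by_cases hv : v ∈ B
      · exact hB.2.2 v hv
      · rw [Set.sdiff_singleton_eq_self hv]
        exact hB.2.1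
    refine preconnected_induce_of_exists_walk
      (Set.sdiff_subset_sdiff_left Set.subset_union_left) hBv ?_
    rintro u ⟨hu | hu, huv⟩
    · exact ⟨u, ⟨hu, huv⟩, .nil, by simpa [hu] using huv⟩
    · obtain ⟨c, hc, q, hq⟩ := exists_walk_to_endpoint_avoiding hp hu huv
      refine ⟨c, ⟨?_, (hq c q.end_mem_support).2⟩, q, fun w hw => ⟨.inr (hq w hw).1, (hq w hw).2⟩⟩
      rcases hc with rfl | rfl <;> assumption

theorem _root_.IsBlock.support_subset (hB : IsBlock G B) (hx : x ∈ B) (hy : y ∈ B) {p : G.Walk x y}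
    (hp : p.IsPath) (hu : u ∈ p.support) : u ∈ B := by
  rw [hB.2 _ (hB.1.union_support hx hy hp) Set.subset_union_left]
  exact .inr hu

theorem _root_.IsBlock.eq_of_reachable_deleteEdges (hB : IsBlock G B) (hx : x ∈ B) (hy : y ∈ B)
    (h : (G.deleteEdges B.sym2).Reachable x y) : x = y := by
  obtain ⟨p, hp⟩ := h.exists_isPath
  by_contra hne
  cases p with
  | nil => exact hne rfl
  | @cons _ w _ hxw q =>
    refine (deleteEdges_adj.mp hxw).2 ⟨hx, ?_⟩
    exact hB.support_subset hx hy ((Walk.isPath_mapLe (deleteEdges_le _)).mpr hp) (by simp)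

theorem _root_.IsBlock.ncard_le_card_connectedComponent [Finite V] (hB : IsBlock G B) :
    B.ncard ≤ Nat.card (G.deleteEdges B.sym2).ConnectedComponent := by
  rw [← Nat.card_coe_set_eq]
  refine Nat.card_le_card_of_injective
    (fun x : B => (G.deleteEdges B.sym2).connectedComponentMk x) fun x y hxy => Subtype.ext ?_
  exact hB.eq_of_reachable_deleteEdges x.2 y.2 (ConnectedComponent.exact hxy)

theorem ncard_edgeSet_induce_add_ncard_deleteEdges [Finite V] (G : SimpleGraph V) (B : Set V) :
    (G.induce B).edgeSet.ncard + (G.deleteEdges B.sym2).edgeSet.ncard = G.edgeSet.ncard := by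
  have himage : Sym2.map Subtype.val '' (G.induce B).edgeSet = G.edgeSet ∩ B.sym2 := by
    ext e
    induction e with | h u w =>
    constructor
    · rintro ⟨e, he, heq⟩
      induction e with | h a b =>
      rw [← heq]
      exact ⟨he, a.2, b.2⟩
    · rintro ⟨he, hu, hw⟩
      exact ⟨s(⟨u, hu⟩, ⟨w, hw⟩), he, rfl⟩
  rw [← Set.ncard_image_of_injective _ (Sym2.map.injective Subtype.val_injective), himage,
    edgeSet_deleteEdges]
  exact Set.ncard_inter_add_ncard_sdiff_eq_ncard _ _ (Set.toFinite _)

end Block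

end
end PlanarTheta6

/-- If a planar graph `G` on `n` vertices with no Theta graph on 6 vertices
contains a block `B` on `n_b` vertices with `e(B) ≤ 18n_b/7 - 48/7`, then
`e(G) ≤ 18n/7 - 48/7`. -/
theorem theta6_good_block_bound {V : Type*} [Fintype V] (n nb : ℕ)
    (G : SimpleGraph V) (hcard : Fintype.card V = n)
    (hplanar : IsPlanar G) (hfree : ¬ HasTheta6 G)
    (B : Set V) (hB : IsBlock G B) (hnb : B.ncard = nb)
    (hBe : ((G.induce B).edgeSet.ncard : ℚ) ≤ 18 / 7 * nb - 48 / 7) :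
    (G.edgeSet.ncard : ℚ) ≤ 18 / 7 * n - 48 / 7 := by
  have hle : G.deleteEdges B.sym2 ≤ G := deleteEdges_le _
  have hdensity := PlanarTheta6.seven_mul_ncard_edgeSet_add_le
    (PlanarTheta6.isPlanar_mono hle hplanar) fun h => hfree (PlanarTheta6.hasTheta6_mono hle h)
  have hblock := hB.ncard_le_card_connectedComponent
  have hrest : 7 * (G.deleteEdges B.sym2).edgeSet.ncard + 18 * nb ≤ 18 * n := by omega
  have hsplit := PlanarTheta6.ncard_edgeSet_induce_add_ncard_deleteEdges G B
  qify at hrest hsplit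
  linarith
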